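/- arXiv:math/0109115 — 7 statements merged into one kernel-verified Lean document; each statement's English description precedes it below -/
import Mathlib

section
/- Under Assumptions A1–A5 on the random dynamical system Φ with binding maps ψ_{x,y}, there exist constants γ > 0 and C > 0 such that for every pair (x,y) ∈ X × X and every integer n > 0, the n-step transition probabilities satisfy ‖Pⁿ_x − Pⁿ_y‖_L ≤ C (1 + V(x) + V(y)) e^{−γ n}, where ‖·‖_L is the dual Lipschitz norm. -/
/-!
The idea is to couple the two chains through the binding maps and to run a contraction argument on
`u_m(x, y) = |𝒫^m g (x) - 𝒫^m g (y)|`, uniformly over test functions `g` with `sup|g| + Lip g ≤ 1`;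
here `𝒫^m g` is `sg Pinf Φ g m`.

**Good pairs.** For a level `K₀` and a small `ε`, a pair is good at time `i` (`GoodPair`) if it is
reached from `{Ṽ ≤ K₀}` by `i` coupled steps along which `W` stays below `K₀ e^{εi}`. By A5 and A2
the law of the noise and its image under `ψ_{x,y}` are then exponentially close, so one more coupled
step leads to a pair which is good at time `i + 1`, outside an event of probability
`O((1 + Ṽ) h^{4i})` with `h < 1` (`one_step`, abstracted in `StepData`). Iterating, the measure
`P^∞ ⊓ Ξ_*P^∞` entering `Q^∞_{x,y}` is `O(h^{2i})`-close to `P^∞`, so that A3 yields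
`u_m(x, y) ≤ C (h^{2m} + h^{2i})` for a pair which is good at time `i` and satisfies `Ṽ ≤ K₀`
(`StepData.binding`).

**Propagation.** From a good pair with large `Ṽ`, coupled steps are performed until `Ṽ ≤ K₀`; the
drift of `V` makes the waiting time exponentially integrable. The mass lost on the way is estimated
by an a priori bound on `u_k` for `k < n`, in the form of a distance of `𝒫^k g` to a constant
(`exists_center`, `coupling_ineq`). The result is `StepData.good_bound`.

**Initial block.** By A4, from `{Ṽ ≤ K₀}` a block of `N` coupled steps succeeds with a probability
at least `p`, independent of `N`, and by A2 it ends in a good pair if `N` is large (`block`).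

**Contraction.** The bound `u_m(x, y) ≤ A q^m (1 + β (√V x + √V y))` follows by strong induction on
`m` (`StepData.contraction`): if `Ṽ > K₀`, one independent step contracts the weight thanks to the
drift; if `Ṽ ≤ K₀`, a coupled block contracts the constant part by the factor `1 - p`, the
contributions of the good pairs and of `β √V` being small compared with `p`. Square roots are used
because the failure probabilities carry a factor `1 + Ṽ`: for `√V` the residual mass is controlled
through `√v ≤ t⁻¹ + t v` with `t` a suitable power of `h` (`StepData.residual`).
-/

open MeasureTheory
open scoped ENNReal NNReal

noncomputable section

/-- Trajectory of the random dynamical system `Φ` started at `x` and driven by `ω`. -/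
def traj {X Ω : Type*} (Φ : X × Ω → X) (x : X) (ω : ℕ → Ω) : ℕ → X
  | 0 => x
  | n + 1 => Φ (traj Φ x ω n, ω n)

/-- Coupled pair of trajectories given by the binding construction: the second
trajectory is driven by the noise modified by the binding maps `ψ`. -/
def traj2 {X Ω : Type*} (Φ : X × Ω → X) (ψ : X → X → Ω → Ω) (x y : X) (ω : ℕ → Ω) :
    ℕ → X × X
  | 0 => (x, y)
  | n + 1 =>
    (Φ ((traj2 Φ ψ x y ω n).1, ω n),
     Φ ((traj2 Φ ψ x y ω n).2, ψ (traj2 Φ ψ x y ω n).1 (traj2 Φ ψ x y ω n).2 (ω n)))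

/-- The map `Ξ^∞_{x,y}` transporting the binding maps along the coupled trajectories. -/
def XiInf {X Ω : Type*} (Φ : X × Ω → X) (ψ : X → X → Ω → Ω) (x y : X) (ω : ℕ → Ω) :
    ℕ → Ω :=
  fun n => ψ (traj2 Φ ψ x y ω n).1 (traj2 Φ ψ x y ω n).2 (ω n)

/-- Extension of a finite noise word to an infinite one (by junk). -/
def extSeq {Ω : Type*} [Nonempty Ω] {n : ℕ} (f : Fin n → Ω) : ℕ → Ω :=
  fun m => if h : m < n then f ⟨m, h⟩ else Classical.arbitrary Ω

/-- The finite-level map `Ξⁿ_{x,y} : Ωⁿ → Ωⁿ`. -/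
def XiFin {X Ω : Type*} [Nonempty Ω] (Φ : X × Ω → X) (ψ : X → X → Ω → Ω) (n : ℕ)
    (x y : X) (f : Fin n → Ω) : Fin n → Ω :=
  fun i => XiInf Φ ψ x y (extSeq f) i

/-- The density `Dⁿ_{x,y}` of `(Ξⁿ_{x,y})_*Pⁿ` with respect to `Pⁿ`. -/
def Dfin {X Ω : Type*} [Nonempty Ω] [MeasurableSpace Ω] (P : Measure Ω)
    (Φ : X × Ω → X) (ψ : X → X → Ω → Ω) (n : ℕ) (x y : X) : (Fin n → Ω) → ℝ≥0∞ :=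
  ((Measure.pi fun _ : Fin n => P).map (XiFin Φ ψ n x y)).rnDeriv
    (Measure.pi fun _ : Fin n => P)

/-- The (sub-probability) measure `Q^∞_{x,y}` on pairs of paths: the image of
`P^∞ ⊓ (Ξ^∞_{x,y})_*P^∞` under the coupled-trajectory map. -/
def QInf {X Ω : Type*} [MeasurableSpace X] [MeasurableSpace Ω]
    (Pinf : Measure (ℕ → Ω)) (Φ : X × Ω → X) (ψ : X → X → Ω → Ω) (x y : X) :
    Measure ((ℕ → X) × (ℕ → X)) :=
  (Pinf ⊓ Pinf.map (fun ω => XiInf Φ ψ x y ω)).map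
    (fun ω => (fun n => (traj2 Φ ψ x y ω n).1, fun n => (traj2 Φ ψ x y ω n).2))

/-- The (sub-probability) measure `Qⁿ_{x,y}` on `Xⁿ × Xⁿ`: the image of
`Pⁿ ⊓ (Ξⁿ_{x,y})_*Pⁿ` under `(ω₀,…,ω_{n−1}) ↦ ((x₁,…,xₙ),(y₁,…,yₙ))`. -/
def QFin {X Ω : Type*} [MeasurableSpace X] [MeasurableSpace Ω] [Nonempty Ω]
    (P : Measure Ω) (Φ : X × Ω → X) (ψ : X → X → Ω → Ω) (n : ℕ) (x y : X) :
    Measure ((Fin n → X) × (Fin n → X)) :=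
  ((Measure.pi fun _ : Fin n => P) ⊓
      (Measure.pi fun _ : Fin n => P).map (XiFin Φ ψ n x y)).map
    (fun f => (fun i : Fin n => (traj2 Φ ψ x y (extSeq f) ((i : ℕ) + 1)).1,
               fun i : Fin n => (traj2 Φ ψ x y (extSeq f) ((i : ℕ) + 1)).2))

/-- The sets `Qⁿ_K(x₀,y₀)` of possible endpoints of coupled trajectories of length `n`
along which the coupled Lyapunov function stays below `K`. -/
def QSetIter {X Ω : Type*} (Φ : X × Ω → X) (ψ : X → X → Ω → Ω) (W : X → Ω → ℝ≥0∞)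
    (K : ℝ≥0∞) (x₀ y₀ : X) : ℕ → Set (X × X)
  | 0 => {(x₀, y₀)}
  | n + 1 =>
    ⋃ p ∈ QSetIter Φ ψ W K x₀ y₀ n,
      {q | ∃ ω : Ω, W p.1 ω + W p.2 (ψ p.1 p.2 ω) ≤ K ∧
        q = (Φ (p.1, ω), Φ (p.2, ψ p.1 p.2 ω))}


/-! ### Sequences of noises: splitting off the first coordinate -/

/-- The noise sequence with first entry `w` and tail `ω`. -/
def consSeq {Ω : Type*} (w : Ω) (ω : ℕ → Ω) : ℕ → Ω
  | 0 => w
  | n + 1 => ω n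

section Basic

set_option linter.unusedSectionVars false

variable {X Ω : Type*} [MeasurableSpace X] [MeasurableSpace Ω]

lemma measurable_consSeq : Measurable fun p : Ω × (ℕ → Ω) => consSeq p.1 p.2 := by
  refine measurable_pi_lambda _ fun n => ?_
  cases n with
  | zero => exact measurable_fst
  | succ n => exact (measurable_pi_apply n).comp measurable_snd

lemma pinf_eq_infinitePi {P : Measure Ω} [IsProbabilityMeasure P] {Pinf : Measure (ℕ → Ω)}
    (hPinf : ∀ (s : Finset ℕ) (t : ℕ → Set Ω), (∀ i ∈ s, MeasurableSet (t i)) →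
      Pinf {ω | ∀ i ∈ s, ω i ∈ t i} = ∏ i ∈ s, P (t i)) :
    Pinf = Measure.infinitePi fun _ : ℕ => P := by
  refine Measure.eq_infinitePi _ fun s t ht => ?_
  rw [← hPinf s t fun i _ => ht i]
  rfl

/-- `P^∞` is the law of an independent pair `(ω₀, (ω₁, ω₂, …))`. -/
lemma pinf_eq_map_consSeq {P : Measure Ω} [IsProbabilityMeasure P] {Pinf : Measure (ℕ → Ω)}
    [IsProbabilityMeasure Pinf]
    (hPinf : ∀ (s : Finset ℕ) (t : ℕ → Set Ω), (∀ i ∈ s, MeasurableSet (t i)) →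
      Pinf {ω | ∀ i ∈ s, ω i ∈ t i} = ∏ i ∈ s, P (t i)) :
    (P.prod Pinf).map (fun p => consSeq p.1 p.2) = Pinf := by
  classical
  conv_rhs => rw [pinf_eq_infinitePi hPinf]
  refine Measure.eq_infinitePi _ fun s t ht => ?_
  -- enlarge `s` to an initial segment, with trivial constraints on the added coordinates
  obtain ⟨n, hn⟩ := s.exists_nat_subset_range
  have hs : s ⊆ Finset.range (n + 1) := hn.trans (Finset.range_mono (Nat.le_succ n))
  set t' : ℕ → Set Ω := fun i => if i ∈ s then t i else Set.univ with ht'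
  have ht'm : ∀ i, MeasurableSet (t' i) := fun i => by
    simp only [ht']; split_ifs
    exacts [ht i, MeasurableSet.univ]
  have hprod : ∏ i ∈ s, P (t i) = ∏ i ∈ Finset.range (n + 1), P (t' i) := by
    rw [← Finset.prod_subset hs (f := fun i => P (t' i))]
    · exact Finset.prod_congr rfl fun i hi => by simp [ht', hi]
    · intro i _ hi; simp [ht', hi]
  have hms : MeasurableSet (Set.pi (s : Set ℕ) t) :=
    MeasurableSet.pi s.countable_toSet fun i _ => ht i
  rw [Measure.map_apply measurable_consSeq hms, hprod, Finset.prod_range_succ', mul_comm,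
    ← hPinf (Finset.range n) (fun i => t' (i + 1)) (fun i _ => ht'm _), ← Measure.prod_prod]
  congr 1
  ext p
  simp only [Set.mem_preimage, Set.mem_pi, Finset.mem_coe, Set.mem_prod, Set.mem_ofPred_eq,
    Finset.mem_range]
  constructor
  · intro h
    refine ⟨?_, fun i _ => ?_⟩
    · simp only [ht']; split_ifs with h0
      exacts [h 0 h0, trivial]
    · simp only [ht']; split_ifs with h0
      exacts [h _ h0, trivial]
  · rintro ⟨h0, h1⟩ i hi
    cases i with
    | zero => simpa [ht', hi, consSeq] using h0
    | succ i =>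
      have := h1 i (by have := Finset.mem_range.1 (hs hi); omega)
      simpa [ht', hi, consSeq] using this

section

variable {P : Measure Ω} [IsProbabilityMeasure P] {Pinf : Measure (ℕ → Ω)}
  [IsProbabilityMeasure Pinf]
  (hPinf : ∀ (s : Finset ℕ) (t : ℕ → Set Ω), (∀ i ∈ s, MeasurableSet (t i)) →
      Pinf {ω | ∀ i ∈ s, ω i ∈ t i} = ∏ i ∈ s, P (t i))

lemma lintegral_consSeq
    (hcons : (P.prod Pinf).map (fun p => consSeq p.1 p.2) = Pinf)
    {F : (ℕ → Ω) → ℝ≥0∞} (hF : Measurable F) :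
    ∫⁻ ω, F ω ∂Pinf = ∫⁻ w, ∫⁻ ω, F (consSeq w ω) ∂Pinf ∂P := by
  conv_lhs => rw [← hcons]
  rw [lintegral_map hF measurable_consSeq,
    lintegral_prod (fun p : Ω × (ℕ → Ω) => F (consSeq p.1 p.2))
      (hF.comp measurable_consSeq).aemeasurable]

lemma integral_consSeq
    (hcons : (P.prod Pinf).map (fun p => consSeq p.1 p.2) = Pinf)
    {F : (ℕ → Ω) → ℝ} (hF : Measurable F) (hb : ∀ ω, |F ω| ≤ 1) :
    ∫ ω, F ω ∂Pinf = ∫ w, ∫ ω, F (consSeq w ω) ∂Pinf ∂P := by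
  conv_lhs => rw [← hcons]
  rw [integral_map measurable_consSeq.aemeasurable hF.aestronglyMeasurable]
  refine integral_prod _ (Integrable.of_bound
    (hF.comp measurable_consSeq).aestronglyMeasurable 1 (ae_of_all _ fun p => ?_))
  exact hb _

/-! ### Trajectories -/

lemma traj_consSeq (Φ : X × Ω → X) (x : X) (w : Ω) (ω : ℕ → Ω) (n : ℕ) :
    traj Φ x (consSeq w ω) (n + 1) = traj Φ (Φ (x, w)) ω n := by
  induction n with
  | zero => rfl
  | succ n ih => rw [traj, ih]; rfl

lemma traj_congr (Φ : X × Ω → X) (x : X) {ω ω' : ℕ → Ω} (n : ℕ)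
    (h : ∀ j < n, ω j = ω' j) : traj Φ x ω n = traj Φ x ω' n := by
  induction n with
  | zero => rfl
  | succ n ih => rw [traj, traj, ih fun j hj => h j (by omega), h n (by omega)]

lemma traj2_congr (Φ : X × Ω → X) (ψ : X → X → Ω → Ω) (x y : X) {ω ω' : ℕ → Ω} (n : ℕ)
    (h : ∀ j < n, ω j = ω' j) : traj2 Φ ψ x y ω n = traj2 Φ ψ x y ω' n := by
  induction n with
  | zero => rfl
  | succ n ih => rw [traj2, traj2, ih fun j hj => h j (by omega), h n (by omega)]

lemma traj2_fst (Φ : X × Ω → X) (ψ : X → X → Ω → Ω) (x y : X) (ω : ℕ → Ω) (n : ℕ) :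
    (traj2 Φ ψ x y ω n).1 = traj Φ x ω n := by
  induction n with
  | zero => rfl
  | succ n ih => rw [traj2, traj, ← ih]

lemma traj2_snd (Φ : X × Ω → X) (ψ : X → X → Ω → Ω) (x y : X) (ω : ℕ → Ω) (n : ℕ) :
    (traj2 Φ ψ x y ω n).2 = traj Φ y (XiInf Φ ψ x y ω) n := by
  induction n with
  | zero => rfl
  | succ n ih => rw [traj2, traj, ← ih]; rfl

lemma traj2_consSeq (Φ : X × Ω → X) (ψ : X → X → Ω → Ω) (x y : X) (w : Ω) (ω : ℕ → Ω)
    (n : ℕ) : traj2 Φ ψ x y (consSeq w ω) (n + 1) =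
      traj2 Φ ψ (Φ (x, w)) (Φ (y, ψ x y w)) ω n := by
  induction n with
  | zero => rfl
  | succ n ih => rw [traj2, ih]; rfl

lemma XiInf_consSeq (Φ : X × Ω → X) (ψ : X → X → Ω → Ω) (x y : X) (w : Ω) (ω : ℕ → Ω) :
    XiInf Φ ψ x y (consSeq w ω) =
      consSeq (ψ x y w) (XiInf Φ ψ (Φ (x, w)) (Φ (y, ψ x y w)) ω) := by
  funext n
  cases n with
  | zero => rfl
  | succ n => simp only [XiInf, traj2_consSeq]; rfl

lemma measurable_traj {Φ : X × Ω → X} (hΦ : Measurable Φ) (n : ℕ) :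
    Measurable fun p : X × (ℕ → Ω) => traj Φ p.1 p.2 n := by
  induction n with
  | zero => exact measurable_fst
  | succ n ih =>
    exact hΦ.comp (ih.prodMk ((measurable_pi_apply n).comp measurable_snd))

lemma measurable_traj_right {Φ : X × Ω → X} (hΦ : Measurable Φ) (x : X) (n : ℕ) :
    Measurable fun ω : ℕ → Ω => traj Φ x ω n :=
  (measurable_traj hΦ n).comp measurable_prodMk_left

lemma measurable_traj2 {Φ : X × Ω → X} (hΦ : Measurable Φ) {ψ : X → X → Ω → Ω}
    (hψ : Measurable fun p : (X × X) × Ω => ψ p.1.1 p.1.2 p.2) (x y : X) (n : ℕ) :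
    Measurable fun ω : ℕ → Ω => traj2 Φ ψ x y ω n := by
  induction n with
  | zero => exact measurable_const
  | succ n ih =>
    refine (hΦ.comp (ih.fst.prodMk (measurable_pi_apply n))).prodMk
      (hΦ.comp (ih.snd.prodMk ?_))
    exact hψ.comp (ih.prodMk (measurable_pi_apply n))

lemma measurable_XiInf {Φ : X × Ω → X} (hΦ : Measurable Φ) {ψ : X → X → Ω → Ω}
    (hψ : Measurable fun p : (X × X) × Ω => ψ p.1.1 p.1.2 p.2) (x y : X) :
    Measurable fun ω : ℕ → Ω => XiInf Φ ψ x y ω :=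
  measurable_pi_lambda _ fun n =>
    hψ.comp ((measurable_traj2 hΦ hψ x y n).prodMk (measurable_pi_apply n))

lemma measurable_extSeq [Nonempty Ω] (n : ℕ) :
    Measurable fun f : Fin n → Ω => extSeq f := by
  refine measurable_pi_lambda _ fun m => ?_
  by_cases h : m < n
  · simpa [extSeq, h] using measurable_pi_apply _
  · simp [extSeq, h]

lemma extSeq_of_lt [Nonempty Ω] {n : ℕ} (f : Fin n → Ω) {j : ℕ} (hj : j < n) :
    extSeq f j = f ⟨j, hj⟩ := by simp [extSeq, hj]

lemma measurable_XiFin [Nonempty Ω] {Φ : X × Ω → X} (hΦ : Measurable Φ) {ψ : X → X → Ω → Ω}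
    (hψ : Measurable fun p : (X × X) × Ω => ψ p.1.1 p.1.2 p.2) (n : ℕ) (x y : X) :
    Measurable (XiFin Φ ψ n x y) :=
  measurable_pi_lambda _ fun i =>
    (measurable_pi_apply (i : ℕ)).comp ((measurable_XiInf hΦ hψ x y).comp (measurable_extSeq n))

/-- `Pⁿ` is the image of `P^∞` under restriction to the first `n` coordinates. -/
lemma map_restrict_pinf {P : Measure Ω} [IsProbabilityMeasure P] {Pinf : Measure (ℕ → Ω)}
    [IsProbabilityMeasure Pinf]
    (hPinf : ∀ (s : Finset ℕ) (t : ℕ → Set Ω), (∀ i ∈ s, MeasurableSet (t i)) →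
      Pinf {ω | ∀ i ∈ s, ω i ∈ t i} = ∏ i ∈ s, P (t i)) (n : ℕ) :
    Pinf.map (fun ω : ℕ → Ω => fun i : Fin n => ω (i : ℕ)) =
      Measure.pi fun _ : Fin n => P := by
  refine (Measure.pi_eq fun t ht => ?_).symm
  rw [Measure.map_apply (by fun_prop) (MeasurableSet.univ_pi ht)]
  set t' : ℕ → Set Ω := fun i => if h : i < n then t ⟨i, h⟩ else Set.univ with ht'
  have := hPinf (Finset.range n) t' (fun i hi => by
    have : i < n := Finset.mem_range.1 hi
    simpa [ht', this] using ht _)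
  rw [Finset.prod_range] at this
  convert this using 2
  · ext ω
    simp only [Set.mem_preimage, Set.mem_pi, Set.mem_univ, true_imp_iff, Finset.mem_range,
      Set.mem_ofPred_eq]
    constructor
    · intro h i hi; simpa [ht', hi] using h ⟨i, hi⟩
    · intro h i; simpa [ht'] using h i i.2
  · simp [ht']

end

/-! ### The transition semigroup acting on a test function -/

/-- `sg Pinf Φ g n x = ∫ g dPⁿ_x`, the expectation of `g (xₙ)` for the trajectory started
at `x`. -/
def sg {X Ω : Type*} [MeasurableSpace Ω] (Pinf : Measure (ℕ → Ω)) (Φ : X × Ω → X) (g : X → ℝ)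
    (n : ℕ) (x : X) : ℝ := ∫ ω, g (traj Φ x ω n) ∂Pinf

variable {P : Measure Ω} [IsProbabilityMeasure P] {Pinf : Measure (ℕ → Ω)}
  [IsProbabilityMeasure Pinf] {Φ : X × Ω → X} {g : X → ℝ}

lemma measurable_sg (hΦ : Measurable Φ) (hg : Measurable g) (n : ℕ) :
    Measurable (sg Pinf Φ g n) := by
  have : StronglyMeasurable fun p : X × (ℕ → Ω) => g (traj Φ p.1 p.2 n) :=
    (hg.comp (measurable_traj hΦ n)).stronglyMeasurable
  exact this.integral_prod_right.measurable

lemma abs_sg_le (hb : ∀ z, |g z| ≤ 1) (n : ℕ) (x : X) : |sg Pinf Φ g n x| ≤ 1 := by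
  have := norm_integral_le_of_norm_le_const (μ := Pinf) (f := fun ω => g (traj Φ x ω n))
    (C := 1) (ae_of_all _ fun ω => hb _)
  simpa [sg] using this

lemma sg_succ (hcons : (P.prod Pinf).map (fun p => consSeq p.1 p.2) = Pinf)
    (hΦ : Measurable Φ) (hg : Measurable g) (hb : ∀ z, |g z| ≤ 1) (n : ℕ) (x : X) :
    sg Pinf Φ g (n + 1) x = ∫ w, sg Pinf Φ g n (Φ (x, w)) ∂P := by
  unfold sg
  rw [integral_consSeq hcons (F := fun ω => g (traj Φ x ω (n + 1))) (hg.comp (measurable_traj_right hΦ x (n + 1))) fun _ => hb _]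
  simp only [traj_consSeq]

lemma sg_add (hcons : (P.prod Pinf).map (fun p => consSeq p.1 p.2) = Pinf)
    (hΦ : Measurable Φ) (hg : Measurable g) (hb : ∀ z, |g z| ≤ 1) (N m : ℕ) (x : X) :
    sg Pinf Φ g (N + m) x = ∫ ω, sg Pinf Φ g m (traj Φ x ω N) ∂Pinf := by
  induction N generalizing x with
  | zero => simp [traj]
  | succ N ih =>
    rw [show N + 1 + m = (N + m) + 1 by omega, sg_succ hcons hΦ hg hb,
      integral_consSeq hcons (F := fun ω => sg Pinf Φ g m (traj Φ x ω (N + 1)))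
        ((measurable_sg hΦ hg m).comp (measurable_traj_right hΦ x (N + 1)))
        fun _ => abs_sg_le hb _ _]
    simp only [traj_consSeq, ih]

/-! ### Moments along trajectories -/

/-- Iterated Lyapunov inequality. -/
lemma lintegral_traj_le (hcons : (P.prod Pinf).map (fun p => consSeq p.1 p.2) = Pinf)
    (hΦ : Measurable Φ) {V : X → ℝ≥0∞} (hV : Measurable V) {a b : ℝ≥0∞} (ha1 : a < 1)
    (hL : ∀ x, ∫⁻ w, V (Φ (x, w)) ∂P ≤ a * V x + b) (n : ℕ) (x : X) :
    ∫⁻ ω, V (traj Φ x ω n) ∂Pinf ≤ V x + b * (1 - a)⁻¹ := by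
  have key : ∀ x, ∫⁻ ω, V (traj Φ x ω n) ∂Pinf ≤
      a ^ n * V x + b * ∑ j ∈ Finset.range n, a ^ j := by
    induction n with
    | zero => intro x; simp [traj]
    | succ n ih =>
      intro x
      rw [lintegral_consSeq hcons (F := fun ω => V (traj Φ x ω (n + 1)))
        (hV.comp (measurable_traj_right hΦ x (n + 1)))]
      simp only [traj_consSeq]
      have hVΦ : Measurable fun w => V (Φ (x, w)) := hV.comp (hΦ.comp measurable_prodMk_left)
      calc ∫⁻ w, ∫⁻ ω, V (traj Φ (Φ (x, w)) ω n) ∂Pinf ∂P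
          ≤ ∫⁻ w, (a ^ n * V (Φ (x, w)) + b * ∑ j ∈ Finset.range n, a ^ j) ∂P :=
            lintegral_mono fun w => ih _
        _ = a ^ n * ∫⁻ w, V (Φ (x, w)) ∂P + b * ∑ j ∈ Finset.range n, a ^ j := by
            rw [lintegral_add_right _ measurable_const, lintegral_const_mul _ hVΦ]
            simp
        _ ≤ a ^ n * (a * V x + b) + b * ∑ j ∈ Finset.range n, a ^ j := by gcongr; exact hL x
        _ = a ^ (n + 1) * V x + b * ∑ j ∈ Finset.range (n + 1), a ^ j := by
            rw [Finset.sum_range_succ]; ring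
  refine (key x).trans (add_le_add ?_ ?_)
  · calc a ^ n * V x ≤ 1 * V x := by gcongr; exact pow_le_one₀ zero_le ha1.le
      _ = V x := one_mul _
  · gcongr
    rw [← ENNReal.tsum_geometric]
    exact ENNReal.sum_le_tsum _

lemma lintegral_noise_traj_le (hcons : (P.prod Pinf).map (fun p => consSeq p.1 p.2) = Pinf)
    (hΦ : Measurable Φ) {V : X → ℝ≥0∞} (hV : Measurable V)
    {W : X → Ω → ℝ≥0∞} (hW : Measurable fun p : X × Ω => W p.1 p.2) {c : ℝ≥0∞}
    (hWint : ∀ x, ∫⁻ w, W x w ∂P ≤ c * V x) (n : ℕ) (x : X) :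
    ∫⁻ ω, W (traj Φ x ω n) (ω n) ∂Pinf ≤ c * ∫⁻ ω, V (traj Φ x ω n) ∂Pinf := by
  have hm : ∀ x n, Measurable fun ω : ℕ → Ω => W (traj Φ x ω n) (ω n) := fun x n =>
    hW.comp ((measurable_traj_right hΦ x n).prodMk (measurable_pi_apply n))
  induction n generalizing x with
  | zero =>
    rw [lintegral_consSeq hcons (hm x 0)]
    simpa [traj, consSeq] using hWint x
  | succ n ih =>
    have hVt : Measurable fun p : X × (ℕ → Ω) => V (traj Φ p.1 p.2 n) :=
      hV.comp (measurable_traj hΦ n)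
    rw [lintegral_consSeq hcons (hm x (n + 1)),
      lintegral_consSeq hcons (F := fun ω => V (traj Φ x ω (n + 1)))
        (hV.comp (measurable_traj_right hΦ x (n + 1)))]
    simp only [traj_consSeq]
    rw [← lintegral_const_mul]
    · exact lintegral_mono fun w => ih _
    · exact hVt.lintegral_prod_right'.comp (hΦ.comp measurable_prodMk_left)

end Basic


/-! ### Sub-couplings and the coupling inequality -/

section Coupling

/-- The maximal sub-coupling carried by the graph of `T`: a measure `ρ ≤ μ` with `T_*ρ ≤ μ`, the
image `T_*ρ` being the lattice infimum of `μ` and `T_*μ`, with density `min 1 D`. No absolute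
continuity of `T_*μ` is needed. -/
lemma exists_subcoupling {A : Type*} [MeasurableSpace A] (μ : Measure A) [IsProbabilityMeasure μ]
    {T : A → A} (hT : Measurable T) :
    ∃ ρ : Measure A, ρ ≤ μ ∧ ρ.map T ≤ μ ∧ ∀ E, MeasurableSet E →
      ρ (T ⁻¹' E) = ∫⁻ z in E, min 1 ((μ.map T).rnDeriv μ z) ∂μ := by
  set l := μ.map T with hl
  have : IsProbabilityMeasure l := Measure.isProbabilityMeasure_map hT.aemeasurable
  set D := l.rnDeriv μ with hD
  have hDm : Measurable D := Measure.measurable_rnDeriv _ _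
  obtain ⟨t, htm, ht0, htc⟩ := Measure.mutuallySingular_singularPart l μ
  -- the density of `T_*ρ` with respect to `T_*μ`, cut off on the singular part
  set h : A → ℝ≥0∞ := t.indicator fun z => min 1 (D z)⁻¹ with hh
  have hhm : Measurable h := (measurable_const.min hDm.inv).indicator htm
  have hh1 : ∀ z, h z ≤ 1 := fun z => by
    simp only [hh]
    exact Set.indicator_le' (fun _ _ => min_le_left _ _) (fun _ _ => zero_le_one) z
  set ρ := μ.withDensity (h ∘ T) with hρ
  have key : ∀ E, MeasurableSet E → ρ (T ⁻¹' E) = ∫⁻ z in E, min 1 (D z) ∂μ := by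
    intro E hE
    rw [hρ, withDensity_apply _ (hT hE)]
    have h1 : ∫⁻ a in T ⁻¹' E, (h ∘ T) a ∂μ = ∫⁻ z in E, h z ∂l := by
      rw [hl, setLIntegral_map hE hhm hT]; rfl
    rw [h1, Measure.haveLebesgueDecomposition_add l μ, Measure.restrict_add,
      lintegral_add_measure]
    have h2 : ∫⁻ z in E, h z ∂(l.singularPart μ) = 0 := by
      rw [lintegral_eq_zero_iff hhm]
      have : ∀ᵐ z ∂(l.singularPart μ), z ∉ t := by
        rw [ae_iff]; simpa using ht0
      filter_upwards [ae_restrict_of_ae this] with z hz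
      simp [hh, hz]
    rw [h2, zero_add, setLIntegral_withDensity_eq_setLIntegral_mul _ hDm hhm hE]
    refine lintegral_congr_ae (ae_restrict_of_ae ?_)
    have ht' : ∀ᵐ z ∂μ, z ∈ t := by rw [ae_iff]; exact htc
    filter_upwards [ht', Measure.rnDeriv_lt_top l μ] with z hz hfin
    simp only [Pi.mul_apply, hh, Set.indicator_of_mem hz]
    change D z < ⊤ at hfin
    rcases eq_or_ne (D z) 0 with h0 | h0
    · simp [h0]
    · rcases le_total (D z) 1 with h1 | h1
      · rw [min_eq_left (ENNReal.one_le_inv.2 h1), min_eq_right h1, mul_one]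
      · rw [min_eq_right (ENNReal.inv_le_one.2 h1), min_eq_left h1,
          ENNReal.mul_inv_cancel h0 hfin.ne]
  refine ⟨ρ, ?_, ?_, key⟩
  · calc ρ ≤ μ.withDensity 1 := withDensity_mono (ae_of_all _ fun z => hh1 _)
      _ = μ := withDensity_one
  · refine Measure.le_iff.2 fun E hE => ?_
    rw [Measure.map_apply hT hE, key E hE]
    calc ∫⁻ z in E, min 1 (D z) ∂μ ≤ ∫⁻ _ in E, 1 ∂μ := lintegral_mono fun z => min_le_left _ _
      _ = μ E := by simp

/-- A two-variable bound `|f x - f y| ≤ w x + w y` is the same as a one-variable bound after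
recentring `f`. -/
lemma exists_center {S : Type*} (f : S → ℝ) (w : S → ℝ≥0∞)
    (h : ∀ x y, ‖f x - f y‖ₑ ≤ w x + w y) : ∃ c : ℝ, ∀ x, ‖f x - c‖ₑ ≤ w x := by
  by_cases hne : ∃ x, w x ≠ ⊤
  swap
  · push Not at hne
    exact ⟨0, fun x => by rw [hne x]; exact le_top⟩
  obtain ⟨x₀, hx₀⟩ := hne
  have hreal : ∀ x y, w x ≠ ⊤ → w y ≠ ⊤ → |f x - f y| ≤ (w x).toReal + (w y).toReal := by
    intro x y hx hy
    have := ENNReal.toReal_mono (ENNReal.add_ne_top.2 ⟨hx, hy⟩) (h x y)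
    rwa [ENNReal.toReal_add hx hy, toReal_enorm, Real.norm_eq_abs] at this
  have : Nonempty {x // w x ≠ ⊤} := ⟨⟨x₀, hx₀⟩⟩
  have hbdd : BddAbove (Set.range fun x : {x // w x ≠ ⊤} => f x - (w x).toReal) := by
    refine ⟨f x₀ + (w x₀).toReal, ?_⟩
    rintro _ ⟨x, rfl⟩
    have := (abs_le.1 (hreal x x₀ x.2 hx₀)).2
    dsimp only; linarith
  refine ⟨⨆ x : {x // w x ≠ ⊤}, (f x - (w x).toReal), fun x => ?_⟩
  by_cases hx : w x = ⊤
  · rw [hx]; exact le_top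
  rw [← ofReal_norm, Real.norm_eq_abs]
  refine ENNReal.ofReal_le_of_le_toReal (abs_le.2 ⟨?_, ?_⟩)
  · have : (⨆ x : {x // w x ≠ ⊤}, (f x - (w x).toReal)) ≤ f x + (w x).toReal :=
      ciSup_le fun y => by
        have := (abs_le.1 (hreal y x y.2 hx)).2
        linarith
    linarith
  · have := le_ciSup hbdd ⟨x, hx⟩
    dsimp only at this
    linarith

/-- Coupling inequality: on the sub-coupling `ρ` the two evaluations are compared directly, on
the two residual measures they are both compared to the constant `c`. -/
lemma coupling_ineq {A S : Type*} [MeasurableSpace A] [MeasurableSpace S] {μ ρ : Measure A}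
    [IsProbabilityMeasure μ] (hρ : ρ ≤ μ) {T : A → A} (hT : Measurable T)
    (hρT : ρ.map T ≤ μ) {ξ η : A → S} (hξ : Measurable ξ) (hη : Measurable η) {f : S → ℝ}
    (hf : Measurable f) (hb : ∀ s, |f s| ≤ 1) {c : ℝ} {w : S → ℝ≥0∞}
    (hw : ∀ s, ‖f s - c‖ₑ ≤ w s) :
    ‖∫ z, f (ξ z) ∂μ - ∫ z, f (η z) ∂μ‖ₑ ≤ ∫⁻ z, ‖f (ξ z) - f (η (T z))‖ₑ ∂ρ +
      (∫⁻ z, w (ξ z) ∂(μ - ρ) + ∫⁻ z, w (η z) ∂(μ - ρ.map T)) := by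
  have : IsFiniteMeasure ρ := isFiniteMeasure_of_le μ hρ
  have : IsFiniteMeasure (ρ.map T) := isFiniteMeasure_of_le μ hρT
  have : IsFiniteMeasure (μ - ρ) := isFiniteMeasure_of_le μ Measure.sub_le
  have : IsFiniteMeasure (μ - ρ.map T) := isFiniteMeasure_of_le μ Measure.sub_le
  have hint : ∀ (ν : Measure A) [IsFiniteMeasure ν] (q : A → S), Measurable q →
      Integrable (fun z => f (q z) - c) ν := fun ν _ q hq =>
    (Integrable.of_bound (hf.comp hq).aestronglyMeasurable 1
      (ae_of_all _ fun z => hb _)).sub (integrable_const c)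
  have hsplit : ∀ (σ : Measure A) [IsFiniteMeasure σ] (q : A → S), σ ≤ μ → Measurable q →
      ∫ z, f (q z) ∂μ - c = ∫ z, (f (q z) - c) ∂(μ - σ) + ∫ z, (f (q z) - c) ∂σ := by
    intro σ _ q hσ hq
    have : IsFiniteMeasure (μ - σ) := isFiniteMeasure_of_le μ Measure.sub_le
    have hi : Integrable (fun z => f (q z)) μ :=
      Integrable.of_bound (hf.comp hq).aestronglyMeasurable 1 (ae_of_all _ fun z => hb _)
    rw [← integral_add_measure (hint _ q hq) (hint _ q hq), Measure.sub_add_cancel_of_le hσ,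
      integral_sub hi (integrable_const c)]
    simp
  have e1 := hsplit ρ ξ hρ hξ
  have e2 := hsplit (ρ.map T) η hρT hη
  have hm : AEStronglyMeasurable (fun z => f (η z) - c) (ρ.map T) :=
    ((hf.comp hη).sub_const c).aestronglyMeasurable
  rw [integral_map hT.aemeasurable hm] at e2
  have e3 : ∫ z, f (ξ z) ∂μ - ∫ z, f (η z) ∂μ = ∫ z, (f (ξ z) - f (η (T z))) ∂ρ +
      (∫ z, (f (ξ z) - c) ∂(μ - ρ) - ∫ z, (f (η z) - c) ∂(μ - ρ.map T)) := by
    have : ∫ z, (f (ξ z) - f (η (T z))) ∂ρ =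
        ∫ z, (f (ξ z) - c) ∂ρ - ∫ z, (f (η (T z)) - c) ∂ρ := by
      rw [← integral_sub (hint ρ ξ hξ) (hint ρ (fun z => η (T z)) (hη.comp hT))]
      congr 1; funext z; ring
    rw [this]; linarith
  rw [e3]
  refine (enorm_add_le _ _).trans (add_le_add (enorm_integral_le_lintegral_enorm _) ?_)
  refine (enorm_sub_le).trans (add_le_add ?_ ?_)
  · exact (enorm_integral_le_lintegral_enorm _).trans (lintegral_mono fun z => hw _)
  · exact (enorm_integral_le_lintegral_enorm _).trans (lintegral_mono fun z => hw _)

/-- Comparison of a measure with a smaller one, for integrands bounded by `1`. -/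
lemma lintegral_le_add_defect {A : Type*} [MeasurableSpace A] {μ σ : Measure A}
    [IsProbabilityMeasure μ] (hσ : σ ≤ μ) {d : ℝ≥0∞} (hd : 1 ≤ σ Set.univ + d)
    {F : A → ℝ≥0∞} (hF : ∀ z, F z ≤ 1) : ∫⁻ z, F z ∂μ ≤ ∫⁻ z, F z ∂σ + d := by
  have : IsFiniteMeasure σ := isFiniteMeasure_of_le μ hσ
  conv_lhs => rw [← Measure.sub_add_cancel_of_le hσ]
  rw [lintegral_add_measure, add_comm]
  gcongr
  calc ∫⁻ z, F z ∂(μ - σ) ≤ ∫⁻ _, 1 ∂(μ - σ) := lintegral_mono hF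
    _ = 1 - σ Set.univ := by
      rw [lintegral_one, Measure.sub_apply MeasurableSet.univ hσ, measure_univ]
    _ ≤ d := tsub_le_iff_left.2 hd

lemma abs_integral_sub_le_defect {A : Type*} [MeasurableSpace A] {μ σ : Measure A}
    [IsProbabilityMeasure μ] (hσ : σ ≤ μ) {d : ℝ≥0∞} (hd : 1 ≤ σ Set.univ + d)
    {F : A → ℝ} (hFm : Measurable F) (hF : ∀ z, |F z| ≤ 1) :
    ‖∫ z, F z ∂μ - ∫ z, F z ∂σ‖ₑ ≤ d := by
  have : IsFiniteMeasure σ := isFiniteMeasure_of_le μ hσ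
  have : IsFiniteMeasure (μ - σ) := isFiniteMeasure_of_le μ Measure.sub_le
  have hint : ∀ (ν : Measure A) [IsFiniteMeasure ν], Integrable F ν := fun ν _ =>
    Integrable.of_bound hFm.aestronglyMeasurable 1 (ae_of_all _ hF)
  have e : ∫ z, F z ∂μ - ∫ z, F z ∂σ = ∫ z, F z ∂(μ - σ) := by
    have := integral_add_measure (hint (μ - σ)) (hint σ)
    rw [Measure.sub_add_cancel_of_le hσ] at this
    linarith
  rw [e]
  refine (enorm_integral_le_lintegral_enorm _).trans ?_
  calc ∫⁻ z, ‖F z‖ₑ ∂(μ - σ) ≤ ∫⁻ _, 1 ∂(μ - σ) := lintegral_mono fun z => by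
        rw [← ofReal_norm]
        exact ENNReal.ofReal_le_one.2 (hF z)
    _ = 1 - σ Set.univ := by
      rw [lintegral_one, Measure.sub_apply MeasurableSet.univ hσ, measure_univ]
    _ ≤ d := tsub_le_iff_left.2 hd

/-- If `μ ≤ l + d` on measurable sets then `μ ⊓ l` has mass at least `1 - d`. -/
lemma one_le_inf_add {A : Type*} [MeasurableSpace A] {μ l : Measure A}
    [IsProbabilityMeasure μ] {d : ℝ≥0∞}
    (h : ∀ E, MeasurableSet E → μ E ≤ l E + d) : 1 ≤ (μ ⊓ l) Set.univ + d := by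
  rw [← tsub_le_iff_right, Measure.inf_apply MeasurableSet.univ]
  refine le_sInf ?_
  rintro m ⟨t, rfl⟩
  simp only [Set.inter_univ]
  rw [tsub_le_iff_right]
  set E := toMeasurable μ t with hE
  have hEm : MeasurableSet E := measurableSet_toMeasurable _ _
  calc (1 : ℝ≥0∞) = μ E + μ Eᶜ := by rw [measure_add_measure_compl hEm, measure_univ]
    _ ≤ μ E + (l Eᶜ + d) := by gcongr; exact h _ hEm.compl
    _ = μ t + (l Eᶜ + d) := by rw [hE, measure_toMeasurable]
    _ ≤ μ t + (l tᶜ + d) := by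
      gcongr
      exact subset_toMeasurable _ _
    _ = μ t + l tᶜ + d := by ring

/-- A uniform comparison of two measures on sequences passes from cylinder sets to all
measurable sets. -/
lemma le_add_of_cylinders {Ω : Type*} [MeasurableSpace Ω] {μ l : Measure (ℕ → Ω)}
    [IsFiniteMeasure μ] [IsFiniteMeasure l] {d : ℝ≥0∞}
    (h : ∀ (k : ℕ) (E : Set (ℕ → Ω)), MeasurableSet E →
      (∀ ω ω' : ℕ → Ω, (∀ j < k, ω j = ω' j) → (ω ∈ E ↔ ω' ∈ E)) → μ E ≤ l E + d)
    {E : Set (ℕ → Ω)} (hE : MeasurableSet E) : μ E ≤ l E + d := by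
  refine ENNReal.le_of_forall_pos_le_add fun ε hε _ => ?_
  have hε' : (0 : ℝ≥0∞) < ε := by exact_mod_cast hε
  obtain ⟨t, ht, hlt⟩ := exists_measure_symmDiff_lt_of_generateFrom_isSetRing (μ := μ + l)
    (isSetRing_measurableCylinders (α := fun _ : ℕ => Ω))
    ⟨{Set.univ}, Set.countable_singleton _, by
      simpa using univ_mem_measurableCylinders (fun _ : ℕ => Ω), by simp⟩
    generateFrom_measurableCylinders.symm hE hε'
  have htm : MeasurableSet t := .of_mem_measurableCylinders ht
  have hcyl : μ t ≤ l t + d := by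
    obtain ⟨s, S, hS, rfl⟩ := (mem_measurableCylinders t).1 ht
    obtain ⟨k, hk⟩ := s.exists_nat_subset_range
    refine h k _ htm fun ω ω' hω => ?_
    have : s.restrict ω = s.restrict ω' := by
      funext i
      exact hω i (Finset.mem_range.1 (hk i.2))
    simp only [mem_cylinder, this]
  have h1 : E ⊆ t ∪ symmDiff t E := fun z hz => by
    by_cases hzt : z ∈ t
    · exact Or.inl hzt
    · exact Or.inr (Or.inr ⟨hz, hzt⟩)
  have h2 : t ⊆ E ∪ symmDiff t E := fun z hz => by
    by_cases hzt : z ∈ E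
    · exact Or.inl hzt
    · exact Or.inr (Or.inl ⟨hz, hzt⟩)
  calc μ E ≤ μ t + μ (symmDiff t E) := (measure_mono h1).trans (measure_union_le _ _)
    _ ≤ (l E + l (symmDiff t E) + d) + μ (symmDiff t E) := by
      gcongr
      refine hcyl.trans ?_
      gcongr
      exact (measure_mono h2).trans (measure_union_le _ _)
    _ = l E + d + (μ + l) (symmDiff t E) := by rw [Measure.add_apply]; ring
    _ ≤ l E + d + ε := by gcongr

/-- The square root of a Lyapunov function is a Lyapunov function. -/
lemma lintegral_sqrt_le {A : Type*} [MeasurableSpace A] (μ : Measure A) [IsProbabilityMeasure μ]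
    {F : A → ℝ≥0∞} (hF : Measurable F) {a b v : ℝ≥0∞} (h : ∫⁻ z, F z ∂μ ≤ a * v + b) :
    ∫⁻ z, F z ^ (1 / 2 : ℝ) ∂μ ≤
      a ^ (1 / 2 : ℝ) * v ^ (1 / 2 : ℝ) + b ^ (1 / 2 : ℝ) := by
  have hold := ENNReal.lintegral_mul_le_Lp_mul_Lq μ Real.HolderConjugate.two_two
    (f := fun z => F z ^ (1 / 2 : ℝ)) (g := fun _ => 1) (hF.pow_const _).aemeasurable
    aemeasurable_const
  have e : ∀ z, (F z ^ (1 / 2 : ℝ)) ^ (2 : ℝ) = F z := fun z => by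
    rw [← ENNReal.rpow_mul]; norm_num
  simp only [Pi.mul_apply, mul_one, e, ENNReal.one_rpow, lintegral_const, measure_univ] at hold
  refine hold.trans ?_
  calc (∫⁻ z, F z ∂μ) ^ (1 / 2 : ℝ) ≤ (a * v + b) ^ (1 / 2 : ℝ) := by gcongr
    _ ≤ (a * v) ^ (1 / 2 : ℝ) + b ^ (1 / 2 : ℝ) :=
      ENNReal.rpow_add_le_add_rpow _ _ (by norm_num) (by norm_num)
    _ = _ := by rw [ENNReal.mul_rpow_of_nonneg _ _ (by norm_num)]

/-- Arithmetic-geometric mean inequality, `√v ≤ t⁻¹ + t v`. -/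
lemma sqrt_le_inv_add_mul {t : ℝ≥0∞} (ht0 : t ≠ 0) (ht : t ≠ ⊤) (v : ℝ≥0∞) :
    v ^ (1 / 2 : ℝ) ≤ t⁻¹ + t * v := by
  set u := v ^ (1 / 2 : ℝ) with hu
  have hv : v = u * u := by
    rw [← sq, ← ENNReal.rpow_natCast, hu, ← ENNReal.rpow_mul]; norm_num
  rcases le_total u t⁻¹ with h | h
  · exact h.trans le_self_add
  · calc u = t * t⁻¹ * u := by rw [ENNReal.mul_inv_cancel ht0 ht, one_mul]
      _ ≤ t * u * u := by gcongr
      _ = t * v := by rw [hv, mul_assoc]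
      _ ≤ _ := le_add_self

lemma sqrt_le_one_add (v : ℝ≥0∞) : v ^ (1 / 2 : ℝ) ≤ 1 + v := by
  simpa using sqrt_le_inv_add_mul one_ne_zero ENNReal.one_ne_top v

end Coupling


/-! ### One coupled step from a well-coupled pair -/

section OneStep

lemma QSetIter_mono {X Ω : Type*} {Φ : X × Ω → X} {ψ : X → X → Ω → Ω} {W : X → Ω → ℝ≥0∞}
    {K K' : ℝ≥0∞} (hK : K ≤ K') (x₀ y₀ : X) (n : ℕ) :
    QSetIter Φ ψ W K x₀ y₀ n ⊆ QSetIter Φ ψ W K' x₀ y₀ n := by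
  induction n with
  | zero => exact subset_rfl
  | succ n ih =>
    intro q hq
    simp only [QSetIter, Set.mem_iUnion, Set.mem_ofPred_eq] at hq ⊢
    obtain ⟨p, hp, ω, hω, rfl⟩ := hq
    exact ⟨p, ih hp, ω, hω.trans hK, rfl⟩

/-- `(x, y)` is reached after `i ≥ N` coupled steps from a pair in the sublevel set `{Ṽ ≤ K₀}`,
with `W` staying below the slowly growing level `K₀ e^{ε i}`. -/
def GoodPair {X Ω : Type*} (Φ : X × Ω → X) (ψ : X → X → Ω → Ω) (W : X → Ω → ℝ≥0∞)
    (V : X → ℝ≥0∞) (K₀ ε : ℝ) (N i : ℕ) (x y : X) : Prop :=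
  N ≤ i ∧ ∃ x₀ y₀, V x₀ + V y₀ ≤ ENNReal.ofReal K₀ ∧
    (x, y) ∈ QSetIter Φ ψ W (ENNReal.ofReal (K₀ * Real.exp (ε * i))) x₀ y₀ i

variable {X Ω : Type*} [MeasurableSpace X] [MeasurableSpace Ω] {P : Measure Ω}
  [IsProbabilityMeasure P]

/-- Markov's inequality for the `δ`-th power bound of the coupled Lyapunov function. -/
lemma measure_noise_gt_le {F : Ω → ℝ≥0∞} (hF : Measurable F) {CW δ κ : ℝ} (hCW : 0 < CW)
    (hδ : 1 ≤ δ) (hκ : 0 < κ) {μ : Measure Ω} {E : Set Ω}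
    (hE : ∀ ω ∈ E, ENNReal.ofReal κ ≤ ENNReal.ofReal CW * F ω ^ δ) :
    μ E ≤ ENNReal.ofReal ((CW / κ) ^ (1 / δ)) * ∫⁻ ω, F ω ∂μ := by
  have hδ0 : 0 < δ := by linarith
  set s : ℝ≥0∞ := ENNReal.ofReal ((κ / CW) ^ (1 / δ)) with hs
  have hspos : 0 < (κ / CW) ^ (1 / δ) := by positivity
  have hs0 : s ≠ 0 := by simpa [hs] using hspos
  have hsub : E ⊆ {ω | s ≤ F ω} := by
    intro ω hω
    have h1 := hE ω hω
    have h2 : ENNReal.ofReal (κ / CW) ≤ F ω ^ δ := by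
      rw [ENNReal.ofReal_div_of_pos hCW]
      exact ENNReal.div_le_of_le_mul' h1
    have h3 : ENNReal.ofReal (κ / CW) ^ (1 / δ) ≤ (F ω ^ δ) ^ (1 / δ) := by gcongr
    rw [← ENNReal.rpow_mul, mul_one_div_cancel hδ0.ne', ENNReal.rpow_one,
      ENNReal.ofReal_rpow_of_pos (by positivity)] at h3
    exact h3
  have hinv : s⁻¹ = ENNReal.ofReal ((CW / κ) ^ (1 / δ)) := by
    rw [hs, ← ENNReal.ofReal_inv_of_pos hspos, ← Real.inv_rpow (by positivity), inv_div]
  calc μ E ≤ μ {ω | s ≤ F ω} := measure_mono hsub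
    _ ≤ (∫⁻ ω, F ω ∂μ) / s := meas_ge_le_lintegral_div hF.aemeasurable hs0 ENNReal.ofReal_ne_top
    _ = _ := by rw [ENNReal.div_eq_inv_mul, hinv]

variable {Φ : X × Ω → X} {ψ ψinv : X → X → Ω → Ω} {V : X → ℝ≥0∞} {W : X → Ω → ℝ≥0∞}

lemma one_step_core
    (hψ : Measurable fun p : (X × X) × Ω => ψ p.1.1 p.1.2 p.2)
    (hψinv : Measurable fun p : (X × X) × Ω => ψinv p.1.1 p.1.2 p.2)
    (hinv₁ : ∀ x y ω, ψinv x y (ψ x y ω) = ω)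
    (hW : Measurable fun p : X × Ω => W p.1 p.2)
    {c : ℝ} (hWint : ∀ x, ∫⁻ ω, W x ω ∂P ≤ ENNReal.ofReal c * V x)
    {CW δ : ℝ} (hCW : 0 < CW) (hδ : 1 ≤ δ)
    (hWψinv : ∀ x y ω, W x (ψinv x y ω) + W y ω ≤
      ENNReal.ofReal CW * (1 + V x + W y ω) ^ δ)
    {κ t r : ℝ} (hκ : 0 < κ) (ht : 0 < t) (x y : X)
    (hr : (∫⁻ ω in {ω | W x (ψinv x y ω) + W y ω ≤ ENNReal.ofReal κ},
            ENNReal.ofReal ((1 - ((P.map (ψ x y)).rnDeriv P ω).toReal) ^ 2) ∂P) ≤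
          ENNReal.ofReal r) :
    ∃ ρ : Measure Ω, ρ ≤ P ∧ ρ.map (ψ x y) ≤ P ∧
      (∀ᵐ ω ∂ρ, W x ω + W y (ψ x y ω) ≤ ENNReal.ofReal κ) ∧
      1 ≤ ρ Set.univ + (ENNReal.ofReal ((CW / κ) ^ (1 / δ)) *
        (1 + V x + ENNReal.ofReal c * V y) + (ENNReal.ofReal t + ENNReal.ofReal (r / t))) := by
  have hT : Measurable (ψ x y) := hψ.comp (measurable_prodMk_left (x := (x, y)))
  have hTi : Measurable (ψinv x y) := hψinv.comp (measurable_prodMk_left (x := (x, y)))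
  have hWx : Measurable (W x) := hW.comp measurable_prodMk_left
  have hWy : Measurable (W y) := hW.comp measurable_prodMk_left
  set E : Set Ω := {ω | W x (ψinv x y ω) + W y ω ≤ ENNReal.ofReal κ} with hE
  have hEm : MeasurableSet E :=
    measurableSet_le ((hWx.comp hTi).add hWy) measurable_const
  obtain ⟨ρ, hρ, hρT, hρE⟩ := exists_subcoupling P hT
  refine ⟨ρ.restrict (ψ x y ⁻¹' E), Measure.restrict_le_self.trans hρ,
    (Measure.map_mono Measure.restrict_le_self hT).trans hρT, ?_, ?_⟩
  · filter_upwards [ae_restrict_mem (hT hEm)] with ω hω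
    simpa [hE, hinv₁] using hω
  rw [Measure.restrict_apply_univ, hρE E hEm]
  set D := (P.map (ψ x y)).rnDeriv P with hD
  have hDm : Measurable D := Measure.measurable_rnDeriv _ _
  have : IsProbabilityMeasure (P.map (ψ x y)) := Measure.isProbabilityMeasure_map hT.aemeasurable
  have hbad : P Eᶜ ≤ ENNReal.ofReal ((CW / κ) ^ (1 / δ)) *
      (1 + V x + ENNReal.ofReal c * V y) := by
    refine (measure_noise_gt_le (F := fun ω => 1 + V x + W y ω) (hWy.const_add _) hCW hδ hκ
      (E := Eᶜ) fun ω hω => ?_).trans ?_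
    · have : ENNReal.ofReal κ < W x (ψinv x y ω) + W y ω := by simpa [hE] using hω
      exact this.le.trans (hWψinv x y ω)
    · gcongr
      rw [lintegral_add_left measurable_const]
      simp only [lintegral_const, measure_univ, mul_one]
      gcongr
      exact hWint y
  have hpt : ∀ᵐ ω ∂P, (1 : ℝ≥0∞) ≤ min 1 (D ω) + (ENNReal.ofReal t +
      ENNReal.ofReal t⁻¹ * ENNReal.ofReal ((1 - (D ω).toReal) ^ 2)) := by
    filter_upwards [Measure.rnDeriv_lt_top (P.map (ψ x y)) P] with ω hω
    rcases le_total 1 (D ω) with h1 | h1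
    · rw [min_eq_left h1]; exact le_self_add
    · rw [min_eq_right h1]
      set d := (D ω).toReal with hd
      have hDd : D ω = ENNReal.ofReal d := (ENNReal.ofReal_toReal hω.ne).symm
      have hd0 : 0 ≤ d := ENNReal.toReal_nonneg
      rw [hDd, ← ENNReal.ofReal_mul (by positivity), ← ENNReal.ofReal_add ht.le (by positivity),
        ← ENNReal.ofReal_add hd0 (by positivity), ← ENNReal.ofReal_one]
      refine ENNReal.ofReal_le_ofReal ?_
      have : 0 ≤ t⁻¹ * ((1 - d) - t) ^ 2 := by positivity
      have h2 : t⁻¹ * ((1 - d) - t) ^ 2 = t⁻¹ * (1 - d) ^ 2 - 2 * (1 - d) + t := by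
        field_simp; ring
      have h3 : d ≤ 1 := by
        have := ENNReal.toReal_mono ENNReal.one_ne_top h1
        simpa using this
      rw [h2] at this
      nlinarith
  have hPE : P E ≤ ∫⁻ ω in E, min 1 (D ω) ∂P + (ENNReal.ofReal t + ENNReal.ofReal (r / t)) := by
    calc P E = ∫⁻ _ in E, 1 ∂P := by simp
      _ ≤ ∫⁻ ω in E, (min 1 (D ω) + (ENNReal.ofReal t +
          ENNReal.ofReal t⁻¹ * ENNReal.ofReal ((1 - (D ω).toReal) ^ 2))) ∂P :=
        lintegral_mono_ae (ae_restrict_of_ae hpt)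
      _ = ∫⁻ ω in E, min 1 (D ω) ∂P + (∫⁻ _ in E, ENNReal.ofReal t ∂P +
          ENNReal.ofReal t⁻¹ * ∫⁻ ω in E, ENNReal.ofReal ((1 - (D ω).toReal) ^ 2) ∂P) := by
        rw [lintegral_add_left (measurable_const.min hDm), lintegral_add_left measurable_const,
          lintegral_const_mul]
        exact ((hDm.ennreal_toReal.const_sub 1).pow_const 2).ennreal_ofReal
      _ ≤ _ := by
        gcongr
        · calc ∫⁻ _ in E, ENNReal.ofReal t ∂P ≤ ∫⁻ _, ENNReal.ofReal t ∂P := setLIntegral_le_lintegral _ _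
            _ = _ := by simp
        · rw [div_eq_inv_mul, ENNReal.ofReal_mul (by positivity)]
          gcongr
  calc (1 : ℝ≥0∞) = P E + P Eᶜ := by rw [measure_add_measure_compl hEm, measure_univ]
    _ ≤ _ := add_le_add hPE hbad
    _ = _ := by ring

/-- Non-failure of the coupling at step `i` from a good pair, with failure probability of order
`(1 + Ṽ) h^{4i}`. -/
lemma one_step
    (hψ : Measurable fun p : (X × X) × Ω => ψ p.1.1 p.1.2 p.2)
    (hψinv : Measurable fun p : (X × X) × Ω => ψinv p.1.1 p.1.2 p.2)
    (hinv₁ : ∀ x y ω, ψinv x y (ψ x y ω) = ω)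
    (hW : Measurable fun p : X × Ω => W p.1 p.2)
    {c : ℝ} (hc : 0 < c) (hWint : ∀ x, ∫⁻ ω, W x ω ∂P ≤ ENNReal.ofReal c * V x)
    {CW δ : ℝ} (hCW : 0 < CW) (hδ : 1 ≤ δ)
    (hWψinv : ∀ x y ω, W x (ψinv x y ω) + W y ω ≤
      ENNReal.ofReal CW * (1 + V x + W y ω) ^ δ)
    {C₂ γ₂ ζ : ℝ} (hC₂ : 0 < C₂) (hγ₂ : 0 < γ₂) (hζ : 0 < ζ)
    (hA5 : ∀ K : ℝ, 0 < K → ∀ x₀ y₀ : X, V x₀ + V y₀ ≤ ENNReal.ofReal K →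
      ∀ (n : ℕ) (x y : X), (x, y) ∈ QSetIter Φ ψ W (ENNReal.ofReal K) x₀ y₀ n →
        ζ * Real.log (1 + K) / γ₂ < (n : ℝ) →
        (∫⁻ ω in {ω | W x (ψinv x y ω) + W y ω ≤ ENNReal.ofReal K},
            ENNReal.ofReal ((1 - ((P.map (ψ x y)).rnDeriv P ω).toReal) ^ 2) ∂P) ≤
          ENNReal.ofReal (C₂ * Real.exp (-γ₂ * n) * (1 + K) ^ ζ))
    {K₀ ε η : ℝ} (hK₀ : 0 < K₀) (hε : ε = γ₂ / (2 * ζ)) (hη0 : 0 < η)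
    (hη1 : Real.exp (-(ε / δ)) ≤ η ^ 4) (hη2 : Real.exp (-(γ₂ / 4)) ≤ η ^ 4)
    {N : ℕ} (hN : ∀ i : ℕ, N ≤ i → ζ * Real.log (1 + K₀ * Real.exp (ε * i)) / γ₂ < (i : ℝ))
    {i : ℕ} {x y : X} (hG : GoodPair Φ ψ W V K₀ ε N i x y) :
    ∃ ρ : Measure Ω, ρ ≤ P ∧ ρ.map (ψ x y) ≤ P ∧
      (∀ᵐ ω ∂ρ, GoodPair Φ ψ W V K₀ ε N (i + 1) (Φ (x, ω)) (Φ (y, ψ x y ω))) ∧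
      1 ≤ ρ Set.univ + ENNReal.ofReal ((CW / K₀) ^ (1 / δ) * (1 + c) + 1 + C₂ * (1 + K₀) ^ ζ) *
        (1 + V x + V y) * ENNReal.ofReal η ^ (4 * i) := by
  have hε0 : 0 < ε := by rw [hε]; positivity
  have hδ0 : 0 < δ := by linarith
  obtain ⟨hNi, x₀, y₀, hxy₀, hmem⟩ := hG
  set κ := K₀ * Real.exp (ε * i) with hκdef
  have hκ : 0 < κ := by positivity
  have hκK : K₀ ≤ κ := by
    have : 1 ≤ Real.exp (ε * i) := Real.one_le_exp (by positivity)
    nlinarith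
  have h5 := hA5 κ hκ x₀ y₀ (hxy₀.trans (ENNReal.ofReal_le_ofReal hκK)) i x y hmem (hN i hNi)
  set t := Real.exp (-(γ₂ / 4) * i) with htdef
  have ht : 0 < t := Real.exp_pos _
  obtain ⟨ρ, hρ, hρT, hρG, hρm⟩ := one_step_core hψ hψinv hinv₁ hW hWint hCW hδ hWψinv hκ ht x y h5
  refine ⟨ρ, hρ, hρT, ?_, hρm.trans ?_⟩
  · filter_upwards [hρG] with ω hω
    refine ⟨by omega, x₀, y₀, hxy₀, ?_⟩
    have hle : ENNReal.ofReal κ ≤ ENNReal.ofReal (K₀ * Real.exp (ε * ((i + 1 : ℕ) : ℝ))) := by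
      refine ENNReal.ofReal_le_ofReal ?_
      rw [hκdef]
      gcongr
      simp
    simp only [QSetIter, Set.mem_iUnion, Set.mem_ofPred_eq]
    exact ⟨(x, y), QSetIter_mono hle _ _ _ hmem, ω, hω.trans hle, rfl⟩
  have hηi : ∀ s : ℝ, Real.exp (-s) ≤ η ^ 4 → Real.exp (-s * i) ≤ η ^ (4 * i) := by
    intro s hs
    rw [mul_comm, Real.exp_nat_mul, pow_mul]
    gcongr
  have b1 : (CW / κ) ^ (1 / δ) ≤ (CW / K₀) ^ (1 / δ) * η ^ (4 * i) := by
    have : CW / κ = CW / K₀ * Real.exp (-(ε * i)) := by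
      rw [hκdef, Real.exp_neg]; field_simp
    rw [this, Real.mul_rpow (by positivity) (by positivity), ← Real.exp_mul]
    gcongr
    refine le_trans (le_of_eq ?_) (hηi _ hη1)
    congr 1; field_simp
  have b2 : t ≤ η ^ (4 * i) := hηi _ hη2
  have b3 : C₂ * Real.exp (-γ₂ * i) * (1 + κ) ^ ζ / t ≤ C₂ * (1 + K₀) ^ ζ * η ^ (4 * i) := by
    have h1 : (1 + κ) ^ ζ ≤ (1 + K₀) ^ ζ * Real.exp (γ₂ / 2 * i) := by
      have e1 : 1 ≤ Real.exp (ε * i) := Real.one_le_exp (by positivity)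
      have : 1 + κ ≤ (1 + K₀) * Real.exp (ε * i) := by rw [hκdef]; nlinarith
      calc (1 + κ) ^ ζ ≤ ((1 + K₀) * Real.exp (ε * i)) ^ ζ := by gcongr
        _ = _ := by
          rw [Real.mul_rpow (by positivity) (by positivity), ← Real.exp_mul]
          congr 2; rw [hε]; field_simp
    rw [div_le_iff₀ ht]
    calc C₂ * Real.exp (-γ₂ * i) * (1 + κ) ^ ζ
        ≤ C₂ * Real.exp (-γ₂ * i) * ((1 + K₀) ^ ζ * Real.exp (γ₂ / 2 * i)) := by gcongr
      _ = C₂ * (1 + K₀) ^ ζ * (t * t) := by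
        have : Real.exp (-γ₂ * i) * Real.exp (γ₂ / 2 * i) = t * t := by
          rw [htdef, ← Real.exp_add, ← Real.exp_add]; congr 1; ring
        rw [← this]; ring
      _ ≤ C₂ * (1 + K₀) ^ ζ * (η ^ (4 * i) * t) := by gcongr
      _ = _ := by ring
  set A := (CW / K₀) ^ (1 / δ) with hA
  have hA0 : 0 ≤ A := by positivity
  set R := C₂ * (1 + K₀) ^ ζ with hR
  have hR0 : 0 ≤ R := by positivity
  have hηpow : ENNReal.ofReal η ^ (4 * i) = ENNReal.ofReal (η ^ (4 * i)) :=
    (ENNReal.ofReal_pow hη0.le _).symm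
  gcongr
  rw [hηpow]
  set q := η ^ (4 * i) with hq
  have hq0 : 0 ≤ q := by positivity
  have hV1 : 1 + V x + ENNReal.ofReal c * V y ≤ ENNReal.ofReal (1 + c) * (1 + V x + V y) := by
    rw [ENNReal.ofReal_add zero_le_one hc.le, ENNReal.ofReal_one, add_mul, one_mul, mul_add]
    calc 1 + V x + ENNReal.ofReal c * V y ≤ 1 + V x + V y + ENNReal.ofReal c * V y :=
          add_le_add le_self_add le_rfl
      _ ≤ _ := by gcongr; exact le_add_self
  calc ENNReal.ofReal ((CW / κ) ^ (1 / δ)) * (1 + V x + ENNReal.ofReal c * V y) +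
        (ENNReal.ofReal t + ENNReal.ofReal (C₂ * Real.exp (-γ₂ * i) * (1 + κ) ^ ζ / t))
      ≤ ENNReal.ofReal (A * q) * (ENNReal.ofReal (1 + c) * (1 + V x + V y)) +
        (ENNReal.ofReal q * (1 + V x + V y) + ENNReal.ofReal (R * q) * (1 + V x + V y)) := by
        have h1 : (1 : ℝ≥0∞) ≤ 1 + V x + V y := by rw [add_assoc]; exact le_self_add
        refine add_le_add (mul_le_mul' (ENNReal.ofReal_le_ofReal b1) hV1) (add_le_add ?_ ?_)
        · calc ENNReal.ofReal t ≤ ENNReal.ofReal q * 1 := by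
                rw [mul_one]; exact ENNReal.ofReal_le_ofReal b2
            _ ≤ _ := by gcongr
        · calc _ ≤ ENNReal.ofReal (R * q) * 1 := by
                rw [mul_one]; exact ENNReal.ofReal_le_ofReal b3
            _ ≤ _ := by gcongr
    _ = _ := by
      rw [ENNReal.ofReal_mul hA0, ENNReal.ofReal_mul hR0, ENNReal.ofReal_add (by positivity) hR0,
        ENNReal.ofReal_add (by positivity) zero_le_one, ENNReal.ofReal_mul hA0, ENNReal.ofReal_one]
      ring

end OneStep

/-! ### Iterating the coupled step -/

section Iterate

set_option linter.unusedSectionVars false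

/-- A Lyapunov function `V` together with a family `G i` of sets of pairs which is propagated by
the binding construction: from a pair in `G i`, the coupled step leads to `G (i + 1)` except on an
event of probability at most `M (1 + Ṽ) h^{4i}`. The constant `B` makes `Ṽ + B` grow by at most
the factor `h⁻¹` in one step. -/
structure StepData {X Ω : Type*} [MeasurableSpace X] [MeasurableSpace Ω] (P : Measure Ω)
    (Φ : X × Ω → X) (ψ : X → X → Ω → Ω) (V : X → ℝ≥0∞) (a b B h M : ℝ≥0∞)
    (G : ℕ → X → X → Prop) : Prop where
  hΦ : Measurable Φ
  hψ : Measurable fun p : (X × X) × Ω => ψ p.1.1 p.1.2 p.2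
  hV : Measurable V
  ha : a < 1
  hL : ∀ x, ∫⁻ w, V (Φ (x, w)) ∂P ≤ a * V x + b
  one_le_B : 1 ≤ B
  b_le_B : b ≤ B
  hB : h * (2 * b + B) ≤ B
  h0 : h ≠ 0
  h1 : h ≤ 1
  step : ∀ i x y, G i x y → ∃ ρ : Measure Ω, ρ ≤ P ∧ ρ.map (ψ x y) ≤ P ∧
    (∀ᵐ ω ∂ρ, G (i + 1) (Φ (x, ω)) (Φ (y, ψ x y ω))) ∧
    1 ≤ ρ Set.univ + M * (1 + V x + V y) * h ^ (4 * i)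

variable {X Ω : Type*} [MeasurableSpace X] [MeasurableSpace Ω] {P : Measure Ω}
  [IsProbabilityMeasure P] {Pinf : Measure (ℕ → Ω)} [IsProbabilityMeasure Pinf]
  {Φ : X × Ω → X} {ψ : X → X → Ω → Ω} {V : X → ℝ≥0∞} {a b B h M : ℝ≥0∞}
  {G : ℕ → X → X → Prop}

lemma StepData.measurable_psi (S : StepData P Φ ψ V a b B h M G) (x y : X) :
    Measurable (ψ x y) :=
  S.hψ.comp (measurable_prodMk_left (x := (x, y)))

lemma StepData.measurable_Phi (S : StepData P Φ ψ V a b B h M G) (x : X) :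
    Measurable fun ω => Φ (x, ω) := S.hΦ.comp measurable_prodMk_left

/-- Both components of a coupled step are dominated by honest steps. -/
lemma StepData.lintegral_V_le (S : StepData P Φ ψ V a b B h M G) {x y : X} {ρ : Measure Ω}
    (hρ : ρ ≤ P) (hρT : ρ.map (ψ x y) ≤ P) :
    ∫⁻ ω, (V (Φ (x, ω)) + V (Φ (y, ψ x y ω))) ∂ρ ≤ a * (V x + V y) + 2 * b := by
  have hx : Measurable fun ω => V (Φ (x, ω)) := S.hV.comp (S.measurable_Phi x)
  have hy : Measurable fun ω => V (Φ (y, ω)) := S.hV.comp (S.measurable_Phi y)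
  rw [lintegral_add_left hx]
  calc ∫⁻ ω, V (Φ (x, ω)) ∂ρ + ∫⁻ ω, V (Φ (y, ψ x y ω)) ∂ρ
      = ∫⁻ ω, V (Φ (x, ω)) ∂ρ + ∫⁻ ω, V (Φ (y, ω)) ∂(ρ.map (ψ x y)) := by
        rw [lintegral_map hy (S.measurable_psi x y)]
    _ ≤ (a * V x + b) + (a * V y + b) :=
        add_le_add ((lintegral_mono' hρ le_rfl).trans (S.hL x))
          ((lintegral_mono' hρT le_rfl).trans (S.hL y))
    _ = _ := by ring

lemma StepData.lintegral_L_le (S : StepData P Φ ψ V a b B h M G) {x y : X} {ρ : Measure Ω}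
    (hρ : ρ ≤ P) (hρT : ρ.map (ψ x y) ≤ P) :
    h * ∫⁻ ω, (V (Φ (x, ω)) + V (Φ (y, ψ x y ω)) + B) ∂ρ ≤ V x + V y + B := by
  rw [lintegral_add_right _ measurable_const]
  have hm : ρ Set.univ ≤ 1 := (hρ Set.univ).trans_eq measure_univ
  calc h * (∫⁻ ω, (V (Φ (x, ω)) + V (Φ (y, ψ x y ω))) ∂ρ + ∫⁻ _, B ∂ρ)
      ≤ h * ((1 * (V x + V y) + 2 * b) + B * 1) := by
        gcongr
        · refine (S.lintegral_V_le hρ hρT).trans ?_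
          gcongr
          exact S.ha.le
        · rw [lintegral_const]; gcongr
    _ = h * (V x + V y) + h * (2 * b + B) := by ring
    _ ≤ 1 * (V x + V y) + B := by
        gcongr
        · exact S.h1
        · exact S.hB
    _ = _ := by rw [one_mul]

/-- Contribution of a failed coupling: its mass `O(h^{4i})` is traded against the square root of
the Lyapunov function, at the price of half of the exponent. -/
lemma StepData.residual (S : StepData P Φ ψ V a b B h M G) {x y z : X}
    (hz : V z ≤ V x + V y) {i : ℕ} {σ : Measure Ω} (hσ : σ ≤ P)
    (hm : σ Set.univ ≤ M * (1 + V x + V y) * h ^ (4 * i)) :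
    ∫⁻ ω, (1 + V (Φ (z, ω)) ^ (1 / 2 : ℝ)) ∂σ ≤
      (2 * M + 1) * h ^ (2 * i) * (V x + V y + B) := by
  set t := h ^ (2 * i) with ht
  have ht0 : t ≠ 0 := pow_ne_zero _ S.h0
  have ht1 : t ≤ 1 := pow_le_one₀ zero_le S.h1
  have htt : t ≠ ⊤ := (ht1.trans_lt ENNReal.one_lt_top).ne
  have hzm : Measurable fun ω => V (Φ (z, ω)) := S.hV.comp (S.measurable_Phi z)
  have h4 : h ^ (4 * i) = t * t := by rw [ht, ← pow_add]; congr 1; ring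
  have hinv1 : 1 ≤ t⁻¹ := ENNReal.one_le_inv.2 ht1
  calc ∫⁻ ω, (1 + V (Φ (z, ω)) ^ (1 / 2 : ℝ)) ∂σ
      ≤ ∫⁻ ω, (2 * t⁻¹ + t * V (Φ (z, ω))) ∂σ := by
        refine lintegral_mono fun ω => ?_
        calc 1 + V (Φ (z, ω)) ^ (1 / 2 : ℝ) ≤ t⁻¹ + (t⁻¹ + t * V (Φ (z, ω))) :=
              add_le_add hinv1 (sqrt_le_inv_add_mul ht0 htt _)
          _ = _ := by ring
    _ = 2 * t⁻¹ * σ Set.univ + t * ∫⁻ ω, V (Φ (z, ω)) ∂σ := by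
        rw [lintegral_add_left measurable_const, lintegral_const, lintegral_const_mul _ hzm]
    _ ≤ 2 * t⁻¹ * (M * (1 + V x + V y) * (t * t)) + t * (1 * V z + b) := by
        rw [← h4]
        gcongr
        refine (lintegral_mono' hσ le_rfl).trans ((S.hL z).trans ?_)
        gcongr
        exact S.ha.le
    _ = 2 * M * t * (1 + V x + V y) * (t⁻¹ * t) + t * (V z + b) := by ring
    _ = 2 * M * t * (V x + V y + 1) + t * (V z + b) := by
        rw [ENNReal.inv_mul_cancel ht0 htt, mul_one, add_assoc 1, add_comm 1]
    _ ≤ 2 * M * t * (V x + V y + B) + t * (V x + V y + B) := by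
        gcongr
        · exact S.one_le_B
        · exact S.b_le_B
    _ = _ := by ring

/-- Failed mass of a sub-coupling, on either side. -/
lemma sub_univ_le {A : Type*} [MeasurableSpace A] {μ σ : Measure A} [IsProbabilityMeasure μ]
    (hσ : σ ≤ μ) {d : ℝ≥0∞} (hd : 1 ≤ σ Set.univ + d) : (μ - σ) Set.univ ≤ d := by
  have : IsFiniteMeasure σ := isFiniteMeasure_of_le μ hσ
  rw [Measure.sub_apply MeasurableSet.univ hσ, measure_univ]
  exact tsub_le_iff_left.2 hd

/-- Supersolution principle for coupled trajectories: if at each time `i` either the bound `T i`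
holds for the remaining `j = n - i` steps, or `T` is a supersolution for the coupled step, then the
bound `T` holds up to the cost of failed couplings. Failed couplings are estimated by an a priori
bound on the oscillation of the semigroup for fewer than `n` steps. -/
lemma StepData.supersolution (S : StepData P Φ ψ V a b B h M G)
    (hcons : (P.prod Pinf).map (fun p => consSeq p.1 p.2) = Pinf)
    {g : X → ℝ} (hg : Measurable g) (hgb : ∀ z, |g z| ≤ 1) {n : ℕ} {A q M₃ : ℝ≥0∞}
    (hM₃ : M₃ * h + 2 * (2 * M + 1) ≤ M₃ * q)
    (hcen : ∀ k < n, ∃ c : ℝ, ∀ x, ‖sg Pinf Φ g k x - c‖ₑ ≤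
      A * q ^ k * (1 + V x ^ (1 / 2 : ℝ)))
    {T : ℕ → X → X → ℝ≥0∞} (hTm : ∀ i, Measurable fun p : X × X => T i p.1 p.2)
    (hT : ∀ i j x y, i + j = n → G i x y →
      ‖sg Pinf Φ g j x - sg Pinf Φ g j y‖ₑ ≤ T i x y ∨
      (0 < j ∧ ∀ ρ : Measure Ω, ρ ≤ P → ρ.map (ψ x y) ≤ P →
        ∫⁻ ω, T (i + 1) (Φ (x, ω)) (Φ (y, ψ x y ω)) ∂ρ ≤ T i x y)) :
    ∀ j i x y, i + j = n → G i x y → ‖sg Pinf Φ g j x - sg Pinf Φ g j y‖ₑ ≤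
      A * M₃ * q ^ j * h ^ (2 * i) * (V x + V y + B) + T i x y := by
  intro j
  induction j with
  | zero =>
    intro i x y hij hG
    rcases hT i 0 x y hij hG with h' | h'
    · exact h'.trans le_add_self
    · exact absurd h'.1 (lt_irrefl _)
  | succ j ih =>
    intro i x y hij hG
    rcases hT i (j + 1) x y hij hG with h' | ⟨-, h'⟩
    · exact h'.trans le_add_self
    obtain ⟨c, hc⟩ := hcen j (by omega)
    obtain ⟨ρ, hρ, hρT, hρG, hρm⟩ := S.step i x y hG
    have hψm := S.measurable_psi x y
    have hx := S.measurable_Phi x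
    have hy := S.measurable_Phi y
    have hρm' : 1 ≤ (ρ.map (ψ x y)) Set.univ + M * (1 + V x + V y) * h ^ (4 * i) := by
      rwa [Measure.map_apply hψm MeasurableSet.univ, Set.preimage_univ]
    set L := V x + V y + B with hLdef
    have hmain : ∫⁻ ω, ‖sg Pinf Φ g j (Φ (x, ω)) - sg Pinf Φ g j (Φ (y, ψ x y ω))‖ₑ ∂ρ ≤
        A * M₃ * q ^ j * h ^ (2 * i) * h * L + T i x y := by
      calc _ ≤ ∫⁻ ω, (A * M₃ * q ^ j * h ^ (2 * (i + 1)) *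
            (V (Φ (x, ω)) + V (Φ (y, ψ x y ω)) + B) +
            T (i + 1) (Φ (x, ω)) (Φ (y, ψ x y ω))) ∂ρ := by
              refine lintegral_mono_ae ?_
              filter_upwards [hρG] with ω hω
              exact ih (i + 1) _ _ (by omega) hω
        _ = A * M₃ * q ^ j * h ^ (2 * (i + 1)) *
            ∫⁻ ω, (V (Φ (x, ω)) + V (Φ (y, ψ x y ω)) + B) ∂ρ +
            ∫⁻ ω, T (i + 1) (Φ (x, ω)) (Φ (y, ψ x y ω)) ∂ρ := by
              have hm1 : Measurable fun ω => V (Φ (x, ω)) + V (Φ (y, ψ x y ω)) + B :=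
                ((S.hV.comp hx).add (S.hV.comp (hy.comp hψm))).add_const B
              have hm2 : Measurable fun ω => T (i + 1) (Φ (x, ω)) (Φ (y, ψ x y ω)) :=
                (hTm (i + 1)).comp (hx.prodMk (hy.comp hψm))
              rw [lintegral_add_right _ hm2, lintegral_const_mul _ hm1]
        _ = A * M₃ * q ^ j * h ^ (2 * i) * h *
            (h * ∫⁻ ω, (V (Φ (x, ω)) + V (Φ (y, ψ x y ω)) + B) ∂ρ) +
            ∫⁻ ω, T (i + 1) (Φ (x, ω)) (Φ (y, ψ x y ω)) ∂ρ := by ring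
        _ ≤ _ := by
              gcongr
              · exact S.lintegral_L_le hρ hρT
              · exact h' ρ hρ hρT
    have hres : ∀ (σ : Measure Ω) (z : X), σ ≤ P →
        σ Set.univ ≤ M * (1 + V x + V y) * h ^ (4 * i) → V z ≤ V x + V y →
        ∫⁻ ω, A * q ^ j * (1 + V (Φ (z, ω)) ^ (1 / 2 : ℝ)) ∂σ ≤
          A * q ^ j * ((2 * M + 1) * h ^ (2 * i) * L) := by
      intro σ z hσ hm hz
      have hm1 : Measurable fun ω => 1 + V (Φ (z, ω)) ^ (1 / 2 : ℝ) :=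
        ((S.hV.comp (S.measurable_Phi z)).pow_const _).const_add 1
      rw [lintegral_const_mul _ hm1]
      gcongr
      exact S.residual hz hσ hm
    have hc' := coupling_ineq hρ hψm hρT hx hy (measurable_sg (Pinf := Pinf) S.hΦ hg j)
      (abs_sg_le hgb j) hc
    rw [← sg_succ hcons S.hΦ hg hgb, ← sg_succ hcons S.hΦ hg hgb] at hc'
    refine hc'.trans ((add_le_add hmain (add_le_add
      (hres _ x Measure.sub_le (sub_univ_le hρ hρm) le_self_add)
      (hres _ y Measure.sub_le (sub_univ_le hρT hρm') le_add_self))).trans ?_)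
    calc _ = A * q ^ j * h ^ (2 * i) * L * (M₃ * h + 2 * (2 * M + 1)) + T i x y := by ring
      _ ≤ A * q ^ j * h ^ (2 * i) * L * (M₃ * q) + T i x y := by gcongr
      _ = _ := by ring

/-- From a pair in `G i`, the noise transformation `Ξ^∞` almost preserves `P^∞`. -/
lemma StepData.lintegral_le_XiInf (S : StepData P Φ ψ V a b B h M G)
    (hcons : (P.prod Pinf).map (fun p => consSeq p.1 p.2) = Pinf) {M₅ : ℝ≥0∞}
    (hM₅ : M₅ * h + M ≤ M₅) (k : ℕ) :
    ∀ (i : ℕ) (x y : X) (F : (ℕ → Ω) → ℝ≥0∞), G i x y → Measurable F → (∀ ω, F ω ≤ 1) →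
      (∀ ω ω' : ℕ → Ω, (∀ j < k, ω j = ω' j) → F ω = F ω') →
      ∫⁻ ω, F ω ∂Pinf ≤ ∫⁻ ω, F (XiInf Φ ψ x y ω) ∂Pinf +
        M₅ * h ^ (2 * i) * (V x + V y + B) := by
  induction k with
  | zero =>
    intro i x y F _ _ _ hk
    have : ∀ ω, F ω = F (XiInf Φ ψ x y ω) := fun ω => hk _ _ fun j hj => absurd hj (by omega)
    rw [lintegral_congr this]
    exact le_self_add
  | succ k ih =>
    intro i x y F hG hF hF1 hk
    obtain ⟨ρ, hρ, hρT, hρG, hρm⟩ := S.step i x y hG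
    have hψm := S.measurable_psi x y
    have hx := S.measurable_Phi x
    have hy := S.measurable_Phi y
    have hρm' : 1 ≤ (ρ.map (ψ x y)) Set.univ + M * (1 + V x + V y) * h ^ (4 * i) := by
      rwa [Measure.map_apply hψm MeasurableSet.univ, Set.preimage_univ]
    set L := V x + V y + B with hLdef
    have hFc : ∀ w, Measurable fun ω => F (consSeq w ω) := fun w =>
      hF.comp (measurable_consSeq.comp measurable_prodMk_left)
    have hFi : Measurable fun w => ∫⁻ ω, F (consSeq w ω) ∂Pinf :=
      (hF.comp measurable_consSeq).lintegral_prod_right'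
    have hm1 : Measurable fun ω => V (Φ (x, ω)) + V (Φ (y, ψ x y ω)) + B :=
      ((S.hV.comp hx).add (S.hV.comp (hy.comp hψm))).add_const B
    have hFΞ : Measurable fun ω => F (XiInf Φ ψ x y ω) :=
      hF.comp (measurable_XiInf S.hΦ S.hψ x y)
    rw [lintegral_consSeq hcons hF, lintegral_consSeq hcons hFΞ]
    simp only [XiInf_consSeq]
    have hstep : ∫⁻ w, ∫⁻ ω, F (consSeq (ψ x y w) ω) ∂Pinf ∂ρ ≤
        ∫⁻ w, ∫⁻ ω, F (consSeq (ψ x y w) (XiInf Φ ψ (Φ (x, w)) (Φ (y, ψ x y w)) ω)) ∂Pinf ∂ρ +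
          M₅ * h ^ (2 * i) * h * L := by
      calc _ ≤ ∫⁻ w, (∫⁻ ω, F (consSeq (ψ x y w)
              (XiInf Φ ψ (Φ (x, w)) (Φ (y, ψ x y w)) ω)) ∂Pinf +
            M₅ * h ^ (2 * (i + 1)) * (V (Φ (x, w)) + V (Φ (y, ψ x y w)) + B)) ∂ρ := by
            refine lintegral_mono_ae ?_
            filter_upwards [hρG] with w hw
            refine ih (i + 1) _ _ (fun ω => F (consSeq (ψ x y w) ω)) hw (hFc _) (fun _ => hF1 _)
              fun ω ω' hω => hk _ _ fun j hj => ?_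
            cases j with
            | zero => rfl
            | succ j => exact hω j (by omega)
        _ = ∫⁻ w, ∫⁻ ω, F (consSeq (ψ x y w)
              (XiInf Φ ψ (Φ (x, w)) (Φ (y, ψ x y w)) ω)) ∂Pinf ∂ρ +
            M₅ * h ^ (2 * i) * h *
              (h * ∫⁻ w, (V (Φ (x, w)) + V (Φ (y, ψ x y w)) + B) ∂ρ) := by
            rw [lintegral_add_right _ (hm1.const_mul _), lintegral_const_mul _ hm1]; ring
        _ ≤ _ := by gcongr; exact S.lintegral_L_le hρ hρT
    calc ∫⁻ w, ∫⁻ ω, F (consSeq w ω) ∂Pinf ∂P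
        ≤ ∫⁻ w, ∫⁻ ω, F (consSeq w ω) ∂Pinf ∂(ρ.map (ψ x y)) +
            M * (1 + V x + V y) * h ^ (4 * i) :=
          lintegral_le_add_defect hρT hρm' fun w =>
            (lintegral_mono fun ω => hF1 _).trans (by simp)
      _ = ∫⁻ w, ∫⁻ ω, F (consSeq (ψ x y w) ω) ∂Pinf ∂ρ +
            M * (1 + V x + V y) * h ^ (4 * i) := by rw [lintegral_map hFi hψm]
      _ ≤ (∫⁻ w, ∫⁻ ω, F (consSeq (ψ x y w)
              (XiInf Φ ψ (Φ (x, w)) (Φ (y, ψ x y w)) ω)) ∂Pinf ∂P +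
            M₅ * h ^ (2 * i) * h * L) + M * L * h ^ (2 * i) := by
          refine add_le_add (hstep.trans ?_) ?_
          · gcongr
          · refine mul_le_mul' (mul_le_mul' le_rfl ?_)
              (pow_le_pow_right_of_le_one' S.h1 (by omega))
            rw [add_assoc, add_comm, hLdef]
            gcongr
            exact S.one_le_B
      _ = ∫⁻ w, ∫⁻ ω, F (consSeq (ψ x y w)
              (XiInf Φ ψ (Φ (x, w)) (Φ (y, ψ x y w)) ω)) ∂Pinf ∂P +
            (M₅ * h + M) * h ^ (2 * i) * L := by ring
      _ ≤ _ := by gcongr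

lemma StepData.one_le_inf (S : StepData P Φ ψ V a b B h M G)
    (hcons : (P.prod Pinf).map (fun p => consSeq p.1 p.2) = Pinf) {M₅ : ℝ≥0∞}
    (hM₅ : M₅ * h + M ≤ M₅) {i : ℕ} {x y : X} (hG : G i x y) :
    1 ≤ (Pinf ⊓ Pinf.map (fun ω => XiInf Φ ψ x y ω)) Set.univ +
      M₅ * h ^ (2 * i) * (V x + V y + B) := by
  classical
  have hΞ := measurable_XiInf S.hΦ S.hψ x y
  have : IsProbabilityMeasure (Pinf.map (fun ω => XiInf Φ ψ x y ω)) :=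
    Measure.isProbabilityMeasure_map hΞ.aemeasurable
  refine one_le_inf_add fun E hE => le_add_of_cylinders (fun k E hE hk => ?_) hE
  have := S.lintegral_le_XiInf hcons hM₅ k i x y (E.indicator 1) hG
    (measurable_one.indicator hE) (fun ω => Set.indicator_le' (fun _ _ => le_rfl) (fun _ _ => zero_le) ω)
    (fun ω ω' hω => by
      by_cases h1 : ω ∈ E
      · simp [h1, (hk ω ω' hω).1 h1]
      · simp [h1, mt (hk ω ω' hω).2 h1])
  rw [lintegral_indicator_one hE, ← lintegral_map (measurable_one.indicator hE) hΞ,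
    lintegral_indicator_one hE] at this
  exact this

end Iterate

/-! ### Exponential decay along well-coupled trajectories -/

section Binding

variable {X Ω : Type*} [MeasurableSpace X] [MeasurableSpace Ω] {P : Measure Ω}
  [IsProbabilityMeasure P] {Pinf : Measure (ℕ → Ω)} [IsProbabilityMeasure Pinf]
  {Φ : X × Ω → X} {ψ : X → X → Ω → Ω} {V : X → ℝ≥0∞} {a b B h M : ℝ≥0∞}
  {G : ℕ → X → X → Prop}

lemma enorm_sub_comm' (s t : ℝ) : ‖s - t‖ₑ = ‖t - s‖ₑ := by
  rw [← enorm_neg, neg_sub]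

/-- The exponential binding of `Q^∞_{x,y}` transfers to the transition probabilities, since
`Q^∞_{x,y}` is almost a coupling for pairs in `G i`. -/
lemma StepData.binding (S : StepData P Φ ψ V a b B h M G)
    (hcons : (P.prod Pinf).map (fun p => consSeq p.1 p.2) = Pinf) {M₅ : ℝ≥0∞}
    (hM₅ : M₅ * h + M ≤ M₅) {i : ℕ} {x y : X} (hG : G i x y)
    {g : X → ℝ} (hg : Measurable g) (hgb : ∀ z, |g z| ≤ 1) {m : ℕ} {R : ℝ}
    (h1 : (∫ z, g z ∂((QInf Pinf Φ ψ x y).map fun q : (ℕ → X) × (ℕ → X) => q.1 m)) -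
            (∫ z, g z ∂((QInf Pinf Φ ψ x y).map fun q : (ℕ → X) × (ℕ → X) => q.2 m)) ≤ R)
    (h2 : (∫ z, -g z ∂((QInf Pinf Φ ψ x y).map fun q : (ℕ → X) × (ℕ → X) => q.1 m)) -
            (∫ z, -g z ∂((QInf Pinf Φ ψ x y).map fun q : (ℕ → X) × (ℕ → X) => q.2 m)) ≤ R) :
    ‖sg Pinf Φ g m x - sg Pinf Φ g m y‖ₑ ≤
      ENNReal.ofReal R + 4 * (M₅ * h ^ (2 * i) * (V x + V y + B)) := by
  have hd := S.one_le_inf hcons hM₅ hG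
  set d := M₅ * h ^ (2 * i) * (V x + V y + B)
  set l := Pinf.map (fun ω => XiInf Φ ψ x y ω) with hl
  set σ := Pinf ⊓ l with hσ
  have hΞ := measurable_XiInf S.hΦ S.hψ x y
  have : IsProbabilityMeasure l := Measure.isProbabilityMeasure_map hΞ.aemeasurable
  have hσ1 : σ ≤ Pinf := inf_le_left
  have hσ2 : σ ≤ l := inf_le_right
  have hpair : Measurable fun ω => (fun n => (traj2 Φ ψ x y ω n).1,
      fun n => (traj2 Φ ψ x y ω n).2) :=
    (measurable_pi_lambda _ fun n => (measurable_traj2 S.hΦ S.hψ x y n).fst).prodMk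
      (measurable_pi_lambda _ fun n => (measurable_traj2 S.hΦ S.hψ x y n).snd)
  have hp1 : Measurable fun q : (ℕ → X) × (ℕ → X) => q.1 m :=
    (measurable_pi_apply m).comp measurable_fst
  have hp2 : Measurable fun q : (ℕ → X) × (ℕ → X) => q.2 m :=
    (measurable_pi_apply m).comp measurable_snd
  have hQ1 : ∫ z, g z ∂((QInf Pinf Φ ψ x y).map fun q : (ℕ → X) × (ℕ → X) => q.1 m) =
      ∫ ω, g (traj Φ x ω m) ∂σ := by
    rw [QInf, Measure.map_map hp1 hpair,
      integral_map (hp1.comp hpair).aemeasurable hg.aestronglyMeasurable]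
    simp only [Function.comp_apply, traj2_fst]
    rfl
  have hQ2 : ∫ z, g z ∂((QInf Pinf Φ ψ x y).map fun q : (ℕ → X) × (ℕ → X) => q.2 m) =
      ∫ ω, g (traj Φ y (XiInf Φ ψ x y ω) m) ∂σ := by
    rw [QInf, Measure.map_map hp2 hpair,
      integral_map (hp2.comp hpair).aemeasurable hg.aestronglyMeasurable]
    simp only [Function.comp_apply, traj2_snd]
    rfl
  rw [integral_neg, integral_neg] at h2
  rw [hQ1, hQ2] at h1 h2
  have hgx : Measurable fun ω => g (traj Φ x ω m) := hg.comp (measurable_traj_right S.hΦ x m)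
  have hgy : Measurable fun ω => g (traj Φ y ω m) := hg.comp (measurable_traj_right S.hΦ y m)
  have e1 := abs_integral_sub_le_defect hσ1 hd hgx fun _ => hgb _
  have e2 := abs_integral_sub_le_defect hσ1 hd (hgy.comp hΞ) fun _ => hgb _
  have e3 := abs_integral_sub_le_defect hσ2 hd hgy fun _ => hgb _
  have e4 := abs_integral_sub_le_defect hσ1 hd hgy fun _ => hgb _
  rw [hl, integral_map hΞ.aemeasurable hgy.aestronglyMeasurable] at e3
  have e0 : ‖∫ ω, g (traj Φ x ω m) ∂σ - ∫ ω, g (traj Φ y (XiInf Φ ψ x y ω) m) ∂σ‖ₑ ≤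
      ENNReal.ofReal R := by
    rw [← ofReal_norm]
    refine ENNReal.ofReal_le_ofReal ?_
    rw [Real.norm_eq_abs, abs_le]
    constructor <;> linarith
  simp only [Function.comp_apply] at e2
  set I1 := ∫ ω, g (traj Φ x ω m) ∂σ
  set I2 := ∫ ω, g (traj Φ y (XiInf Φ ψ x y ω) m) ∂σ
  set I3 := ∫ ω, g (traj Φ y (XiInf Φ ψ x y ω) m) ∂Pinf
  set I4 := ∫ ω, g (traj Φ y ω m) ∂σ
  have hsplit : sg Pinf Φ g m x - sg Pinf Φ g m y = (sg Pinf Φ g m x - I1) +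
      ((I1 - I2) + ((I2 - I3) + ((I3 - I4) + (I4 - sg Pinf Φ g m y)))) := by ring
  rw [hsplit]
  refine (enorm_add_le _ _).trans ((add_le_add e1 ((enorm_add_le _ _).trans (add_le_add e0
    ((enorm_add_le _ _).trans (add_le_add ((enorm_sub_comm' _ _).trans_le e2)
    ((enorm_add_le _ _).trans (add_le_add e3 ((enorm_sub_comm' _ _).trans_le e4)))))))).trans ?_)
  exact le_of_eq (by ring)

lemma enorm_sg_sub_le {g : X → ℝ} (hgb : ∀ z, |g z| ≤ 1) (m : ℕ) (x y : X) :
    ‖sg Pinf Φ g m x - sg Pinf Φ g m y‖ₑ ≤ 2 := by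
  rw [← ofReal_norm, ← ENNReal.ofReal_ofNat 2]
  refine ENNReal.ofReal_le_ofReal ?_
  have h1 := abs_sg_le (Pinf := Pinf) (Φ := Φ) hgb m x
  have h2 := abs_sg_le (Pinf := Pinf) (Φ := Φ) hgb m y
  rw [abs_le] at h1 h2
  rw [Real.norm_eq_abs, abs_le]
  constructor <;> linarith

/-- Barrier function for the supersolution principle over `n ≥ 3 s` steps. Between times `s` and
`2 s` it controls the probability of not returning to `{Ṽ ≤ K₀}`, after which the binding estimate
applies. -/
def barrier {X : Type*} (V : X → ℝ≥0∞) (B h c₁ τ : ℝ≥0∞) (s i : ℕ) (x y : X) : ℝ≥0∞ :=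
  if i < s then c₁ * h ^ (2 * s) * h⁻¹ ^ (s - i) * (V x + V y + B) + τ
  else if i ≤ 2 * s then c₁ * h ^ (2 * (2 * s - i)) * (V x + V y) + τ
  else ⊤

lemma measurable_barrier (hV : Measurable V) (B h c₁ τ : ℝ≥0∞) (s i : ℕ) :
    Measurable fun p : X × X => barrier V B h c₁ τ s i p.1 p.2 := by
  unfold barrier
  split_ifs <;> fun_prop

lemma StepData.good_bound (S : StepData P Φ ψ V a b B h M G)
    (hcons : (P.prod Pinf).map (fun p => consSeq p.1 p.2) = Pinf)
    {g : X → ℝ} (hg : Measurable g) (hgb : ∀ z, |g z| ≤ 1)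
    {k₀ CA c₁ : ℝ≥0∞} (hc₁ : 2 ≤ c₁ * k₀)
    (hdrift : ∀ v, k₀ < v → a * v + 2 * b ≤ h ^ 2 * v)
    (hCA : ∀ i x y m, G i x y → V x + V y ≤ k₀ →
      ‖sg Pinf Φ g m x - sg Pinf Φ g m y‖ₑ ≤ CA * (h ^ (2 * m) + h ^ (2 * i)))
    {A q M₃ : ℝ≥0∞} (hM₃ : M₃ * h + 2 * (2 * M + 1) ≤ M₃ * q) {n s N : ℕ}
    (hcen : ∀ k < n, ∃ c : ℝ, ∀ x, ‖sg Pinf Φ g k x - c‖ₑ ≤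
      A * q ^ k * (1 + V x ^ (1 / 2 : ℝ)))
    (hs : 3 * s ≤ n) (hN : N ≤ s) {x y : X} (hG : G N x y) :
    ‖sg Pinf Φ g (n - N) x - sg Pinf Φ g (n - N) y‖ₑ ≤
      A * M₃ * q ^ (n - N) * h ^ (2 * N) * (V x + V y + B) +
        (c₁ + 2 * CA) * h ^ s * (V x + V y + B) := by
  set τ := 2 * CA * h ^ (2 * s) with hτ
  have hh := S.h1
  have hhtop : h ≠ ⊤ := (hh.trans_lt ENNReal.one_lt_top).ne
  have hsmall : ∀ i j x y, s ≤ i → s ≤ j → G i x y → V x + V y ≤ k₀ →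
      ‖sg Pinf Φ g j x - sg Pinf Φ g j y‖ₑ ≤ τ := by
    intro i j x y hi hj hG hv
    calc _ ≤ CA * (h ^ (2 * j) + h ^ (2 * i)) := hCA i x y j hG hv
      _ ≤ CA * (h ^ (2 * s) + h ^ (2 * s)) := by
        gcongr CA * (?_ + ?_)
        · exact pow_le_pow_right_of_le_one' hh (by omega)
        · exact pow_le_pow_right_of_le_one' hh (by omega)
      _ = τ := by rw [hτ]; ring
  have hmass : ∀ ρ : Measure Ω, ρ ≤ P → ∫⁻ _, τ ∂ρ ≤ τ := by
    intro ρ hρ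
    rw [lintegral_const]
    exact mul_le_of_le_one_right' ((hρ Set.univ).trans_eq measure_univ)
  have key := S.supersolution hcons hg hgb hM₃ hcen
    (T := barrier V B h c₁ τ s) (measurable_barrier S.hV B h c₁ τ s) ?_ (n - N) N x y
    (by omega) hG
  · refine key.trans (add_le_add le_rfl ?_)
    have hB1 : 1 ≤ V x + V y + B := S.one_le_B.trans le_add_self
    have hτ' : τ ≤ 2 * CA * h ^ s * (V x + V y + B) := by
      calc τ = 2 * CA * h ^ (2 * s) * 1 := by rw [mul_one]
        _ ≤ _ := by
          gcongr ?_ * ?_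
          gcongr 2 * CA * ?_
          exact pow_le_pow_right_of_le_one' hh (by omega)
    unfold barrier
    split_ifs with h1 h2
    · rw [add_mul, add_mul]
      gcongr ?_ * _ + ?_
      · rw [mul_assoc]
        gcongr c₁ * ?_
        calc h ^ (2 * s) * h⁻¹ ^ (s - N) ≤ h ^ (2 * s) * h⁻¹ ^ s := by
              gcongr
              · exact ENNReal.one_le_inv.2 hh
              · omega
          _ = h ^ s * (h * h⁻¹) ^ s := by rw [mul_pow]; ring
          _ = h ^ s := by rw [ENNReal.mul_inv_cancel S.h0 hhtop, one_pow, mul_one]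
    · rw [add_mul, add_mul]
      refine add_le_add (mul_le_mul' (mul_le_mul' le_rfl ?_) le_self_add) hτ'
      exact pow_le_pow_right_of_le_one' hh (by omega)
    · omega
  · intro i j x y hij hG
    have hψm := S.measurable_psi x y
    have hx := S.measurable_Phi x
    have hy := S.measurable_Phi y
    have hm0 : Measurable fun ω => V (Φ (x, ω)) + V (Φ (y, ψ x y ω)) :=
      (S.hV.comp hx).add (S.hV.comp (hy.comp hψm))
    have hm1 : Measurable fun ω => V (Φ (x, ω)) + V (Φ (y, ψ x y ω)) + B := hm0.add_const B
    rcases lt_or_ge i s with his | his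
    · -- early times: `Ṽ + B` grows at most by `h⁻¹`
      right
      refine ⟨by omega, fun ρ hρ hρT => ?_⟩
      have hle : ∀ ω, barrier V B h c₁ τ s (i + 1) (Φ (x, ω)) (Φ (y, ψ x y ω)) ≤
          c₁ * h ^ (2 * s) * h⁻¹ ^ (s - (i + 1)) *
            (V (Φ (x, ω)) + V (Φ (y, ψ x y ω)) + B) + τ := by
        intro ω
        unfold barrier
        split_ifs with h1 h2
        · exact le_rfl
        · have h3 : i + 1 = s := by omega
          rw [h3, show 2 * s - s = s by omega, Nat.sub_self, pow_zero, mul_one]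
          exact add_le_add (mul_le_mul' le_rfl le_self_add) le_rfl
        · omega
      calc _ ≤ ∫⁻ ω, (c₁ * h ^ (2 * s) * h⁻¹ ^ (s - (i + 1)) *
              (V (Φ (x, ω)) + V (Φ (y, ψ x y ω)) + B) + τ) ∂ρ := lintegral_mono hle
        _ = c₁ * h ^ (2 * s) * h⁻¹ ^ (s - (i + 1)) *
              ∫⁻ ω, (V (Φ (x, ω)) + V (Φ (y, ψ x y ω)) + B) ∂ρ + ∫⁻ _, τ ∂ρ := by
            rw [lintegral_add_right _ measurable_const, lintegral_const_mul _ hm1]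
        _ = c₁ * h ^ (2 * s) * h⁻¹ ^ (s - (i + 1)) * h⁻¹ *
              (h * ∫⁻ ω, (V (Φ (x, ω)) + V (Φ (y, ψ x y ω)) + B) ∂ρ) + ∫⁻ _, τ ∂ρ := by
            rw [mul_assoc _ h⁻¹, ← mul_assoc h⁻¹ h, ENNReal.inv_mul_cancel S.h0 hhtop, one_mul]
        _ ≤ c₁ * h ^ (2 * s) * h⁻¹ ^ (s - (i + 1)) * h⁻¹ * (V x + V y + B) + τ := by
            gcongr
            · exact S.lintegral_L_le hρ hρT
            · exact hmass ρ hρ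
        _ = _ := by
            unfold barrier
            rw [if_pos his, mul_assoc _ _ h⁻¹, ← pow_succ,
              show s - (i + 1) + 1 = s - i by omega]
    rcases lt_or_ge (2 * s) i with h2s | h2s
    · left
      unfold barrier
      rw [if_neg (by omega), if_neg (by omega)]
      exact le_top
    have hb : barrier V B h c₁ τ s i x y = c₁ * h ^ (2 * (2 * s - i)) * (V x + V y) + τ := by
      unfold barrier
      rw [if_neg (by omega), if_pos h2s]
    rcases le_or_gt (V x + V y) k₀ with hv | hv
    · left
      rw [hb]
      exact (hsmall i j x y his (by omega) hG hv).trans le_add_self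
    rcases h2s.eq_or_lt with h2s | h2s
    · left
      rw [hb, h2s, Nat.sub_self, mul_zero, pow_zero, mul_one]
      refine (enorm_sg_sub_le hgb j x y).trans (hc₁.trans ?_)
      refine le_trans ?_ le_self_add
      gcongr
    · right
      refine ⟨by omega, fun ρ hρ hρT => ?_⟩
      have hb' : ∀ x' y', barrier V B h c₁ τ s (i + 1) x' y' =
          c₁ * h ^ (2 * (2 * s - (i + 1))) * (V x' + V y') + τ := by
        intro x' y'
        unfold barrier
        rw [if_neg (by omega), if_pos (by omega)]
      simp only [hb']
      rw [lintegral_add_right _ measurable_const, lintegral_const_mul _ hm0, hb]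
      gcongr ?_ + ?_
      · calc _ ≤ c₁ * h ^ (2 * (2 * s - (i + 1))) * (h ^ 2 * (V x + V y)) := by
              gcongr
              exact (S.lintegral_V_le hρ hρT).trans (hdrift _ hv)
          _ = _ := by
              rw [← mul_assoc, mul_assoc c₁, ← pow_add,
                show 2 * (2 * s - (i + 1)) + 2 = 2 * (2 * s - i) by omega]
      · exact hmass ρ hρ

end Binding

/-! ### The initial block: coupling with positive probability -/

section Block

/-- A second moment bound on `D⁻¹` over a set `s` of positive measure bounds `∫ min 1 D` from
below. The set `s` need not be measurable. -/
lemma le_lintegral_min_one {A : Type*} [MeasurableSpace A] {μ : Measure A}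
    [IsProbabilityMeasure μ] {D : A → ℝ≥0∞} (hD : Measurable D) {s : Set A} {c₁ c₂ t : ℝ}
    (ht : 0 < t) (ht2 : t ^ 2 * c₂ ≤ c₁ / 2) (hc₁ : 0 < c₁)
    (hs : ENNReal.ofReal c₁ ≤ μ s) (hs2 : ∫⁻ z in s, (D z)⁻¹ ^ 2 ∂μ ≤ ENNReal.ofReal c₂)
    (ht1 : t ≤ 1) : ENNReal.ofReal (t * (c₁ / 2)) ≤ ∫⁻ z, min 1 (D z) ∂μ := by
  set T := ENNReal.ofReal t with hT
  have hT0 : T ≠ 0 := by simpa [hT] using ht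
  have hTt : T ≠ ⊤ := ENNReal.ofReal_ne_top
  have hT1 : T ≤ 1 := ENNReal.ofReal_le_one.2 ht1
  set s' := toMeasurable μ s with hs'
  have hr : μ.restrict s' = μ.restrict s := Measure.restrict_toMeasurable (measure_ne_top _ _)
  have hpt : ∀ z, (1 : ℝ≥0∞) ≤ T⁻¹ * min 1 (D z) + T ^ 2 * (D z)⁻¹ ^ 2 := by
    intro z
    rcases le_total T (D z) with h | h
    · refine le_trans ?_ le_self_add
      calc (1 : ℝ≥0∞) = T⁻¹ * T := (ENNReal.inv_mul_cancel hT0 hTt).symm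
        _ ≤ T⁻¹ * min 1 (D z) := mul_le_mul' le_rfl (le_min hT1 h)
    · refine le_trans ?_ le_add_self
      rw [← mul_pow]
      refine one_le_pow₀ ?_
      calc (1 : ℝ≥0∞) = T * T⁻¹ := (ENNReal.mul_inv_cancel hT0 hTt).symm
        _ ≤ T * (D z)⁻¹ := by gcongr
  have hm : Measurable fun z => (D z)⁻¹ ^ 2 := hD.inv.pow_const 2
  have hm' : Measurable fun z => min 1 (D z) := measurable_const.min hD
  have h1 : ENNReal.ofReal c₁ ≤ T⁻¹ * ∫⁻ z, min 1 (D z) ∂μ + ENNReal.ofReal (c₁ / 2) := by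
    calc ENNReal.ofReal c₁ ≤ μ s' := by rwa [hs', measure_toMeasurable]
      _ = ∫⁻ _ in s', 1 ∂μ := by simp
      _ ≤ ∫⁻ z in s', (T⁻¹ * min 1 (D z) + T ^ 2 * (D z)⁻¹ ^ 2) ∂μ := lintegral_mono hpt
      _ = T⁻¹ * ∫⁻ z in s', min 1 (D z) ∂μ + T ^ 2 * ∫⁻ z in s, (D z)⁻¹ ^ 2 ∂μ := by
        rw [lintegral_add_left (hm'.const_mul _), lintegral_const_mul _ hm',
          lintegral_const_mul _ hm, hr]
      _ ≤ T⁻¹ * ∫⁻ z, min 1 (D z) ∂μ + T ^ 2 * ENNReal.ofReal c₂ := by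
        gcongr
        exact Measure.restrict_le_self
      _ ≤ _ := by
        gcongr
        rw [hT, ← ENNReal.ofReal_pow ht.le, ← ENNReal.ofReal_mul (by positivity)]
        exact ENNReal.ofReal_le_ofReal ht2
  have h2 : ENNReal.ofReal c₁ = ENNReal.ofReal (c₁ / 2) + ENNReal.ofReal (c₁ / 2) := by
    rw [← ENNReal.ofReal_add (by positivity) (by positivity)]; congr 1; ring
  rw [h2] at h1
  have h3 := (ENNReal.add_le_add_iff_right ENNReal.ofReal_ne_top).1 h1
  calc ENNReal.ofReal (t * (c₁ / 2)) = T * ENNReal.ofReal (c₁ / 2) := ENNReal.ofReal_mul ht.le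
    _ ≤ T * (T⁻¹ * ∫⁻ z, min 1 (D z) ∂μ) := by gcongr
    _ = _ := by rw [← mul_assoc, ENNReal.mul_inv_cancel hT0 hTt, one_mul]

lemma traj2_mem_QSetIter {X Ω : Type*} {Φ : X × Ω → X} {ψ : X → X → Ω → Ω}
    {W : X → Ω → ℝ≥0∞} {K : ℝ≥0∞} {x y : X} {ω : ℕ → Ω} {N : ℕ}
    (h : ∀ j < N, W (traj2 Φ ψ x y ω j).1 (ω j) + W (traj2 Φ ψ x y ω j).2
      (ψ (traj2 Φ ψ x y ω j).1 (traj2 Φ ψ x y ω j).2 (ω j)) ≤ K) :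
    traj2 Φ ψ x y ω N ∈ QSetIter Φ ψ W K x y N := by
  induction N with
  | zero => exact rfl
  | succ N ih =>
    simp only [QSetIter, Set.mem_iUnion, Set.mem_ofPred_eq]
    exact ⟨_, ih fun j hj => h j (by omega), ω N, h N (by omega), rfl⟩

variable {X Ω : Type*} [MeasurableSpace X] [MeasurableSpace Ω] {P : Measure Ω}
  [IsProbabilityMeasure P] {Pinf : Measure (ℕ → Ω)} [IsProbabilityMeasure Pinf]
  {Φ : X × Ω → X} {ψ : X → X → Ω → Ω} {V : X → ℝ≥0∞} {W : X → Ω → ℝ≥0∞}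

lemma lintegral_pi_extSeq [Nonempty Ω]
    (hPinf : ∀ (s : Finset ℕ) (t : ℕ → Set Ω), (∀ i ∈ s, MeasurableSet (t i)) →
      Pinf {ω | ∀ i ∈ s, ω i ∈ t i} = ∏ i ∈ s, P (t i)) {N : ℕ}
    {F : (ℕ → Ω) → ℝ≥0∞} (hF : Measurable F)
    (hk : ∀ ω ω' : ℕ → Ω, (∀ j < N, ω j = ω' j) → F ω = F ω') :
    ∫⁻ f, F (extSeq f) ∂(Measure.pi fun _ : Fin N => P) = ∫⁻ ω, F ω ∂Pinf := by
  have hm : Measurable fun f : Fin N → Ω => F (extSeq f) := hF.comp (measurable_extSeq N)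
  rw [← map_restrict_pinf hPinf N, lintegral_map hm
    (measurable_pi_lambda _ fun i => measurable_pi_apply _)]
  refine lintegral_congr fun ω => hk _ _ fun j hj => ?_
  rw [extSeq_of_lt _ hj]

/-- Probability that `W` exceeds the level `κ` during the first `N` coupled steps. -/
lemma measure_bad_path_le [Nonempty Ω]
    (hPinf : ∀ (s : Finset ℕ) (t : ℕ → Set Ω), (∀ i ∈ s, MeasurableSet (t i)) →
      Pinf {ω | ∀ i ∈ s, ω i ∈ t i} = ∏ i ∈ s, P (t i))
    (hΦ : Measurable Φ) (hψ : Measurable fun p : (X × X) × Ω => ψ p.1.1 p.1.2 p.2)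
    (hV : Measurable V) {a b : ℝ≥0∞} (ha1 : a < 1)
    (hL : ∀ x, ∫⁻ w, V (Φ (x, w)) ∂P ≤ a * V x + b)
    (hW : Measurable fun p : X × Ω => W p.1 p.2)
    {c : ℝ≥0∞} (hWint : ∀ x, ∫⁻ ω, W x ω ∂P ≤ c * V x)
    {CW δ κ : ℝ} (hCW : 0 < CW) (hδ : 1 ≤ δ) (hκ : 0 < κ)
    (hWψ : ∀ x y ω, W x ω + W y (ψ x y ω) ≤
      ENNReal.ofReal CW * (1 + V y + W x ω) ^ δ) {N : ℕ} {x y : X} {k₀ : ℝ≥0∞}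
    (hxy : V x + V y ≤ k₀)
    {ρ : Measure (Fin N → Ω)} (hρ : ρ ≤ Measure.pi fun _ : Fin N => P)
    (hρT : ρ.map (XiFin Φ ψ N x y) ≤ Measure.pi fun _ : Fin N => P) :
    ρ {f | ¬ ∀ j < N, W (traj2 Φ ψ x y (extSeq f) j).1 (extSeq f j) +
        W (traj2 Φ ψ x y (extSeq f) j).2 (ψ (traj2 Φ ψ x y (extSeq f) j).1
          (traj2 Φ ψ x y (extSeq f) j).2 (extSeq f j)) ≤ ENNReal.ofReal κ} ≤
      N * (ENNReal.ofReal ((CW / κ) ^ (1 / δ)) *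
        (1 + (1 + c) * (k₀ + b * (1 - a)⁻¹))) := by
  have hcons := pinf_eq_map_consSeq hPinf
  have hext := measurable_extSeq (Ω := Ω) N
  have hρ1 : ρ Set.univ ≤ 1 := (hρ Set.univ).trans_eq measure_univ
  set b' := b * (1 - a)⁻¹ with hb'
  have hVy : ∀ j < N, ∫⁻ f, V (traj2 Φ ψ x y (extSeq f) j).2 ∂ρ ≤ k₀ + b' := by
    intro j hj
    have hmV : Measurable fun ω => V (traj Φ y ω j) := hV.comp (measurable_traj_right hΦ y j)
    have hmf : Measurable fun f : Fin N → Ω => V (traj Φ y (extSeq f) j) := hmV.comp hext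
    have e : ∀ f : Fin N → Ω, V (traj2 Φ ψ x y (extSeq f) j).2 =
        V (traj Φ y (extSeq (XiFin Φ ψ N x y f)) j) := by
      intro f
      rw [traj2_snd]
      congr 1
      refine traj_congr Φ y j fun l hl => ?_
      rw [extSeq_of_lt _ (hl.trans hj)]
      rfl
    calc ∫⁻ f, V (traj2 Φ ψ x y (extSeq f) j).2 ∂ρ
        = ∫⁻ f, V (traj Φ y (extSeq f) j) ∂(ρ.map (XiFin Φ ψ N x y)) := by
          rw [lintegral_map hmf (measurable_XiFin hΦ hψ N x y)]
          exact lintegral_congr e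
      _ ≤ ∫⁻ f, V (traj Φ y (extSeq f) j) ∂(Measure.pi fun _ : Fin N => P) :=
          lintegral_mono' hρT le_rfl
      _ = ∫⁻ ω, V (traj Φ y ω j) ∂Pinf :=
          lintegral_pi_extSeq hPinf hmV fun ω ω' hω => by
            rw [traj_congr Φ y j fun l hl => hω l (hl.trans hj)]
      _ ≤ V y + b' := lintegral_traj_le hcons hΦ hV ha1 hL j y
      _ ≤ k₀ + b' := by gcongr; exact le_add_self.trans hxy
  have hWx : ∀ j < N, ∫⁻ f, W (traj2 Φ ψ x y (extSeq f) j).1 (extSeq f j) ∂ρ ≤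
      c * (k₀ + b') := by
    intro j hj
    have hmW : Measurable fun ω : ℕ → Ω => W (traj Φ x ω j) (ω j) :=
      hW.comp ((measurable_traj_right hΦ x j).prodMk (measurable_pi_apply j))
    simp only [traj2_fst]
    calc ∫⁻ f, W (traj Φ x (extSeq f) j) (extSeq f j) ∂ρ
        ≤ ∫⁻ f, W (traj Φ x (extSeq f) j) (extSeq f j) ∂(Measure.pi fun _ : Fin N => P) :=
          lintegral_mono' hρ le_rfl
      _ = ∫⁻ ω, W (traj Φ x ω j) (ω j) ∂Pinf :=
          lintegral_pi_extSeq hPinf hmW fun ω ω' hω => by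
            rw [traj_congr Φ x j fun l hl => hω l (hl.trans hj), hω j hj]
      _ ≤ c * ∫⁻ ω, V (traj Φ x ω j) ∂Pinf :=
          lintegral_noise_traj_le hcons hΦ hV hW hWint j x
      _ ≤ c * (V x + b') := by gcongr; exact lintegral_traj_le hcons hΦ hV ha1 hL j x
      _ ≤ c * (k₀ + b') := by gcongr; exact le_self_add.trans hxy
  set E : ℕ → Set (Fin N → Ω) := fun j => {f | ENNReal.ofReal κ <
    W (traj2 Φ ψ x y (extSeq f) j).1 (extSeq f j) +
        W (traj2 Φ ψ x y (extSeq f) j).2 (ψ (traj2 Φ ψ x y (extSeq f) j).1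
          (traj2 Φ ψ x y (extSeq f) j).2 (extSeq f j))} with hE
  have hsub : {f : Fin N → Ω | ¬ ∀ j < N, W (traj2 Φ ψ x y (extSeq f) j).1 (extSeq f j) +
        W (traj2 Φ ψ x y (extSeq f) j).2 (ψ (traj2 Φ ψ x y (extSeq f) j).1
          (traj2 Φ ψ x y (extSeq f) j).2 (extSeq f j)) ≤ ENNReal.ofReal κ} ⊆
      ⋃ j ∈ Finset.range N, E j := by
    intro f hf
    simp only [Set.mem_ofPred_eq, not_forall, not_le] at hf
    obtain ⟨j, hj, hlt⟩ := hf
    simp only [Set.mem_iUnion, Finset.mem_range]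
    exact ⟨j, hj, hlt⟩
  have hEj : ∀ j ∈ Finset.range N, ρ (E j) ≤ ENNReal.ofReal ((CW / κ) ^ (1 / δ)) *
      (1 + (1 + c) * (k₀ + b')) := by
    intro j hj
    have hj := Finset.mem_range.1 hj
    have ht2 : Measurable fun f : Fin N → Ω => traj2 Φ ψ x y (extSeq f) j :=
      (measurable_traj2 hΦ hψ x y j).comp hext
    have hm1 : Measurable fun f : Fin N → Ω => V (traj2 Φ ψ x y (extSeq f) j).2 :=
      hV.comp ht2.snd
    have hm2 : Measurable fun f : Fin N → Ω =>
        W (traj2 Φ ψ x y (extSeq f) j).1 (extSeq f j) :=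
      hW.comp (ht2.fst.prodMk ((measurable_pi_apply j).comp hext))
    refine (measure_noise_gt_le (F := fun f : Fin N → Ω => 1 +
      V (traj2 Φ ψ x y (extSeq f) j).2 + W (traj2 Φ ψ x y (extSeq f) j).1 (extSeq f j))
      ((hm1.const_add 1).add hm2) hCW hδ hκ fun f hf => ?_).trans ?_
    · exact le_trans (le_of_lt hf) (hWψ _ _ _)
    · gcongr
      rw [lintegral_add_right _ hm2, lintegral_add_right _ hm1, lintegral_const, one_mul]
      calc _ ≤ 1 + (k₀ + b') + c * (k₀ + b') := add_le_add (add_le_add hρ1 (hVy j hj)) (hWx j hj)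
        _ = _ := by ring
  calc _ ≤ ρ (⋃ j ∈ Finset.range N, E j) := measure_mono hsub
    _ ≤ ∑ j ∈ Finset.range N, ρ (E j) := measure_biUnion_finset_le _ _
    _ ≤ ∑ _j ∈ Finset.range N, ENNReal.ofReal ((CW / κ) ^ (1 / δ)) *
      (1 + (1 + c) * (k₀ + b')) := Finset.sum_le_sum hEj
    _ = _ := by simp

/-- For all long enough blocks, started from `{Ṽ ≤ K₀}`, the binding construction succeeds with
probability bounded below and leads to well-coupled pairs. -/
lemma block [Nonempty Ω]
    (hPinf : ∀ (s : Finset ℕ) (t : ℕ → Set Ω), (∀ i ∈ s, MeasurableSet (t i)) →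
      Pinf {ω | ∀ i ∈ s, ω i ∈ t i} = ∏ i ∈ s, P (t i))
    (hΦ : Measurable Φ) (hψ : Measurable fun p : (X × X) × Ω => ψ p.1.1 p.1.2 p.2)
    (hV : Measurable V) {a b : ℝ≥0∞} (ha1 : a < 1) (hbfin : b < ⊤)
    (hL : ∀ x, ∫⁻ w, V (Φ (x, w)) ∂P ≤ a * V x + b)
    (hW : Measurable fun p : X × Ω => W p.1 p.2)
    {c : ℝ} (hWint : ∀ x, ∫⁻ ω, W x ω ∂P ≤ ENNReal.ofReal c * V x)
    {CW δ : ℝ} (hCW : 0 < CW) (hδ : 1 ≤ δ)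
    (hWψ : ∀ x y ω, W x ω + W y (ψ x y ω) ≤
      ENNReal.ofReal CW * (1 + V y + W x ω) ^ δ)
    {K₀ ε : ℝ} (hK₀ : 0 < K₀) (hε : 0 < ε)
    (hA4 : ∃ (c₁ c₂ : ℝ) (Γ : X → X → Set (ℕ → Ω)), 0 < c₁ ∧ 0 < c₂ ∧
      ∀ x y : X, V x + V y ≤ ENNReal.ofReal K₀ →
        MeasurableSet (Γ x y) ∧ ENNReal.ofReal c₁ < Pinf (Γ x y) ∧
        ∀ n : ℕ, (∫⁻ f in (fun ω : ℕ → Ω => fun i : Fin n => ω (i : ℕ)) '' Γ x y,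
            (Dfin P Φ ψ n x y f)⁻¹ ^ 2 ∂(Measure.pi fun _ : Fin n => P)) <
          ENNReal.ofReal c₂) :
    ∃ p : ℝ, 0 < p ∧ ∃ N₂ : ℕ, ∀ N, N₂ ≤ N → ∀ x y, V x + V y ≤ ENNReal.ofReal K₀ →
      ∃ ρ : Measure (Fin N → Ω), ρ ≤ Measure.pi (fun _ : Fin N => P) ∧
        ρ.map (XiFin Φ ψ N x y) ≤ Measure.pi (fun _ : Fin N => P) ∧
        (∀ᵐ f ∂ρ, traj2 Φ ψ x y (extSeq f) N ∈
          QSetIter Φ ψ W (ENNReal.ofReal (K₀ * Real.exp (ε * N))) x y N) ∧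
        ENNReal.ofReal p ≤ ρ Set.univ := by
  obtain ⟨c₁, c₂, Γ, hc₁, hc₂, hΓ⟩ := hA4
  have hδ0 : 0 < δ := by linarith
  set t := min 1 (c₁ / (2 * c₂)) with ht
  have ht0 : 0 < t := lt_min one_pos (by positivity)
  have ht1 : t ≤ 1 := min_le_left _ _
  have ht2 : t ^ 2 * c₂ ≤ c₁ / 2 := by
    have h1 : t ≤ c₁ / (2 * c₂) := min_le_right _ _
    rw [le_div_iff₀ (by positivity)] at h1
    nlinarith
  set p := t * (c₁ / 2) / 2 with hp
  have hp0 : 0 < p := by positivity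
  set Z : ℝ≥0∞ := 1 + (1 + ENNReal.ofReal c) * (ENNReal.ofReal K₀ + b * (1 - a)⁻¹) with hZ
  have hZt : Z ≠ ⊤ := by
    have : (1 - a)⁻¹ ≠ ⊤ := by
      rw [Ne, ENNReal.inv_eq_top, tsub_eq_zero_iff_le, not_le]; exact ha1
    rw [hZ]
    finiteness
  -- the probability of a bad path tends to `0` with the length of the block
  have hlim : ∃ N₂ : ℕ, ∀ N : ℕ, N₂ ≤ N →
      (N : ℝ) * ((CW / (K₀ * Real.exp (ε * N))) ^ (1 / δ) * Z.toReal) ≤ p := by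
    have h1 : Filter.Tendsto (fun N : ℕ => (CW / K₀) ^ (1 / δ) * Z.toReal *
        ((N : ℝ) ^ 1 * Real.exp (-(ε / δ) * N))) Filter.atTop (nhds 0) := by
      have h2 : Filter.Tendsto (fun x : ℝ => x ^ 1 * Real.exp (-(ε / δ) * x)) Filter.atTop
          (nhds 0) := by
        have := tendsto_rpow_mul_exp_neg_mul_atTop_nhds_zero 1 (ε / δ) (by positivity)
        simpa using this
      have := (h2.comp tendsto_natCast_atTop_atTop).const_mul ((CW / K₀) ^ (1 / δ) * Z.toReal)
      simpa using this
    obtain ⟨N₂, hN₂⟩ := Filter.eventually_atTop.1 (h1.eventually (gt_mem_nhds hp0))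
    refine ⟨N₂, fun N hN => le_trans (le_of_eq ?_) (hN₂ N hN).le⟩
    have : CW / (K₀ * Real.exp (ε * N)) = CW / K₀ * Real.exp (-(ε * N)) := by
      rw [Real.exp_neg]; field_simp
    rw [this, Real.mul_rpow (by positivity) (by positivity), ← Real.exp_mul,
      show -(ε * N) * (1 / δ) = -(ε / δ) * N by field_simp]
    ring
  obtain ⟨N₂, hN₂⟩ := hlim
  refine ⟨p, hp0, N₂, fun N hN x y hxy => ?_⟩
  obtain ⟨hΓm, hΓ1, hΓ2⟩ := hΓ x y hxy
  have hΞ := measurable_XiFin hΦ hψ N x y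
  obtain ⟨ρ, hρ, hρT, hρE⟩ := exists_subcoupling (Measure.pi fun _ : Fin N => P) hΞ
  set κ := K₀ * Real.exp (ε * N) with hκdef
  have hκ : 0 < κ := by positivity
  have hmass : ENNReal.ofReal (t * (c₁ / 2)) ≤ ρ Set.univ := by
    have h1 := hρE Set.univ MeasurableSet.univ
    rw [Set.preimage_univ, Measure.restrict_univ] at h1
    rw [h1]
    refine le_lintegral_min_one (Measure.measurable_rnDeriv _ _) ht0 ht2 hc₁ ?_ (hΓ2 N).le ht1
    set S := (fun ω : ℕ → Ω => fun i : Fin N => ω (i : ℕ)) '' Γ x y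
    rw [← map_restrict_pinf hPinf N]
    exact hΓ1.le.trans ((measure_mono (Set.subset_preimage_image _ _)).trans
      (Measure.le_map_apply
        (measurable_pi_lambda _ fun i => measurable_pi_apply _).aemeasurable _))
  have hext := measurable_extSeq (Ω := Ω) N
  set Good : Set (Fin N → Ω) := {f | ∀ j < N, W (traj2 Φ ψ x y (extSeq f) j).1 (extSeq f j) +
        W (traj2 Φ ψ x y (extSeq f) j).2 (ψ (traj2 Φ ψ x y (extSeq f) j).1
          (traj2 Φ ψ x y (extSeq f) j).2 (extSeq f j)) ≤ ENNReal.ofReal κ} with hGood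
  have hGm : MeasurableSet Good := by
    have : Good = ⋂ j, ⋂ (_ : j < N), {f | W (traj2 Φ ψ x y (extSeq f) j).1 (extSeq f j) +
        W (traj2 Φ ψ x y (extSeq f) j).2 (ψ (traj2 Φ ψ x y (extSeq f) j).1
          (traj2 Φ ψ x y (extSeq f) j).2 (extSeq f j)) ≤ ENNReal.ofReal κ} := by
      ext f; simp [hGood]
    rw [this]
    refine MeasurableSet.iInter fun j => MeasurableSet.iInter fun _ => ?_
    have ht2 : Measurable fun f : Fin N → Ω => traj2 Φ ψ x y (extSeq f) j :=
      (measurable_traj2 hΦ hψ x y j).comp hext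
    have hej : Measurable fun f : Fin N → Ω => extSeq f j := (measurable_pi_apply j).comp hext
    exact measurableSet_le ((hW.comp (ht2.fst.prodMk hej)).add
      (hW.comp (ht2.snd.prodMk (hψ.comp (ht2.prodMk hej))))) measurable_const
  refine ⟨ρ.restrict Good, Measure.restrict_le_self.trans hρ,
    (Measure.map_mono Measure.restrict_le_self hΞ).trans hρT, ?_, ?_⟩
  · filter_upwards [ae_restrict_mem hGm] with f hf
    exact traj2_mem_QSetIter hf
  rw [Measure.restrict_apply_univ]
  have hbad : ρ Goodᶜ ≤ ENNReal.ofReal p := by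
    have h1 := measure_bad_path_le hPinf hΦ hψ hV ha1 hL hW hWint hCW hδ hκ hWψ hxy hρ hρT
    refine h1.trans ?_
    change (N : ℝ≥0∞) * (ENNReal.ofReal ((CW / κ) ^ (1 / δ)) * Z) ≤ _
    rw [← ENNReal.ofReal_toReal hZt, ← ENNReal.ofReal_mul (by positivity),
      ← ENNReal.ofReal_natCast, ← ENNReal.ofReal_mul (by positivity)]
    exact ENNReal.ofReal_le_ofReal (hN₂ N hN)
  have h2 : ENNReal.ofReal p + ENNReal.ofReal p ≤ ρ Good + ENNReal.ofReal p := by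
    calc ENNReal.ofReal p + ENNReal.ofReal p = ENNReal.ofReal (t * (c₁ / 2)) := by
          rw [← ENNReal.ofReal_add hp0.le hp0.le]; congr 1; rw [hp]; ring
      _ ≤ ρ Set.univ := hmass
      _ = ρ Good + ρ Goodᶜ := (measure_add_measure_compl hGm).symm
      _ ≤ _ := by gcongr
  exact (ENNReal.add_le_add_iff_right ENNReal.ofReal_ne_top).1 h2

end Block

/-! ### Contraction -/

section Contraction

variable {X Ω : Type*} [MeasurableSpace X] [MeasurableSpace Ω] {P : Measure Ω}
  [IsProbabilityMeasure P] {Pinf : Measure (ℕ → Ω)} [IsProbabilityMeasure Pinf]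
  {Φ : X × Ω → X} {ψ : X → X → Ω → Ω} {V : X → ℝ≥0∞} {a b B h M : ℝ≥0∞}
  {G : ℕ → X → X → Prop}

/-- One independent step: both chains are compared with the same constant. -/
lemma enorm_sg_succ_le (hcons : (P.prod Pinf).map (fun p => consSeq p.1 p.2) = Pinf)
    (hΦ : Measurable Φ) (hV : Measurable V)
    (hL : ∀ x, ∫⁻ w, V (Φ (x, w)) ∂P ≤ a * V x + b)
    {g : X → ℝ} (hg : Measurable g) (hgb : ∀ z, |g z| ≤ 1) {m : ℕ} {c : ℝ} {A β : ℝ≥0∞}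
    (hcen : ∀ x, ‖sg Pinf Φ g m x - c‖ₑ ≤ A * (2⁻¹ + β * V x ^ (1 / 2 : ℝ))) (x y : X) :
    ‖sg Pinf Φ g (m + 1) x - sg Pinf Φ g (m + 1) y‖ₑ ≤
      A * (1 + β * (a ^ (1 / 2 : ℝ) * (V x ^ (1 / 2 : ℝ) + V y ^ (1 / 2 : ℝ)) +
        2 * b ^ (1 / 2 : ℝ))) := by
  have hP : ∀ x, Measurable fun ω => Φ (x, ω) := fun x => hΦ.comp measurable_prodMk_left
  have hint : ∀ x, ∫⁻ w, A * (2⁻¹ + β * V (Φ (x, w)) ^ (1 / 2 : ℝ)) ∂P ≤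
      A * (2⁻¹ + β * (a ^ (1 / 2 : ℝ) * V x ^ (1 / 2 : ℝ) + b ^ (1 / 2 : ℝ))) := by
    intro x
    have hm : Measurable fun w => V (Φ (x, w)) := hV.comp (hP x)
    have hm1 : Measurable fun w => V (Φ (x, w)) ^ (1 / 2 : ℝ) := hm.pow_const _
    have hm2 : Measurable fun w => β * V (Φ (x, w)) ^ (1 / 2 : ℝ) := hm1.const_mul _
    rw [lintegral_const_mul _ (hm2.const_add _), lintegral_add_right _ hm2,
      lintegral_const_mul _ hm1, lintegral_const, measure_univ, mul_one]
    gcongr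
    exact lintegral_sqrt_le P hm (hL x)
  rw [sg_succ hcons hΦ hg hgb, sg_succ hcons hΦ hg hgb]
  have key := coupling_ineq (μ := P) (ρ := 0) (Measure.zero_le _) measurable_id
    (by simpa using Measure.zero_le P) (hP x) (hP y) (measurable_sg (Pinf := Pinf) hΦ hg m)
    (abs_sg_le hgb m) hcen
  refine key.trans ?_
  simp only [lintegral_zero_measure, zero_add, Measure.map_zero, Measure.sub_zero]
  refine (add_le_add (hint x) (hint y)).trans (le_of_eq ?_)
  rw [← ENNReal.inv_two_add_inv_two]
  ring

/-- A block of `N` coupled steps: coupled endpoints are good pairs, the rest is compared with a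
constant. -/
lemma StepData.enorm_sg_block_le [Nonempty Ω] (S : StepData P Φ ψ V a b B h M G)
    (hPinf : ∀ (s : Finset ℕ) (t : ℕ → Set Ω), (∀ i ∈ s, MeasurableSet (t i)) →
      Pinf {ω | ∀ i ∈ s, ω i ∈ t i} = ∏ i ∈ s, P (t i))
    {g : X → ℝ} (hg : Measurable g) (hgb : ∀ z, |g z| ≤ 1) {m : ℕ} {c : ℝ} {A β : ℝ≥0∞}
    (hcen : ∀ x, ‖sg Pinf Φ g m x - c‖ₑ ≤ A * (2⁻¹ + β * V x ^ (1 / 2 : ℝ)))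
    {N : ℕ} {E k₀ p : ℝ≥0∞}
    (hgood : ∀ x y, G N x y → ‖sg Pinf Φ g m x - sg Pinf Φ g m y‖ₑ ≤ E * (V x + V y + B))
    {x y : X} (hxy : V x + V y ≤ k₀)
    {ρ : Measure (Fin N → Ω)} (hρ : ρ ≤ Measure.pi fun _ : Fin N => P)
    (hρT : ρ.map (XiFin Φ ψ N x y) ≤ Measure.pi fun _ : Fin N => P)
    (hρG : ∀ᵐ f ∂ρ, G N (traj2 Φ ψ x y (extSeq f) N).1 (traj2 Φ ψ x y (extSeq f) N).2)
    (hp : p ≤ ρ Set.univ) :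
    ‖sg Pinf Φ g (N + m) x - sg Pinf Φ g (N + m) y‖ₑ ≤
      E * (k₀ + 2 * (b * (1 - a)⁻¹) + B) +
        A * ((1 - p) + β * (2 + (k₀ + 2 * (b * (1 - a)⁻¹)))) := by
  have hcons := pinf_eq_map_consSeq hPinf
  set b' := b * (1 - a)⁻¹ with hb'
  set μ := Measure.pi fun _ : Fin N => P with hμ
  have hext := measurable_extSeq (Ω := Ω) N
  have hΞ := measurable_XiFin S.hΦ S.hψ N x y
  have hmt : ∀ x, Measurable fun f : Fin N → Ω => traj Φ x (extSeq f) N := fun x =>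
    (measurable_traj_right S.hΦ x N).comp hext
  have hmV : ∀ x, Measurable fun f : Fin N → Ω => V (traj Φ x (extSeq f) N) := fun x =>
    S.hV.comp (hmt x)
  have hVint : ∀ x, ∫⁻ f, V (traj Φ x (extSeq f) N) ∂μ ≤ V x + b' := by
    intro x
    rw [hμ, lintegral_pi_extSeq hPinf (F := fun ω => V (traj Φ x ω N))
      (S.hV.comp (measurable_traj_right S.hΦ x N))
      fun ω ω' hω => by rw [traj_congr Φ x N fun l hl => hω l hl]]
    exact lintegral_traj_le hcons S.hΦ S.hV S.ha S.hL N x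
  have hsg : ∀ x, sg Pinf Φ g (N + m) x =
      ∫ f, sg Pinf Φ g m (traj Φ x (extSeq f) N) ∂μ := by
    intro x
    have hm : Measurable fun f : Fin N → Ω => sg Pinf Φ g m (traj Φ x (extSeq f) N) :=
      (measurable_sg S.hΦ hg m).comp (hmt x)
    rw [sg_add hcons S.hΦ hg hgb, hμ, ← map_restrict_pinf hPinf N,
      integral_map (measurable_pi_lambda _ fun i => measurable_pi_apply _).aemeasurable
        hm.aestronglyMeasurable]
    refine integral_congr_ae (ae_of_all _ fun ω => ?_)
    simp only
    congr 1
    exact traj_congr Φ x N fun j hj => by rw [extSeq_of_lt _ hj]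
  have e : ∀ f : Fin N → Ω, (traj2 Φ ψ x y (extSeq f) N).2 =
      traj Φ y (extSeq (XiFin Φ ψ N x y f)) N := by
    intro f
    rw [traj2_snd]
    refine traj_congr Φ y N fun l hl => ?_
    rw [extSeq_of_lt _ hl]
    rfl
  rw [hsg, hsg]
  refine (coupling_ineq hρ hΞ hρT (hmt x) (hmt y) (measurable_sg (Pinf := Pinf) S.hΦ hg m)
    (abs_sg_le hgb m) hcen).trans (add_le_add ?_ ?_)
  · have hm : Measurable fun f : Fin N → Ω => V (traj Φ y (extSeq (XiFin Φ ψ N x y f)) N) :=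
      (hmV y).comp hΞ
    have hm' : Measurable fun f : Fin N → Ω => V (traj Φ x (extSeq f) N) +
        V (traj Φ y (extSeq (XiFin Φ ψ N x y f)) N) := (hmV x).add hm
    calc _ ≤ ∫⁻ f, E * (V (traj Φ x (extSeq f) N) +
          V (traj Φ y (extSeq (XiFin Φ ψ N x y f)) N) + B) ∂ρ := by
          refine lintegral_mono_ae ?_
          filter_upwards [hρG] with f hf
          rw [e f, traj2_fst] at hf
          exact hgood _ _ hf
      _ = E * (∫⁻ f, V (traj Φ x (extSeq f) N) ∂ρ +
          ∫⁻ f, V (traj Φ y (extSeq f) N) ∂(ρ.map (XiFin Φ ψ N x y)) + B * ρ Set.univ) := by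
          rw [lintegral_const_mul _ (hm'.add_const _),
            lintegral_add_left hm', lintegral_add_left (hmV x), lintegral_const,
            lintegral_map (hmV y) hΞ]
      _ ≤ E * ((V x + b') + (V y + b') + B * 1) := by
          refine mul_le_mul' le_rfl (add_le_add (add_le_add ?_ ?_) (mul_le_mul' le_rfl ?_))
          · exact (lintegral_mono' hρ le_rfl).trans (hVint x)
          · exact (lintegral_mono' hρT le_rfl).trans (hVint y)
          · exact (hρ Set.univ).trans_eq measure_univ
      _ = E * ((V x + V y) + 2 * b' + B) := by ring
      _ ≤ _ := by gcongr
  · have hres : ∀ (σ : Measure (Fin N → Ω)) (z : X), σ ≤ μ → p ≤ σ Set.univ →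
        ∫⁻ f, A * (2⁻¹ + β * V (traj Φ z (extSeq f) N) ^ (1 / 2 : ℝ)) ∂(μ - σ) ≤
          A * (2⁻¹ * (1 - p) + β * (1 + (V z + b'))) := by
      intro σ z hσ hpσ
      have hm1 : Measurable fun f : Fin N → Ω => V (traj Φ z (extSeq f) N) ^ (1 / 2 : ℝ) :=
        (hmV z).pow_const _
      have hm2 : Measurable fun f : Fin N → Ω => β * V (traj Φ z (extSeq f) N) ^ (1 / 2 : ℝ) :=
        hm1.const_mul _
      rw [lintegral_const_mul _ (hm2.const_add _), lintegral_add_right _ hm2,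
        lintegral_const_mul _ hm1, lintegral_const]
      refine mul_le_mul' le_rfl (add_le_add (mul_le_mul' le_rfl ?_) (mul_le_mul' le_rfl ?_))
      · exact sub_univ_le hσ (le_add_tsub.trans (add_le_add hpσ le_rfl))
      · calc _ ≤ ∫⁻ f, V (traj Φ z (extSeq f) N) ^ (1 / 2 : ℝ) ∂μ :=
              lintegral_mono' Measure.sub_le le_rfl
          _ ≤ ∫⁻ f, (1 + V (traj Φ z (extSeq f) N)) ∂μ :=
              lintegral_mono fun f => sqrt_le_one_add _
          _ = 1 + ∫⁻ f, V (traj Φ z (extSeq f) N) ∂μ := by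
              rw [lintegral_add_right _ (hmV z), lintegral_const, measure_univ, mul_one]
          _ ≤ _ := add_le_add le_rfl (hVint z)
    refine (add_le_add (hres ρ x hρ hp) (hres _ y hρT ?_)).trans ?_
    · rwa [Measure.map_apply hΞ MeasurableSet.univ, Set.preimage_univ]
    · calc _ = A * ((2⁻¹ + 2⁻¹) * (1 - p) + β * (2 + ((V x + V y) + 2 * b'))) := by ring
        _ ≤ _ := by rw [ENNReal.inv_two_add_inv_two, one_mul]; gcongr

/-- Exponential contraction of the semigroup. The weight `1 + β (√V x + √V y)` decreases along one
independent step outside `{Ṽ ≤ k₀}`, and along a coupled block of length `N` inside. -/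
lemma StepData.contraction [Nonempty Ω] (S : StepData P Φ ψ V a b B h M G)
    (hPinf : ∀ (s : Finset ℕ) (t : ℕ → Set Ω), (∀ i ∈ s, MeasurableSet (t i)) →
      Pinf {ω | ∀ i ∈ s, ω i ∈ t i} = ∏ i ∈ s, P (t i))
    {g : X → ℝ} (hg : Measurable g) (hgb : ∀ z, |g z| ≤ 1)
    {k₀ CA c₁ : ℝ≥0∞} (hc₁ : 2 ≤ c₁ * k₀)
    (hdrift : ∀ v, k₀ < v → a * v + 2 * b ≤ h ^ 2 * v)
    (hCA : ∀ i x y m, G i x y → V x + V y ≤ k₀ →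
      ‖sg Pinf Φ g m x - sg Pinf Φ g m y‖ₑ ≤ CA * (h ^ (2 * m) + h ^ (2 * i)))
    {A β q M₃ d p p₄ L : ℝ≥0∞} (hM₃ : M₃ * h + 2 * (2 * M + 1) ≤ M₃ * q) {N : ℕ} (hN : 2 ≤ N)
    (hblock : ∀ x y, V x + V y ≤ k₀ → ∃ ρ : Measure (Fin N → Ω),
      ρ ≤ Measure.pi (fun _ : Fin N => P) ∧
        ρ.map (XiFin Φ ψ N x y) ≤ Measure.pi (fun _ : Fin N => P) ∧
        (∀ᵐ f ∂ρ, G N (traj2 Φ ψ x y (extSeq f) N).1 (traj2 Φ ψ x y (extSeq f) N).2) ∧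
        p ≤ ρ Set.univ)
    (hβ : β ≤ 1) (hq : q ≤ 1) (hhq : h ≤ q ^ 3) (hA : 2 ≤ A * q ^ (3 * N))
    (had : a ^ (1 / 2 : ℝ) + d + d ≤ q) (hbd : 2 * b ^ (1 / 2 : ℝ) ≤ d * k₀ ^ (1 / 2 : ℝ))
    (hqd : 1 ≤ q + β * (d * k₀ ^ (1 / 2 : ℝ)))
    (hL : L = k₀ + 2 * (b * (1 - a)⁻¹) + B)
    (hp₄ : (1 - p) + 3 * p₄ ≤ q ^ N) (hM₃p : M₃ * h ^ (2 * N) * L ≤ p₄)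
    (hβp : β * (2 + L) ≤ p₄) (hAp : (c₁ + 2 * CA) * L ≤ A * p₄) (m : ℕ) (x y : X) :
    ‖sg Pinf Φ g m x - sg Pinf Φ g m y‖ₑ ≤
      A * q ^ m * (1 + β * (V x ^ (1 / 2 : ℝ) + V y ^ (1 / 2 : ℝ))) := by
  have hcons := pinf_eq_map_consSeq hPinf
  induction m using Nat.strong_induction_on generalizing x y with
  | _ n ih =>
  have hcen : ∀ k < n, ∃ c : ℝ, ∀ x, ‖sg Pinf Φ g k x - c‖ₑ ≤
      A * q ^ k * (2⁻¹ + β * V x ^ (1 / 2 : ℝ)) := by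
    intro k hk
    refine exists_center _ _ fun x y => (ih k hk x y).trans (le_of_eq ?_)
    rw [← ENNReal.inv_two_add_inv_two]
    ring
  have hcen' : ∀ k < n, ∃ c : ℝ, ∀ x, ‖sg Pinf Φ g k x - c‖ₑ ≤
      A * q ^ k * (1 + V x ^ (1 / 2 : ℝ)) := by
    intro k hk
    obtain ⟨c, hc⟩ := hcen k hk
    refine ⟨c, fun x => (hc x).trans ?_⟩
    refine mul_le_mul' le_rfl (add_le_add ?_ (mul_le_of_le_one_left' hβ))
    simp
  rcases lt_or_ge n (3 * N) with hn | hn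
  · calc _ ≤ (2 : ℝ≥0∞) := enorm_sg_sub_le hgb n x y
      _ ≤ A * q ^ (3 * N) := hA
      _ ≤ A * q ^ n := mul_le_mul' le_rfl (pow_le_pow_right_of_le_one' hq hn.le)
      _ = A * q ^ n * 1 := (mul_one _).symm
      _ ≤ _ := mul_le_mul' le_rfl le_self_add
  rcases lt_or_ge k₀ (V x + V y) with hv | hv
  · obtain ⟨k, rfl⟩ : ∃ k, n = k + 1 := ⟨n - 1, by omega⟩
    obtain ⟨c, hc⟩ := hcen k (by omega)
    refine (enorm_sg_succ_le hcons S.hΦ S.hV S.hL hg hgb hc x y).trans ?_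
    set U := V x ^ (1 / 2 : ℝ) + V y ^ (1 / 2 : ℝ) with hU
    have hkU : k₀ ^ (1 / 2 : ℝ) ≤ U :=
      (ENNReal.rpow_le_rpow hv.le (by norm_num)).trans
        (ENNReal.rpow_add_le_add_rpow _ _ (by norm_num) (by norm_num))
    rw [pow_succ, ← mul_assoc, mul_assoc (A * q ^ k)]
    refine mul_le_mul' le_rfl ?_
    calc 1 + β * (a ^ (1 / 2 : ℝ) * U + 2 * b ^ (1 / 2 : ℝ))
        ≤ (q + β * (d * U)) + β * (a ^ (1 / 2 : ℝ) * U + d * U) := by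
          refine add_le_add (hqd.trans ?_) ?_
          · gcongr
          · exact mul_le_mul' le_rfl (add_le_add le_rfl
              (hbd.trans (mul_le_mul' le_rfl hkU)))
      _ = q + (a ^ (1 / 2 : ℝ) + d + d) * (β * U) := by ring
      _ ≤ q + q * (β * U) := by gcongr
      _ = _ := by ring
  · obtain ⟨ρ, hρ, hρT, hρG, hρp⟩ := hblock x y hv
    obtain ⟨k, rfl⟩ : ∃ k, n = N + k := ⟨n - N, by omega⟩
    obtain ⟨c, hc⟩ := hcen k (by omega)
    have hgood : ∀ x y, G N x y → ‖sg Pinf Φ g k x - sg Pinf Φ g k y‖ₑ ≤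
        (A * M₃ * q ^ k * h ^ (2 * N) + (c₁ + 2 * CA) * q ^ k) * (V x + V y + B) := by
      intro x y hG
      have h1 := S.good_bound hcons hg hgb hc₁ hdrift hCA hM₃ hcen' (s := (N + k) / 3)
        (by omega) (by omega) hG
      rw [Nat.add_sub_cancel_left] at h1
      refine h1.trans ?_
      rw [add_mul (A * M₃ * q ^ k * h ^ (2 * N))]
      refine add_le_add le_rfl (mul_le_mul' (mul_le_mul' le_rfl ?_) le_rfl)
      calc h ^ ((N + k) / 3) ≤ (q ^ 3) ^ ((N + k) / 3) := pow_le_pow_left' hhq _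
        _ = q ^ (3 * ((N + k) / 3)) := (pow_mul _ _ _).symm
        _ ≤ q ^ k := pow_le_pow_right_of_le_one' hq (by omega)
    refine (S.enorm_sg_block_le hPinf hg hgb hc hgood hv hρ hρT hρG hρp).trans ?_
    rw [← hL]
    have hβL : β * (2 + (k₀ + 2 * (b * (1 - a)⁻¹))) ≤ p₄ := by
      refine le_trans ?_ hβp
      rw [hL]
      exact mul_le_mul' le_rfl (add_le_add le_rfl le_self_add)
    calc _ = A * q ^ k * (M₃ * h ^ (2 * N) * L) + q ^ k * ((c₁ + 2 * CA) * L) +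
          A * q ^ k * ((1 - p) + β * (2 + (k₀ + 2 * (b * (1 - a)⁻¹)))) := by ring
      _ ≤ A * q ^ k * p₄ + q ^ k * (A * p₄) + A * q ^ k * ((1 - p) + p₄) := by gcongr
      _ = A * q ^ k * ((1 - p) + 3 * p₄) := by ring
      _ ≤ A * q ^ k * q ^ N := by gcongr
      _ = A * q ^ (N + k) * 1 := by ring
      _ ≤ _ := mul_le_mul' le_rfl le_self_add

end Contraction

/-! ### Choice of constants -/

section Constants

lemma exists_rate {t : ℝ} (ht : t < 1) : ∃ η : ℝ, 0 < η ∧ η < 1 ∧ t ≤ η ^ 4 := by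
  have h1 : Filter.Tendsto (fun η : ℝ => η ^ 4) (nhdsWithin 1 (Set.Iio 1)) (nhds 1) := by
    have : Filter.Tendsto (fun η : ℝ => η ^ 4) (nhds 1) (nhds (1 ^ 4)) :=
      (continuous_pow 4).tendsto 1
    rw [one_pow] at this
    exact this.mono_left nhdsWithin_le_nhds
  have h2 : ∀ᶠ η : ℝ in nhdsWithin 1 (Set.Iio 1), 0 < η :=
    nhdsWithin_le_nhds (lt_mem_nhds one_pos)
  obtain ⟨η, hη, hη0, hη1⟩ :=
    ((h1.eventually (lt_mem_nhds ht)).and (h2.and self_mem_nhdsWithin)).exists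
  exact ⟨η, hη0, hη1, hη.le⟩

lemma exists_gap {t : ℝ≥0∞} (ht : t < 1) : ∃ d : ℝ≥0∞, d ≠ 0 ∧ d ≠ ⊤ ∧ t + d < 1 := by
  have he : 1 - t ≠ 0 := (tsub_pos_of_lt ht).ne'
  have het : 1 - t ≠ ⊤ := (tsub_le_self.trans_lt ENNReal.one_lt_top).ne
  refine ⟨(1 - t) / 2, by simpa using he, ENNReal.div_ne_top het two_ne_zero, ?_⟩
  calc t + (1 - t) / 2 < t + (1 - t) :=
        ENNReal.add_lt_add_left (ht.trans ENNReal.one_lt_top).ne (ENNReal.half_lt_self he het)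
    _ = 1 := add_tsub_cancel_of_le ht.le

/-- A level above which both `V` and `√V` are contracted by one step. -/
lemma exists_level {a b e d : ℝ≥0∞} (hb : b ≠ ⊤) (he0 : e ≠ 0) (he : e ≠ ⊤) (hd0 : d ≠ 0)
    (hd : d ≠ ⊤) : ∃ K₀ : ℝ, 1 ≤ K₀ ∧
      (∀ v, ENNReal.ofReal K₀ < v → a * v + 2 * b ≤ (a + e) * v) ∧
      2 * b ^ (1 / 2 : ℝ) ≤ d * ENNReal.ofReal K₀ ^ (1 / 2 : ℝ) := by
  set z := 2 * b ^ (1 / 2 : ℝ) / d with hz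
  set k := 1 + 2 * b / e + z ^ 2 with hk
  have hb2 : b ^ (1 / 2 : ℝ) ≠ ⊤ := ENNReal.rpow_ne_top_of_nonneg (by norm_num) hb
  have hzt : z ≠ ⊤ := ENNReal.div_ne_top (by finiteness) hd0
  have hkt : k ≠ ⊤ := by
    have : 2 * b / e ≠ ⊤ := ENNReal.div_ne_top (by finiteness) he0
    rw [hk]; finiteness
  have hk1 : 1 ≤ k := by rw [hk, add_assoc]; exact le_self_add
  refine ⟨k.toReal, ?_, ?_, ?_⟩
  · rw [← ENNReal.toReal_one]
    exact ENNReal.toReal_mono hkt hk1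
  · intro v hv
    rw [ENNReal.ofReal_toReal hkt] at hv
    rw [add_mul]
    refine add_le_add le_rfl ?_
    calc 2 * b = e * (2 * b / e) := (ENNReal.mul_div_cancel he0 he).symm
      _ ≤ e * v := by
        refine mul_le_mul' le_rfl (le_trans ?_ hv.le)
        rw [hk, add_comm 1, add_assoc]; exact le_self_add
  · rw [ENNReal.ofReal_toReal hkt]
    calc 2 * b ^ (1 / 2 : ℝ) = d * z := (ENNReal.mul_div_cancel hd0 hd).symm
      _ = d * (z ^ 2) ^ (1 / 2 : ℝ) := by
        rw [← ENNReal.rpow_natCast, ← ENNReal.rpow_mul]; norm_num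
      _ ≤ _ := by
        refine mul_le_mul' le_rfl (ENNReal.rpow_le_rpow ?_ (by norm_num))
        exact le_add_self

lemma exists_time {K₀ ε γ₂ ζ : ℝ} (hK : 0 < K₀) (hγ₂ : 0 < γ₂) (hζ : 0 < ζ)
    (hε : ε = γ₂ / (2 * ζ)) :
    ∃ N : ℕ, ∀ i : ℕ, N ≤ i → ζ * Real.log (1 + K₀ * Real.exp (ε * i)) / γ₂ < (i : ℝ) := by
  obtain ⟨N, hN⟩ := exists_nat_gt (2 * (ζ * Real.log (1 + K₀) / γ₂))
  refine ⟨N, fun i hi => ?_⟩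
  have hi' : (N : ℝ) ≤ i := by exact_mod_cast hi
  have hε0 : 0 < ε := by rw [hε]; positivity
  have e1 : 1 ≤ Real.exp (ε * i) := Real.one_le_exp (by positivity)
  have h1 : Real.log (1 + K₀ * Real.exp (ε * i)) ≤ Real.log (1 + K₀) + ε * i := by
    rw [← Real.log_exp (ε * i), ← Real.log_mul (by positivity) (by positivity), Real.log_exp]
    exact Real.log_le_log (by positivity) (by nlinarith)
  calc ζ * Real.log (1 + K₀ * Real.exp (ε * i)) / γ₂
      ≤ ζ * (Real.log (1 + K₀) + ε * i) / γ₂ := by gcongr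
    _ = ζ * Real.log (1 + K₀) / γ₂ + i / 2 := by rw [hε]; field_simp
    _ < i := by linarith

lemma exists_B {b h : ℝ≥0∞} (hb : b ≠ ⊤) (hh : h < 1) :
    ∃ B : ℝ≥0∞, B ≠ ⊤ ∧ 1 ≤ B ∧ b ≤ B ∧ h * (2 * b + B) ≤ B := by
  have h0 : 1 - h ≠ 0 := (tsub_pos_of_lt hh).ne'
  have ht : 1 - h ≠ ⊤ := (tsub_le_self.trans_lt ENNReal.one_lt_top).ne
  have hd : 2 * b / (1 - h) ≠ ⊤ := ENNReal.div_ne_top (by finiteness) h0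
  set B := 1 + b + 2 * b / (1 - h) with hB
  refine ⟨B, by rw [hB]; finiteness, by rw [hB, add_assoc]; exact le_self_add, ?_, ?_⟩
  · rw [hB, add_comm 1, add_assoc]; exact le_self_add
  · calc h * (2 * b + B) = h * (2 * b) + h * B := mul_add _ _ _
      _ ≤ (1 - h) * B + h * B := by
        refine add_le_add ?_ le_rfl
        calc h * (2 * b) ≤ 2 * b := mul_le_of_le_one_left' hh.le
          _ = (1 - h) * (2 * b / (1 - h)) := (ENNReal.mul_div_cancel h0 ht).symm
          _ ≤ (1 - h) * B := mul_le_mul' le_rfl le_add_self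
      _ = B := by rw [← add_mul, tsub_add_cancel_of_le hh.le, one_mul]

/-- All conditions on the rate `q` hold for `q` close to `1`. -/
lemma exists_q {h s t u p : ℝ≥0∞} (hh : h < 1) (hs : s < 1) (ht : t < 1) (hu : u ≠ 0)
    (hp : p < 1) (N : ℕ) : ∃ r : ℝ, 0 < r ∧ r < 1 ∧ h ≤ ENNReal.ofReal r ^ 3 ∧
      s ≤ ENNReal.ofReal r ∧ t ≤ ENNReal.ofReal r ∧ 1 ≤ ENNReal.ofReal r + u ∧
      p ≤ ENNReal.ofReal r ^ N := by
  have hT : Filter.Tendsto (fun r : ℝ => ENNReal.ofReal r) (nhdsWithin 1 (Set.Iio 1)) (nhds 1) := by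
    have := ENNReal.continuous_ofReal.tendsto 1
    rw [ENNReal.ofReal_one] at this
    exact this.mono_left nhdsWithin_le_nhds
  have hpow : ∀ n : ℕ, Filter.Tendsto (fun r : ℝ => ENNReal.ofReal r ^ n)
      (nhdsWithin 1 (Set.Iio 1)) (nhds 1) := fun n => by
    have := ((ENNReal.continuous_pow n).tendsto 1).comp hT
    rwa [one_pow] at this
  have hadd : Filter.Tendsto (fun r : ℝ => ENNReal.ofReal r + u)
      (nhdsWithin 1 (Set.Iio 1)) (nhds (1 + u)) := hT.add tendsto_const_nhds
  have h2 : ∀ᶠ r : ℝ in nhdsWithin 1 (Set.Iio 1), 0 < r :=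
    nhdsWithin_le_nhds (lt_mem_nhds one_pos)
  have h1u : 1 < 1 + u := ENNReal.lt_add_right ENNReal.one_ne_top hu
  have h8 : ∀ᶠ r : ℝ in nhdsWithin 1 (Set.Iio 1), r < 1 := self_mem_nhdsWithin
  obtain ⟨r, h0, h1, h3, h4, h5, h6, h7⟩ := (h2.and (h8.and
    (((hpow 3).eventually (lt_mem_nhds hh)).and ((hT.eventually (lt_mem_nhds hs)).and
      ((hT.eventually (lt_mem_nhds ht)).and ((hadd.eventually (lt_mem_nhds h1u)).and
        ((hpow N).eventually (lt_mem_nhds hp)))))))).exists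
  exact ⟨r, h0, h1, h3.le, h4.le, h5.le, h6.le, h7.le⟩

end Constants

/-- Under Assumptions A1–A5 on the random dynamical system `Φ` with
binding maps `ψ_{x,y}`, there are `γ, C > 0` such that for all `x, y` and all `n > 0`,
`‖Pⁿ_x − Pⁿ_y‖_L ≤ C (1 + V(x) + V(y)) e^{−γn}` in the dual Lipschitz norm (expressed by
testing against all `g` with `sup|g| + Lip(g) ≤ 1`). -/
theorem stmt0
    -- X is a Polish space
    {X Ω : Type*} [MetricSpace X] [CompleteSpace X] [TopologicalSpace.SeparableSpace X]
    [MeasurableSpace X] [BorelSpace X]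
    [MeasurableSpace Ω] [Nonempty Ω]
    -- one-step noise space and infinite product noise
    (P : Measure Ω) [IsProbabilityMeasure P]
    (Pinf : Measure (ℕ → Ω)) [IsProbabilityMeasure Pinf]
    (hPinf : ∀ (s : Finset ℕ) (t : ℕ → Set Ω), (∀ i ∈ s, MeasurableSet (t i)) →
      Pinf {ω | ∀ i ∈ s, ω i ∈ t i} = ∏ i ∈ s, P (t i))
    -- the RDS
    (Φ : X × Ω → X) (hΦ : Measurable Φ)
    -- the binding maps, their inverses, and equivalence of the transported noise
    (ψ ψinv : X → X → Ω → Ω)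
    (hψ : Measurable fun p : (X × X) × Ω => ψ p.1.1 p.1.2 p.2)
    (hψinv : Measurable fun p : (X × X) × Ω => ψinv p.1.1 p.1.2 p.2)
    (hinv₁ : ∀ x y ω, ψinv x y (ψ x y ω) = ω)
    (hinv₂ : ∀ x y ω, ψ x y (ψinv x y ω) = ω)
    (hequiv : ∀ x y, P.map (ψ x y) ≪ P ∧ P ≪ P.map (ψ x y))
    -- Assumption A1 (Lyapunov structure)
    (V : X → ℝ≥0∞) (hV : Measurable V)
    (a b : ℝ≥0∞) (ha0 : 0 < a) (ha1 : a < 1) (hb0 : 0 < b) (hbfin : b < ⊤)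
    (hLyap : ∀ x, V x < ⊤ → ∫⁻ ω, V (Φ (x, ω)) ∂P ≤ a * V x + b)
    (hfin : ∀ x, P {ω | V (Φ (x, ω)) < ⊤} = 1)
    -- Assumption A2 (the function W)
    (W : X → Ω → ℝ≥0∞) (hW : Measurable fun p : X × Ω => W p.1 p.2)
    (hessInf : ∀ x, essInf (fun ω => W x ω) P = V x)
    (c : ℝ) (hc : 0 < c)
    (hWint : ∀ x, ∫⁻ ω, W x ω ∂P ≤ ENNReal.ofReal c * V x)
    (CW δ : ℝ) (hCW : 0 < CW) (hδ : 1 ≤ δ)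
    (hWψ : ∀ x y ω, W x ω + W y (ψ x y ω) ≤
      ENNReal.ofReal CW * (1 + V y + W x ω) ^ δ)
    (hWψinv : ∀ x y ω, W x (ψinv x y ω) + W y ω ≤
      ENNReal.ofReal CW * (1 + V x + W y ω) ^ δ)
    -- Assumption A3 (exponential binding, in the dual Lipschitz norm)
    (γ₁ : ℝ) (hγ₁ : 0 < γ₁)
    (hA3 : ∀ K : ℝ, 0 < K → ∃ CK : ℝ, ∀ x y : X, V x + V y ≤ ENNReal.ofReal K →
      ∀ n : ℕ, ∀ (g : X → ℝ) (cb cl : ℝ), (∀ z, |g z| ≤ cb) →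
        (∀ z w, |g z - g w| ≤ cl * dist z w) → cb + cl ≤ 1 →
        (∫ z, g z ∂((QInf Pinf Φ ψ x y).map fun q : (ℕ → X) × (ℕ → X) => q.1 n)) -
            (∫ z, g z ∂((QInf Pinf Φ ψ x y).map fun q : (ℕ → X) × (ℕ → X) => q.2 n)) ≤
          CK * Real.exp (-γ₁ * n))
    -- Assumption A4 (second-moment control of the inverse densities)
    (hA4 : ∀ K : ℝ, 0 < K → ∃ (c₁ c₂ : ℝ) (Γ : X → X → Set (ℕ → Ω)), 0 < c₁ ∧ 0 < c₂ ∧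
      ∀ x y : X, V x + V y ≤ ENNReal.ofReal K →
        MeasurableSet (Γ x y) ∧ ENNReal.ofReal c₁ < Pinf (Γ x y) ∧
        ∀ n : ℕ, (∫⁻ f in (fun ω : ℕ → Ω => fun i : Fin n => ω (i : ℕ)) '' Γ x y,
            (Dfin P Φ ψ n x y f)⁻¹ ^ 2 ∂(Measure.pi fun _ : Fin n => P)) <
          ENNReal.ofReal c₂)
    -- Assumption A5 (coupled trajectories tend to stay coupled)
    (C₂ γ₂ ζ : ℝ) (hC₂ : 0 < C₂) (hγ₂ : 0 < γ₂) (hζ : 0 < ζ)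
    (hA5 : ∀ K : ℝ, 0 < K → ∀ x₀ y₀ : X, V x₀ + V y₀ ≤ ENNReal.ofReal K →
      ∀ (n : ℕ) (x y : X), (x, y) ∈ QSetIter Φ ψ W (ENNReal.ofReal K) x₀ y₀ n →
        ζ * Real.log (1 + K) / γ₂ < (n : ℝ) →
        (∫⁻ ω in {ω | W x (ψinv x y ω) + W y ω ≤ ENNReal.ofReal K},
            ENNReal.ofReal ((1 - ((P.map (ψ x y)).rnDeriv P ω).toReal) ^ 2) ∂P) ≤
          ENNReal.ofReal (C₂ * Real.exp (-γ₂ * n) * (1 + K) ^ ζ)) :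
    -- Conclusion: exponential closeness of transition probabilities in the
    -- dual Lipschitz norm
    ∃ γ C : ℝ, 0 < γ ∧ 0 < C ∧
      ∀ x y : X, ∀ n : ℕ, 0 < n →
        ∀ (g : X → ℝ) (cb cl : ℝ), (∀ z, |g z| ≤ cb) →
          (∀ z w, |g z - g w| ≤ cl * dist z w) → cb + cl ≤ 1 →
          ENNReal.ofReal ((∫ z, g z ∂(Pinf.map fun ω => traj Φ x ω n)) -
              ∫ z, g z ∂(Pinf.map fun ω => traj Φ y ω n)) ≤
            ENNReal.ofReal (C * Real.exp (-γ * n)) * (1 + V x + V y) := by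
  have hδ0 : 0 < δ := by linarith
  have hL : ∀ x, ∫⁻ w, V (Φ (x, w)) ∂P ≤ a * V x + b := by
    intro x
    rcases eq_or_ne (V x) ⊤ with hx | hx
    · rw [hx, ENNReal.mul_top ha0.ne', top_add]; exact le_top
    · exact hLyap x hx.lt_top
  have hcons := pinf_eq_map_consSeq hPinf
  set ε := γ₂ / (2 * ζ) with hε
  have hε0 : 0 < ε := by positivity
  -- the rate `η` of all error terms
  have hat : a ≠ ⊤ := (ha1.trans ENNReal.one_lt_top).ne
  have har : a.toReal < 1 := by
    rw [← ENNReal.toReal_one]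
    exact (ENNReal.toReal_lt_toReal hat ENNReal.one_ne_top).2 ha1
  obtain ⟨η, hη0, hη1, hη⟩ := exists_rate
    (t := max (max ((1 + a.toReal) / 2) (Real.exp (-γ₁)))
      (max (Real.exp (-(ε / δ))) (Real.exp (-(γ₂ / 4)))))
    (max_lt (max_lt (by linarith) (by simpa using hγ₁))
      (max_lt (by simpa using div_pos hε0 hδ0) (by simpa using hγ₂)))
  have hη2 : η ^ 4 ≤ η ^ 2 := pow_le_pow_of_le_one hη0.le hη1.le (by norm_num)
  have hηa : (1 + a.toReal) / 2 ≤ η ^ 4 := ((le_max_left _ _).trans (le_max_left _ _)).trans hη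
  have hηγ₁ : Real.exp (-γ₁) ≤ η ^ 4 := ((le_max_right _ _).trans (le_max_left _ _)).trans hη
  have hηε : Real.exp (-(ε / δ)) ≤ η ^ 4 :=
    ((le_max_left _ _).trans (le_max_right _ _)).trans hη
  have hηγ₂ : Real.exp (-(γ₂ / 4)) ≤ η ^ 4 :=
    ((le_max_right _ _).trans (le_max_right _ _)).trans hη
  set h := ENNReal.ofReal η with hh
  have hh1 : h < 1 := by rw [hh, ENNReal.ofReal_lt_one]; exact hη1
  have hh0 : h ≠ 0 := by simpa [hh] using hη0
  have hah : a < h ^ 2 := by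
    rw [hh, ← ENNReal.ofReal_pow hη0.le, ENNReal.lt_ofReal_iff_toReal_lt hat]
    linarith
  -- the sublevel set `{Ṽ ≤ K₀}`
  have ha2 : a ^ (1 / 2 : ℝ) < 1 := ENNReal.rpow_lt_one ha1 (by norm_num)
  obtain ⟨d₂, hd₂0, hd₂t, hd₂⟩ := exists_gap ha2
  set d := d₂ / 2 with hd
  have hd0 : d ≠ 0 := by simpa [hd] using hd₂0
  have hdt : d ≠ ⊤ := ENNReal.div_ne_top hd₂t two_ne_zero
  have had : a ^ (1 / 2 : ℝ) + d + d < 1 := by rwa [add_assoc, hd, ENNReal.add_halves]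
  have he0 : h ^ 2 - a ≠ 0 := (tsub_pos_of_lt hah).ne'
  have het : h ^ 2 - a ≠ ⊤ :=
    (tsub_le_self.trans_lt (ENNReal.pow_lt_top ENNReal.ofReal_lt_top)).ne
  obtain ⟨K₀, hK₀1, hdrift, hbd⟩ := exists_level (a := a) hbfin.ne he0 het hd0 hdt
  rw [add_tsub_cancel_of_le hah.le] at hdrift
  have hK₀ : 0 < K₀ := by linarith
  set k₀ := ENNReal.ofReal K₀ with hk₀
  have hk₀t : k₀ ≠ ⊤ := ENNReal.ofReal_ne_top
  have hk₀1 : 1 ≤ k₀ := by rw [hk₀, ENNReal.one_le_ofReal]; exact hK₀1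
  obtain ⟨B, hBt, hB1, hbB, hBh⟩ := exists_B hbfin.ne hh1
  -- good pairs and the one-step coupling between them
  obtain ⟨N₁, hN₁⟩ := exists_time hK₀ hγ₂ hζ hε
  set G := GoodPair Φ ψ W V K₀ ε N₁ with hG
  set M := ENNReal.ofReal ((CW / K₀) ^ (1 / δ) * (1 + c) + 1 + C₂ * (1 + K₀) ^ ζ) with hM
  have hMt : M ≠ ⊤ := ENNReal.ofReal_ne_top
  have S : StepData P Φ ψ V a b B h M G :=
    { hΦ := hΦ, hψ := hψ, hV := hV, ha := ha1, hL := hL, one_le_B := hB1, b_le_B := hbB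
      hB := hBh, h0 := hh0, h1 := hh1.le
      step := fun i x y hGi => one_step hψ hψinv hinv₁ hW hc hWint hCW hδ hWψinv hC₂ hγ₂ hζ hA5
        hK₀ hε hη0 hηε hηγ₂ hN₁ hGi }
  have h1h0 : 1 - h ≠ 0 := (tsub_pos_of_lt hh1).ne'
  have h1ht : 1 - h ≠ ⊤ := (tsub_le_self.trans_lt ENNReal.one_lt_top).ne
  set M₅ := M / (1 - h) with hM₅def
  have hM₅t : M₅ ≠ ⊤ := ENNReal.div_ne_top hMt h1h0
  have hM₅ : M₅ * h + M ≤ M₅ := by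
    calc M₅ * h + M = M₅ * h + (1 - h) * M₅ := by rw [ENNReal.mul_div_cancel h1h0 h1ht]
      _ = M₅ * (h + (1 - h)) := by ring
      _ = M₅ := by rw [add_tsub_cancel_of_le hh1.le, mul_one]
      _ ≤ M₅ := le_rfl
  -- the exponential binding of good pairs in the sublevel set
  obtain ⟨CK, hCK⟩ := hA3 K₀ hK₀
  set CA := ENNReal.ofReal |CK| + 4 * M₅ * (k₀ + B) with hCAdef
  have hCAt : CA ≠ ⊤ := by rw [hCAdef]; finiteness
  have hCA : ∀ g : X → ℝ, Measurable g → (∀ z, |g z| ≤ 1) → ∀ cb cl : ℝ, (∀ z, |g z| ≤ cb) →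
      (∀ z w, |g z - g w| ≤ cl * dist z w) → cb + cl ≤ 1 →
      ∀ i x y m, G i x y → V x + V y ≤ k₀ →
      ‖sg Pinf Φ g m x - sg Pinf Φ g m y‖ₑ ≤ CA * (h ^ (2 * m) + h ^ (2 * i)) := by
    intro g hg hgb cb cl h1 h2 h3 i x y m hGi hv
    have e1 := hCK x y hv m g cb cl h1 h2 h3
    have e2 := hCK x y hv m (fun z => -g z) cb cl (fun z => by rw [abs_neg]; exact h1 z)
      (fun z w => by
        rw [show -g z - -g w = -(g z - g w) by ring, abs_neg]; exact h2 z w) h3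
    refine (S.binding hcons hM₅ hGi hg hgb e1 e2).trans ?_
    have e3 : ENNReal.ofReal (CK * Real.exp (-γ₁ * m)) ≤ ENNReal.ofReal |CK| * h ^ (2 * m) := by
      rw [hh, ← ENNReal.ofReal_pow hη0.le, ← ENNReal.ofReal_mul (abs_nonneg _)]
      refine ENNReal.ofReal_le_ofReal ?_
      have : Real.exp (-γ₁ * m) ≤ η ^ (2 * m) := by
        rw [mul_comm, Real.exp_nat_mul, pow_mul]
        exact pow_le_pow_left₀ (Real.exp_pos _).le (hηγ₁.trans hη2) _
      exact mul_le_mul (le_abs_self _) this (Real.exp_pos _).le (abs_nonneg _)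
    calc _ ≤ ENNReal.ofReal |CK| * h ^ (2 * m) + 4 * (M₅ * h ^ (2 * i) * (k₀ + B)) :=
          add_le_add e3 (mul_le_mul' le_rfl (mul_le_mul' le_rfl (add_le_add hv le_rfl)))
      _ = ENNReal.ofReal |CK| * h ^ (2 * m) + 4 * M₅ * (k₀ + B) * h ^ (2 * i) := by ring
      _ ≤ CA * h ^ (2 * m) + CA * h ^ (2 * i) :=
          add_le_add (mul_le_mul' le_self_add le_rfl) (mul_le_mul' le_add_self le_rfl)
      _ = _ := by ring
  -- `M₃` only needs `q` to stay away from `h`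
  obtain ⟨e', he'0, he't, he'⟩ := exists_gap hh1
  set M₃ := 2 * (2 * M + 1) / e' with hM₃def
  have hM₃t : M₃ ≠ ⊤ := ENNReal.div_ne_top (by finiteness) he'0
  set L := k₀ + 2 * (b * (1 - a)⁻¹) + B with hLdef
  have hLt : L ≠ ⊤ := by
    have h1 : (1 - a)⁻¹ ≠ ⊤ := by
      rw [Ne, ENNReal.inv_eq_top, tsub_eq_zero_iff_le, not_le]; exact ha1
    have h2 := hbfin.ne
    rw [hLdef]
    finiteness
  -- success probability and length of the initial block
  obtain ⟨p₀, hp₀, N₂, hblock⟩ := block hPinf hΦ hψ hV ha1 hbfin hL hW hWint hCW hδ hWψ hK₀ hε0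
    (hA4 K₀ hK₀)
  set p := min p₀ 1 with hp
  have hp0 : 0 < p := lt_min hp₀ one_pos
  have hp1 : p ≤ 1 := min_le_right _ _
  set p₄ := ENNReal.ofReal (p / 4) with hp₄
  have hp₄0 : p₄ ≠ 0 := by simp [hp₄, hp0]
  have hp₄t : p₄ ≠ ⊤ := ENNReal.ofReal_ne_top
  obtain ⟨N, hNN₁, hNN₂, hN2, hN⟩ : ∃ N, N₁ ≤ N ∧ N₂ ≤ N ∧ 2 ≤ N ∧
      M₃ * h ^ (2 * N) * L ≤ p₄ := by
    have h1 : Filter.Tendsto (fun N : ℕ => M₃ * h ^ (2 * N) * L) Filter.atTop (nhds 0) := by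
      have h2 : Filter.Tendsto (fun N : ℕ => h ^ (2 * N)) Filter.atTop (nhds 0) :=
        (ENNReal.tendsto_pow_atTop_nhds_zero_of_lt_one hh1).comp
          (Filter.tendsto_id.const_mul_atTop' two_pos)
      have h3 := ENNReal.Tendsto.mul_const
        (ENNReal.Tendsto.const_mul h2 (Or.inr hM₃t)) (Or.inr hLt)
      simpa using h3
    obtain ⟨N, h4, h5⟩ := ((h1.eventually (gt_mem_nhds (pos_iff_ne_zero.2 hp₄0))).and
      (Filter.eventually_ge_atTop (N₁ + N₂ + 2))).exists
    exact ⟨N, by omega, by omega, by omega, h4.le⟩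
  -- the weight `β` of the Lyapunov part and the rate `q`
  set β := min 1 (p₄ / (2 + L)) with hβ
  have h2L : 2 + L ≠ ⊤ := by finiteness
  have hβ0 : β ≠ 0 := by
    have : 0 < p₄ / (2 + L) := ENNReal.div_pos hp₄0 h2L
    exact (lt_min one_pos this).ne'
  have hβp : β * (2 + L) ≤ p₄ :=
    (mul_le_mul' (min_le_right _ _) le_rfl).trans_eq
      (ENNReal.div_mul_cancel (by simp) h2L)
  have hpN : 1 - ENNReal.ofReal p + 3 * p₄ = ENNReal.ofReal (1 - p / 4) := by
    rw [hp₄, ← ENNReal.ofReal_one, ← ENNReal.ofReal_sub _ hp0.le, ← ENNReal.ofReal_ofNat 3,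
      ← ENNReal.ofReal_mul (by norm_num), ← ENNReal.ofReal_add (by linarith) (by positivity)]
    congr 1
    ring
  obtain ⟨r, hr0, hr1, hq1, hq2, hq3, hq4, hq5⟩ := exists_q (h := h)
    (s := a ^ (1 / 2 : ℝ) + d + d) (t := h + e') (u := β * (d * k₀ ^ (1 / 2 : ℝ)))
    (p := 1 - ENNReal.ofReal p + 3 * p₄) hh1 had he'
    (mul_ne_zero hβ0 (mul_ne_zero hd0 (by
      rw [Ne, ENNReal.rpow_eq_zero_iff]
      rintro (⟨h, -⟩ | ⟨h, -⟩)
      · rw [h] at hk₀1; simp at hk₀1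
      · exact hk₀t h)))
    (by rw [hpN, ENNReal.ofReal_lt_one]; linarith) N
  set q := ENNReal.ofReal r with hq
  have hq0 : q ≠ 0 := by simpa [hq] using hr0
  have hqN0 : q ^ (3 * N) ≠ 0 := pow_ne_zero _ hq0
  have hqNt : q ^ (3 * N) ≠ ⊤ := ENNReal.pow_ne_top ENNReal.ofReal_ne_top
  have hM₃ : M₃ * h + 2 * (2 * M + 1) ≤ M₃ * q := by
    calc M₃ * h + 2 * (2 * M + 1) = M₃ * (h + e') := by
          rw [mul_add M₃, ENNReal.div_mul_cancel he'0 he't]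
      _ ≤ M₃ * q := mul_le_mul' le_rfl hq3
  set A := 2 / q ^ (3 * N) + (2 + 2 * CA) * L / p₄ with hA
  have hAt : A ≠ ⊤ := by
    rw [hA]
    exact ENNReal.add_ne_top.2 ⟨ENNReal.div_ne_top (by finiteness) hqN0,
      ENNReal.div_ne_top (by finiteness) hp₄0⟩
  have hA1 : 2 ≤ A * q ^ (3 * N) := by
    calc (2 : ℝ≥0∞) = 2 / q ^ (3 * N) * q ^ (3 * N) := (ENNReal.div_mul_cancel hqN0 hqNt).symm
      _ ≤ _ := mul_le_mul' le_self_add le_rfl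
  have hA2 : (2 + 2 * CA) * L ≤ A * p₄ := by
    calc (2 + 2 * CA) * L = (2 + 2 * CA) * L / p₄ * p₄ :=
          (ENNReal.div_mul_cancel hp₄0 hp₄t).symm
      _ ≤ _ := mul_le_mul' le_add_self le_rfl
  have hA0 : A ≠ 0 := by
    rintro h0
    rw [h0, zero_mul] at hA1
    simp at hA1
  refine ⟨-Real.log r, 3 * A.toReal, neg_pos.2 (Real.log_neg hr0 hr1),
    mul_pos three_pos (ENNReal.toReal_pos hA0 hAt), ?_⟩
  intro x y n _ g cb cl hg1 hg2 hg3
  rcases eq_or_ne x y with rfl | hxy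
  · simp
  have hcl : 0 ≤ cl := by
    have h1 := (abs_nonneg _).trans (hg2 x y)
    exact nonneg_of_mul_nonneg_left h1 (dist_pos.2 hxy)
  have hgb : ∀ z, |g z| ≤ 1 := fun z => (hg1 z).trans (by linarith)
  have hgc : Continuous g := by
    refine (LipschitzWith.of_dist_le_mul (K := ⟨cl, hcl⟩) fun z w => ?_).continuous
    rw [Real.dist_eq]
    exact hg2 z w
  have hg := hgc.measurable
  have key := S.contraction hPinf hg hgb (k₀ := k₀) (CA := CA) (c₁ := 2)
    (by simpa using mul_le_mul' (le_refl (2 : ℝ≥0∞)) hk₀1) hdrift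
    (hCA g hg hgb cb cl hg1 hg2 hg3) (A := A) (β := β) (q := q) (M₃ := M₃) (d := d)
    (p := ENNReal.ofReal p) (p₄ := p₄) (L := L) hM₃ hN2
    (fun x y hv => by
      obtain ⟨ρ, h1, h2, h3, h4⟩ := hblock N hNN₂ x y hv
      refine ⟨ρ, h1, h2, ?_, (ENNReal.ofReal_le_ofReal (min_le_left _ _)).trans h4⟩
      filter_upwards [h3] with f hf
      exact ⟨hNN₁, x, y, hv, hf⟩)
    (min_le_left _ _) (ENNReal.ofReal_le_one.2 hr1.le) hq1 hA1 hq2 hbd hq4 rfl hq5 hN hβp hA2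
    n x y
  have hsg : ∀ x, ∫ z, g z ∂(Pinf.map fun ω => traj Φ x ω n) = sg Pinf Φ g n x := fun x =>
    integral_map (measurable_traj_right hΦ x n).aemeasurable hg.aestronglyMeasurable
  rw [hsg, hsg]
  have hexp : ENNReal.ofReal (3 * A.toReal * Real.exp (- -Real.log r * n)) = 3 * A * q ^ n := by
    rw [neg_neg, mul_comm (Real.log r), Real.exp_nat_mul, Real.exp_log hr0,
      ENNReal.ofReal_mul (by positivity), ENNReal.ofReal_mul (by norm_num),
      ENNReal.ofReal_toReal hAt, ENNReal.ofReal_pow hr0.le, ENNReal.ofReal_ofNat]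
  rw [hexp]
  calc _ ≤ ENNReal.ofReal ‖sg Pinf Φ g n x - sg Pinf Φ g n y‖ :=
        ENNReal.ofReal_le_ofReal (Real.le_norm_self _)
    _ = ‖sg Pinf Φ g n x - sg Pinf Φ g n y‖ₑ := ofReal_norm _
    _ ≤ _ := key
    _ ≤ A * q ^ n * (1 + 1 * ((1 + V x) + (1 + V y))) := by
        refine mul_le_mul' le_rfl (add_le_add le_rfl (mul_le_mul' (min_le_left _ _)
          (add_le_add (sqrt_le_one_add _) (sqrt_le_one_add _))))
    _ = A * q ^ n * (3 * 1 + (V x + V y)) := by ring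
    _ ≤ A * q ^ n * (3 * 1 + 3 * (V x + V y)) := by
        refine mul_le_mul' le_rfl (add_le_add le_rfl (le_mul_of_one_le_left' ?_))
        norm_num
    _ = _ := by ring

end
end

section
/- Suppose the random dynamical system Φ with binding maps ψ_{x,y} satisfies Assumption A1 (Lyapunov function V with constants a ∈ (0,1), b > 0) and Assumption A4 (second-moment control of the inverse densities on large sets Γᴷ_{x,y}). Then for every K > 0 there exists a constant C_K > 0 such that, whenever V(x) + V(y) ≤ K, one has ∫_{Ωⁿ} min(1, Dⁿ_{x,y}(ω)) Pⁿ(dω) ≥ C_K for every n ≥ 0; equivalently, the total mass ‖Q^∞_{x,y}‖ of the coupled part of the asymptotic coupling is at least C_K. -/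
/-!
Fix `n` and write `D` for the density and `S` for the projection of `Γ` to the first `n`
coordinates. The projection pushes `P^∞` forward to `Pⁿ` (`map_restrict_eq_pi`), so the outer
measure of `S`, which need not be measurable, satisfies `Pⁿ(S) ≥ P^∞(Γ) > c₁`. For every `s > 0`
with `s ≤ 1` and `s ≤ δ` one has pointwise `s ≤ min(1, D) + s δ D⁻²`: either `D ≥ s`, or
`D⁻² ≥ s⁻²` and `s² ≤ s ≤ δ`. Integrating over `S` with `δ = c₁ / (2 c₂)` gives
`s c₁ ≤ ∫ min(1, D) + s c₁ / 2` (`lintegral_min_one_lower_bound`), and the resulting bound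
`s c₁ / 2` does not depend on `n`, `x`, `y`.
-/

open MeasureTheory
open scoped ENNReal NNReal

noncomputable section

/-- The marginal on the first `n` coordinates of a measure with the cylinder probabilities of
`P^∞` is the product measure `Pⁿ`. -/
theorem map_restrict_eq_pi {Ω : Type*} [MeasurableSpace Ω]
    (P : Measure Ω) [IsProbabilityMeasure P] (Pinf : Measure (ℕ → Ω))
    (hPinf : ∀ (s : Finset ℕ) (t : ℕ → Set Ω), (∀ i ∈ s, MeasurableSet (t i)) →
      Pinf {ω | ∀ i ∈ s, ω i ∈ t i} = ∏ i ∈ s, P (t i)) (n : ℕ) :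
    Pinf.map (fun ω : ℕ → Ω => fun i : Fin n => ω (i : ℕ)) =
      Measure.pi fun _ : Fin n => P := by
  have hm : Measurable (fun ω : ℕ → Ω => fun i : Fin n => ω (i : ℕ)) := by fun_prop
  refine (Measure.pi_eq fun s hs => ?_).symm
  rw [Measure.map_apply hm (MeasurableSet.univ_pi hs)]
  have h := hPinf (Finset.range n) (fun i => if h : i < n then s ⟨i, h⟩ else Set.univ) (by
    intro i hi
    simp only [Finset.mem_range] at hi
    simpa [hi] using hs _)
  rw [← Fin.prod_univ_eq_prod_range
    (fun i => P (if h : i < n then s ⟨i, h⟩ else Set.univ)) n] at h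
  simp only [Fin.is_lt, dite_true, Fin.eta] at h
  rw [← h]
  congr 1
  ext ω
  simp only [Set.mem_preimage, Set.mem_pi, Set.mem_univ, true_implies, Set.mem_ofPred_eq,
    Finset.mem_range]
  constructor
  · intro h i hi
    simpa [hi] using h ⟨i, hi⟩
  · intro h i
    simpa using h i i.2

theorem pointwise_min_one_bound {s δ : ℝ} (hs : 0 < s) (hs1 : s ≤ 1) (hsδ : s ≤ δ)
    (d : ℝ≥0∞) :
    ENNReal.ofReal s ≤ min 1 d + ENNReal.ofReal (s * δ) * d⁻¹ ^ 2 := by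
  rcases le_total (ENNReal.ofReal s) d with h | h
  · refine le_add_right (le_min ?_ h)
    simpa using ENNReal.ofReal_le_ofReal hs1
  · refine le_add_left ?_
    calc ENNReal.ofReal s ≤ ENNReal.ofReal (s * δ * s⁻¹ ^ 2) := by
          refine ENNReal.ofReal_le_ofReal ?_
          have : s * δ * s⁻¹ ^ 2 = δ / s := by field_simp
          rw [this, le_div_iff₀ hs]
          nlinarith
      _ = ENNReal.ofReal (s * δ) * (ENNReal.ofReal s)⁻¹ ^ 2 := by
          rw [ENNReal.ofReal_mul (by nlinarith), ENNReal.ofReal_pow (by positivity),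
            ENNReal.ofReal_inv_of_pos hs]
      _ ≤ ENNReal.ofReal (s * δ) * d⁻¹ ^ 2 := by gcongr

/-- A second-moment bound for `D⁻¹` on a set of mass at least `c₁` (not assumed measurable)
bounds `∫ min(1, D)` from below, with a constant depending on `c₁` and `c₂` only. -/
theorem lintegral_min_one_lower_bound {α : Type*} [MeasurableSpace α] (μ : Measure α)
    [IsFiniteMeasure μ] {D : α → ℝ≥0∞} (hD : Measurable D) {S : Set α} {c₁ c₂ : ℝ}
    (hc₁ : 0 < c₁) (hc₂ : 0 < c₂) (hS : ENNReal.ofReal c₁ ≤ μ S)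
    (hI : ∫⁻ f in S, (D f)⁻¹ ^ 2 ∂μ ≤ ENNReal.ofReal c₂) :
    ENNReal.ofReal (min 1 (c₁ / (2 * c₂)) * c₁ / 2) ≤ ∫⁻ f, min 1 (D f) ∂μ := by
  set δ := c₁ / (2 * c₂) with hδ
  set s := min 1 δ with hs_def
  have hδ0 : 0 < δ := by positivity
  have hs : 0 < s := lt_min one_pos hδ0
  have hkey : ENNReal.ofReal (s * c₁) ≤
      ∫⁻ f, min 1 (D f) ∂μ + ENNReal.ofReal (s * c₁ / 2) :=
    calc ENNReal.ofReal (s * c₁) = ENNReal.ofReal s * ENNReal.ofReal c₁ :=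
          ENNReal.ofReal_mul hs.le
      _ ≤ ENNReal.ofReal s * μ S := by gcongr
      _ = ∫⁻ _ in S, ENNReal.ofReal s ∂μ := by simp
      _ ≤ ∫⁻ f in S, (min 1 (D f) + ENNReal.ofReal (s * δ) * (D f)⁻¹ ^ 2) ∂μ :=
          lintegral_mono fun f =>
            pointwise_min_one_bound hs (min_le_left _ _) (min_le_right _ _) (D f)
      _ = ∫⁻ f in S, min 1 (D f) ∂μ +
            ENNReal.ofReal (s * δ) * ∫⁻ f in S, (D f)⁻¹ ^ 2 ∂μ := by
          rw [lintegral_add_left (by fun_prop), lintegral_const_mul _ (by fun_prop)]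
      _ ≤ ∫⁻ f, min 1 (D f) ∂μ + ENNReal.ofReal (s * δ) * ENNReal.ofReal c₂ := by
          gcongr
          exact Measure.restrict_le_self
      _ = ∫⁻ f, min 1 (D f) ∂μ + ENNReal.ofReal (s * c₁ / 2) := by
          rw [← ENNReal.ofReal_mul (by positivity)]
          congr 2
          rw [hδ]
          field_simp
  have hsplit : ENNReal.ofReal (s * c₁) =
      ENNReal.ofReal (s * c₁ / 2) + ENNReal.ofReal (s * c₁ / 2) := by
    rw [← ENNReal.ofReal_add (by positivity) (by positivity), add_halves]
  rw [hsplit] at hkey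
  exact (ENNReal.add_le_add_iff_right ENNReal.ofReal_ne_top).1 hkey

/-- Under the Lyapunov assumption A1 and Assumption A4 (second-moment
control of the inverse densities `Dⁿ_{x,y}` on sets `Γᴷ_{x,y}` of large `P^∞`-measure),
for every `K > 0` there is `C_K > 0` such that whenever `V(x) + V(y) ≤ K`,
`∫ min(1, Dⁿ_{x,y}) dPⁿ ≥ C_K` for every `n`; equivalently the total mass
`‖Q^∞_{x,y}‖ = inf_n ∫ min(1, Dⁿ_{x,y}) dPⁿ` (a decreasing limit) is at least `C_K`. -/
theorem stmt4
    {X Ω : Type*} [MeasurableSpace X] [MeasurableSpace Ω] [Nonempty Ω]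
    (P : Measure Ω) [IsProbabilityMeasure P]
    (Pinf : Measure (ℕ → Ω)) [IsProbabilityMeasure Pinf]
    (hPinf : ∀ (s : Finset ℕ) (t : ℕ → Set Ω), (∀ i ∈ s, MeasurableSet (t i)) →
      Pinf {ω | ∀ i ∈ s, ω i ∈ t i} = ∏ i ∈ s, P (t i))
    (Φ : X × Ω → X) (hΦ : Measurable Φ)
    (ψ ψinv : X → X → Ω → Ω)
    (hψ : Measurable fun p : (X × X) × Ω => ψ p.1.1 p.1.2 p.2)
    (hψinv : Measurable fun p : (X × X) × Ω => ψinv p.1.1 p.1.2 p.2)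
    (hinv₁ : ∀ x y ω, ψinv x y (ψ x y ω) = ω)
    (hinv₂ : ∀ x y ω, ψ x y (ψinv x y ω) = ω)
    (hequiv : ∀ x y, P.map (ψ x y) ≪ P ∧ P ≪ P.map (ψ x y))
    -- Assumption A1 (Lyapunov structure)
    (V : X → ℝ≥0∞) (hV : Measurable V)
    (a b : ℝ≥0∞) (ha0 : 0 < a) (ha1 : a < 1) (hb0 : 0 < b) (hbfin : b < ⊤)
    (hLyap : ∀ x, V x < ⊤ → ∫⁻ ω, V (Φ (x, ω)) ∂P ≤ a * V x + b)
    (hfin : ∀ x, P {ω | V (Φ (x, ω)) < ⊤} = 1)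
    -- Assumption A4 (second-moment control of the inverse densities)
    (hA4 : ∀ K : ℝ, 0 < K → ∃ (c₁ c₂ : ℝ) (Γ : X → X → Set (ℕ → Ω)), 0 < c₁ ∧ 0 < c₂ ∧
      ∀ x y : X, V x + V y ≤ ENNReal.ofReal K →
        MeasurableSet (Γ x y) ∧ ENNReal.ofReal c₁ < Pinf (Γ x y) ∧
        ∀ n : ℕ, (∫⁻ f in (fun ω : ℕ → Ω => fun i : Fin n => ω (i : ℕ)) '' Γ x y,
            (Dfin P Φ ψ n x y f)⁻¹ ^ 2 ∂(Measure.pi fun _ : Fin n => P)) <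
          ENNReal.ofReal c₂) :
    ∀ K : ℝ, 0 < K → ∃ CK : ℝ, 0 < CK ∧
      ∀ x y : X, V x + V y ≤ ENNReal.ofReal K →
        (∀ n : ℕ, ENNReal.ofReal CK ≤
          ∫⁻ f, min 1 (Dfin P Φ ψ n x y f) ∂(Measure.pi fun _ : Fin n => P)) ∧
        ENNReal.ofReal CK ≤
          ⨅ n : ℕ, ∫⁻ f, min 1 (Dfin P Φ ψ n x y f) ∂(Measure.pi fun _ : Fin n => P) := by
  intro K hK
  obtain ⟨c₁, c₂, Γ, hc₁, hc₂, hΓ⟩ := hA4 K hK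
  refine ⟨min 1 (c₁ / (2 * c₂)) * c₁ / 2, ?_, fun x y hxy => ?_⟩
  · have : 0 < min 1 (c₁ / (2 * c₂)) := lt_min one_pos (by positivity)
    positivity
  obtain ⟨-, hmass, hint⟩ := hΓ x y hxy
  have hall : ∀ n : ℕ, ENNReal.ofReal (min 1 (c₁ / (2 * c₂)) * c₁ / 2) ≤
      ∫⁻ f, min 1 (Dfin P Φ ψ n x y f) ∂(Measure.pi fun _ : Fin n => P) := by
    intro n
    refine lintegral_min_one_lower_bound _ (Measure.measurable_rnDeriv _ _) hc₁ hc₂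
      (hmass.le.trans ?_) (hint n).le
    rw [← map_restrict_eq_pi P Pinf hPinf n]
    -- `Measure.le_map_apply` needs no measurability of the image.
    exact (measure_mono (Set.subset_preimage_image _ _)).trans
      (Measure.le_map_apply (Measurable.aemeasurable (by fun_prop)) _)
  exact ⟨hall, le_iInf hall⟩

end
end

section
/- Let μ₁ and μ₂ be two equivalent probability measures on a measurable space X with μ₂ = D·μ₁ for a measurable density D : X → (0,∞). If a measurable set A ⊆ X satisfies μ₁(A) ≥ 1 − ε₁ and ∫_A (1 − D(x))² μ₁(dx) ≤ ε₂, then the lattice infimum of the two measures satisfies (μ₁ ⊓ μ₂)(A) ≥ 1 − ε₁ − ε₂^{1/2}. -/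
/-!
The measure with density `min 1 D` lies below both `μ₁` and `D·μ₁`, hence below their infimum.
Since `1 ≤ min 1 D + |1 - D|` pointwise, `μ₁ A ≤ ∫_A min 1 D dμ₁ + ∫_A |1 - D| dμ₁`, and
Cauchy–Schwarz on `A`, whose mass is at most `1`, bounds the last integral by `√ε₂`.
-/

open MeasureTheory
open scoped ENNReal NNReal

theorem withDensity_min_one_le_inf {X : Type*} [MeasurableSpace X] (μ : Measure X)
    (D : X → ℝ≥0∞) :
    μ.withDensity (fun x => min 1 (D x)) ≤ μ ⊓ μ.withDensity D := by
  refine le_inf ?_ (withDensity_mono (ae_of_all _ fun x => min_le_right _ _))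
  calc μ.withDensity (fun x => min 1 (D x)) ≤ μ.withDensity 1 :=
        withDensity_mono (ae_of_all _ fun x => min_le_left _ _)
    _ = μ := withDensity_one

/-- Cauchy–Schwarz against the constant function `1` on a space of mass at most `1`. -/
theorem lintegral_le_rpow_half_of_mass_le_one {X : Type*} [MeasurableSpace X] (ν : Measure X)
    (hν : ν Set.univ ≤ 1) (g : X → ℝ≥0∞) (hg : Measurable g) :
    ∫⁻ x, g x ∂ν ≤ (∫⁻ x, g x ^ (2 : ℝ) ∂ν) ^ (1 / 2 : ℝ) := by
  have h := ENNReal.lintegral_mul_le_Lp_mul_Lq ν Real.HolderConjugate.two_two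
    hg.aemeasurable (aemeasurable_const (b := (1 : ℝ≥0∞)))
  simp only [Pi.mul_apply, mul_one, ENNReal.one_rpow, lintegral_const, one_mul] at h
  exact h.trans (mul_le_of_le_one_right' (ENNReal.rpow_le_one hν (by norm_num)))

theorem one_le_min_add_abs_sub {d : ℝ≥0∞} (hd : d < ⊤) :
    1 ≤ min 1 d + ENNReal.ofReal |1 - d.toReal| := by
  rcases le_total 1 d with h | h
  · simp [h]
  · rw [min_eq_right h]
    nth_rewrite 1 [← ENNReal.ofReal_toReal hd.ne]
    rw [← ENNReal.ofReal_add ENNReal.toReal_nonneg (abs_nonneg _), ENNReal.one_le_ofReal]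
    linarith [le_abs_self (1 - d.toReal)]

theorem ofReal_rpow_half (ε : ℝ) :
    ENNReal.ofReal ε ^ (1 / 2 : ℝ) = ENNReal.ofReal (Real.sqrt ε) := by
  rcases le_total 0 ε with h | h
  · rw [ENNReal.ofReal_rpow_of_nonneg h (by norm_num), Real.sqrt_eq_rpow]
  · rw [ENNReal.ofReal_of_nonpos h, Real.sqrt_eq_zero_of_nonpos h]
    simp

/-- If `μ₂ = D·μ₁` with positive finite density `D`, `μ₁ A ≥ 1 - ε₁` and
`∫_A (1 - D)² dμ₁ ≤ ε₂`, then `(μ₁ ⊓ μ₂) A ≥ 1 - ε₁ - √ε₂`. -/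
theorem stmt6 {X : Type*} [MeasurableSpace X]
    (μ₁ : Measure X) [IsProbabilityMeasure μ₁]
    (D : X → ℝ≥0∞) (hD : Measurable D) (hDpos : ∀ x, 0 < D x) (hDfin : ∀ x, D x < ⊤)
    [IsProbabilityMeasure (μ₁.withDensity D)]
    (A : Set X) (hA : MeasurableSet A) (ε₁ ε₂ : ℝ)
    (h1 : ENNReal.ofReal (1 - ε₁) ≤ μ₁ A)
    (h2 : ∫⁻ x in A, ENNReal.ofReal ((1 - (D x).toReal) ^ 2) ∂μ₁ ≤ ENNReal.ofReal ε₂) :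
    ENNReal.ofReal (1 - ε₁ - Real.sqrt ε₂) ≤ (μ₁ ⊓ μ₁.withDensity D) A := by
  have hg : Measurable fun x => ENNReal.ofReal |1 - (D x).toReal| :=
    (continuous_abs.measurable.comp (hD.ennreal_toReal.const_sub 1)).ennreal_ofReal
  have hdev : ∫⁻ x in A, ENNReal.ofReal |1 - (D x).toReal| ∂μ₁
      ≤ ENNReal.ofReal (Real.sqrt ε₂) := by
    refine (lintegral_le_rpow_half_of_mass_le_one _ ?_ _ hg).trans ?_
    · rw [Measure.restrict_apply_univ]
      exact prob_le_one
    · rw [← ofReal_rpow_half]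
      refine ENNReal.rpow_le_rpow (le_of_eq_of_le (lintegral_congr fun x => ?_) h2) (by norm_num)
      rw [ENNReal.rpow_two, ← ENNReal.ofReal_pow (abs_nonneg _), sq_abs]
  rw [ENNReal.ofReal_sub _ (Real.sqrt_nonneg _), tsub_le_iff_right]
  calc ENNReal.ofReal (1 - ε₁) ≤ μ₁ A := h1
    _ = ∫⁻ _ in A, 1 ∂μ₁ := by simp
    _ ≤ ∫⁻ x in A, (min 1 (D x) + ENNReal.ofReal |1 - (D x).toReal|) ∂μ₁ :=
        lintegral_mono fun x => one_le_min_add_abs_sub (hDfin x)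
    _ = μ₁.withDensity (fun x => min 1 (D x)) A
          + ∫⁻ x in A, ENNReal.ofReal |1 - (D x).toReal| ∂μ₁ := by
        rw [lintegral_add_right _ hg, withDensity_apply _ hA]
    _ ≤ (μ₁ ⊓ μ₁.withDensity D) A + ENNReal.ofReal (Real.sqrt ε₂) :=
        add_le_add (withDensity_min_one_le_inf μ₁ D A) hdev
end

section
/- Let (pₘ)_{m≥1} be nonnegative reals and let ρ > 1 be such that Σ_{m≥1} pₘ ρᵐ < 1, and let p⋆ > 0. For k ≥ 0 let p^{*k} denote the k-fold convolution on ℕ (p^{*0}₀ = 1, p^{*0}ₙ = 0 for n ≥ 1, p^{*(k+1)}ₙ = Σ_{m=1}^{n} pₘ p^{*k}_{n−m}), and define qₙ = p⋆ Σ_{k=0}^{∞} p^{*k}ₙ. Then for every n ≥ 0, 0 ≤ qₙ ≤ (p⋆ / (1 − Σ_{m≥1} pₘ ρᵐ)) · ρ^{−n}; that is, the Taylor coefficients of ζ ↦ p⋆/(1 − Σ pₘ ζᵐ) at 0 decay geometrically at rate ρ. -/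
/-!
Writing `S = ∑ pₘ ρᵐ`, the weighted coefficients `p^{*k}ₙ ρⁿ` are bounded by `Sᵏ`: the weight `ρⁿ`
splits multiplicatively over the convolution, so each further factor `p` costs at most a factor `S`
(`convPow_mul_pow_le`). Since `0 ≤ S < 1`, summing the geometric series over `k` gives
`∑ₖ p^{*k}ₙ ≤ ρ⁻ⁿ / (1 - S)`.
-/

open scoped BigOperators

/-- Convolution of two sequences indexed by `ℕ`. -/
noncomputable def convSeq (p q : ℕ → ℝ) (n : ℕ) : ℝ :=
  ∑ m ∈ Finset.range (n + 1), p m * q (n - m)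

/-- `k`-fold convolution power of a sequence (with `p^{*0} = δ₀`). -/
noncomputable def convPow (p : ℕ → ℝ) : ℕ → ℕ → ℝ
  | 0 => fun n => if n = 0 then 1 else 0
  | k + 1 => convSeq p (convPow p k)

theorem convPow_nonneg (p : ℕ → ℝ) (hpnn : ∀ m, 0 ≤ p m) (k n : ℕ) : 0 ≤ convPow p k n := by
  induction k generalizing n with
  | zero => simp only [convPow]; split_ifs <;> norm_num
  | succ k ih =>
    simp only [convPow, convSeq]
    exact Finset.sum_nonneg fun m _ => mul_nonneg (hpnn m) (ih _)

theorem convPow_mul_pow_le (p : ℕ → ℝ) (hpnn : ∀ m, 0 ≤ p m) (ρ : ℝ) (hρ : 0 ≤ ρ)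
    (hs : Summable fun m => p m * ρ ^ m) (k n : ℕ) :
    convPow p k n * ρ ^ n ≤ (∑' m, p m * ρ ^ m) ^ k := by
  have hterm : ∀ m, 0 ≤ p m * ρ ^ m := fun m => mul_nonneg (hpnn m) (pow_nonneg hρ m)
  induction k generalizing n with
  | zero =>
    simp only [convPow]
    split_ifs with h <;> simp [h]
  | succ k ih =>
    calc convPow p (k + 1) n * ρ ^ n
        = ∑ m ∈ Finset.range (n + 1), (p m * ρ ^ m) * (convPow p k (n - m) * ρ ^ (n - m)) := by
          simp only [convPow, convSeq, Finset.sum_mul]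
          refine Finset.sum_congr rfl fun m hm => ?_
          rw [← pow_mul_pow_sub ρ (Nat.lt_succ_iff.mp (Finset.mem_range.mp hm))]
          ring
      _ ≤ ∑ m ∈ Finset.range (n + 1), (p m * ρ ^ m) * (∑' m, p m * ρ ^ m) ^ k :=
          Finset.sum_le_sum fun m _ => mul_le_mul_of_nonneg_left (ih _) (hterm m)
      _ = (∑ m ∈ Finset.range (n + 1), p m * ρ ^ m) * (∑' m, p m * ρ ^ m) ^ k := by
          rw [Finset.sum_mul]
      _ ≤ (∑' m, p m * ρ ^ m) * (∑' m, p m * ρ ^ m) ^ k :=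
          mul_le_mul_of_nonneg_right (hs.sum_le_tsum _ fun m _ => hterm m)
            (pow_nonneg (tsum_nonneg hterm) k)
      _ = (∑' m, p m * ρ ^ m) ^ (k + 1) := (pow_succ' _ k).symm

/-- If `Σ pₘ ρᵐ < 1` for some `ρ > 1`, then the Taylor coefficients
`qₙ = p⋆ Σ_k p^{*k}ₙ` of `ζ ↦ p⋆/(1 − Σ pₘ ζᵐ)` satisfy
`0 ≤ qₙ ≤ (p⋆/(1 − Σ pₘ ρᵐ)) ρ^{−n}`. -/
theorem stmt8 (p : ℕ → ℝ) (hp00 : p 0 = 0) (hpnn : ∀ m, 0 ≤ p m)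
    (ρ : ℝ) (hρ : 1 < ρ) (hsummable : Summable fun m => p m * ρ ^ m)
    (hlt : ∑' m, p m * ρ ^ m < 1)
    (pstar : ℝ) (hpstar : 0 < pstar) :
    ∀ n : ℕ, 0 ≤ pstar * ∑' k, convPow p k n ∧
      pstar * ∑' k, convPow p k n ≤ pstar / (1 - ∑' m, p m * ρ ^ m) * ρ ^ (-(n : ℝ)) := by
  intro n
  have hρ0 : 0 < ρ := one_pos.trans hρ
  have hS0 : 0 ≤ ∑' m, p m * ρ ^ m :=
    tsum_nonneg fun m => mul_nonneg (hpnn m) (pow_nonneg hρ0.le m)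
  have hnn := fun k => convPow_nonneg p hpnn k n
  refine ⟨mul_nonneg hpstar.le (tsum_nonneg hnn), ?_⟩
  have hle : ∀ k, convPow p k n ≤ (∑' m, p m * ρ ^ m) ^ k * (ρ ^ n)⁻¹ := fun k => by
    rw [← div_eq_mul_inv, le_div_iff₀ (pow_pos hρ0 n)]
    exact convPow_mul_pow_le p hpnn ρ hρ0.le hsummable k n
  have hgeo := (hasSum_geometric_of_lt_one hS0 hlt).mul_right (ρ ^ n)⁻¹
  have hsum : Summable fun k => convPow p k n := Summable.of_nonneg_of_le hnn hle hgeo.summable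
  rw [Real.rpow_neg hρ0.le, Real.rpow_natCast, div_eq_mul_inv, mul_assoc]
  exact mul_le_mul_of_nonneg_left (hasSum_le hle hsum.hasSum hgeo) hpstar.le
end

section
/- Let (Ω, F, P) be a probability space and let d : Ω → Ω be a measurable bijection with measurable inverse d⁻¹ such that d_*P is equivalent to P. On Ω × Ω define P̃ = ((ω ↦ (ω, d(ω)))_*P) ⊓ ((ω ↦ (d⁻¹(ω), ω))_*P) (lattice infimum of finite measures), and let Π₁, Π₂ : Ω × Ω → Ω be the coordinate projections. Then: (i) Π₁_*P̃ ≤ P and Π₂_*P̃ ≤ P; (ii) the measures P − Π₁_*P̃ and P − Π₂_*P̃ (measure subtraction) both have total mass 1 − ‖P̃‖; (iii) defining P̂ = P̃ + (1 − ‖P̃‖)⁻¹ (P − Π₁_*P̃) × (P − Π₂_*P̃) when ‖P̃‖ < 1 and P̂ = P̃ when ‖P̃‖ = 1, the measure P̂ is a probability measure on Ω × Ω with Π₁_*P̂ = P and Π₂_*P̂ = P. -/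
open MeasureTheory
open scoped ENNReal

/-!
The infimum `P̃` lies below both graph measures. The first has first marginal `P` and the second
has second marginal `P`, so both marginals of `P̃` are at most `P`. The rest holds for every
measure on `Ω × Ω` whose marginals are at most `P`: the defects `P - Π₁_*P̃` and `P - Π₂_*P̃` have
the same mass `c = 1 - ‖P̃‖`, so the product of the defects scaled by `c⁻¹` has exactly these
defects as its marginals, and adding it to `P̃` restores both marginals to `P`. If `c = 0`, the
defects vanish and `P̃` is already a coupling.
-/

/-- Since `f` preserves total mass under pushforward, the defect of `f_*μ` below a probability
measure has mass `1 - ‖μ‖`. -/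
lemma defect_univ {Ω X : Type*} [MeasurableSpace Ω] [MeasurableSpace X] {P : Measure Ω}
    [IsProbabilityMeasure P] {μ : Measure X} {f : X → Ω} (hf : Measurable f)
    (h : μ.map f ≤ P) : (P - μ.map f) Set.univ = 1 - μ Set.univ := by
  have : IsFiniteMeasure (μ.map f) := isFiniteMeasure_of_le P h
  rw [Measure.sub_apply MeasurableSet.univ h, measure_univ, Measure.map_apply hf .univ,
    Set.preimage_univ]

/-- Properties of the sub-coupling measure `P̃` built from a measurable
bijection `d` with `d_*P ∼ P`: its marginals are below `P` with equal defects of mass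
`1 − ‖P̃‖`, and the completed measure `P̂` is a coupling of `P` with itself. -/
theorem stmt9 {Ω : Type*} [MeasurableSpace Ω] (P : Measure Ω) [IsProbabilityMeasure P]
    (d d' : Ω → Ω) (hd : Measurable d) (hd' : Measurable d')
    (hdd' : ∀ ω, d' (d ω) = ω) (hd'd : ∀ ω, d (d' ω) = ω)
    (habs1 : P.map d ≪ P) (habs2 : P ≪ P.map d) :
    ∀ Pt : Measure (Ω × Ω),
      Pt = (P.map fun ω => (ω, d ω)) ⊓ (P.map fun ω => (d' ω, ω)) →
      (Pt.map Prod.fst ≤ P ∧ Pt.map Prod.snd ≤ P) ∧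
      ((P - Pt.map Prod.fst) Set.univ = 1 - Pt Set.univ ∧
        (P - Pt.map Prod.snd) Set.univ = 1 - Pt Set.univ) ∧
      (∀ Phat : Measure (Ω × Ω),
        Phat = (if Pt Set.univ < 1 then
            Pt + (1 - Pt Set.univ)⁻¹ • (P - Pt.map Prod.fst).prod (P - Pt.map Prod.snd)
          else Pt) →
        IsProbabilityMeasure Phat ∧ Phat.map Prod.fst = P ∧ Phat.map Prod.snd = P) := by
  intro Pt hPt
  have h1 : Pt.map Prod.fst ≤ P := by
    have h : Pt ≤ P.map fun ω => (ω, d ω) := hPt ▸ inf_le_left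
    refine (Measure.map_mono h measurable_fst).trans_eq ?_
    rw [Measure.map_map measurable_fst (by fun_prop)]
    exact Measure.map_id
  have h2 : Pt.map Prod.snd ≤ P := by
    have h : Pt ≤ P.map fun ω => (d' ω, ω) := hPt ▸ inf_le_right
    refine (Measure.map_mono h measurable_snd).trans_eq ?_
    rw [Measure.map_map measurable_snd (by fun_prop)]
    exact Measure.map_id
  have m1 := defect_univ measurable_fst h1
  have m2 := defect_univ measurable_snd h2
  refine ⟨⟨h1, h2⟩, ⟨m1, m2⟩, ?_⟩
  intro Phat hPhat
  have : IsFiniteMeasure (Pt.map Prod.fst) := isFiniteMeasure_of_le P h1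
  have : IsFiniteMeasure (Pt.map Prod.snd) := isFiniteMeasure_of_le P h2
  have c1 := Measure.sub_add_cancel_of_le h1
  have c2 := Measure.sub_add_cancel_of_le h2
  have key : Phat.map Prod.fst = P ∧ Phat.map Prod.snd = P := by
    split_ifs at hPhat with hlt
    · have hc0 : 1 - Pt Set.univ ≠ 0 := (tsub_pos_of_lt hlt).ne'
      have hct : 1 - Pt Set.univ ≠ ∞ := ENNReal.sub_ne_top ENNReal.one_ne_top
      have : IsFiniteMeasure (P - Pt.map Prod.fst) := isFiniteMeasure_of_le P Measure.sub_le
      have : IsFiniteMeasure (P - Pt.map Prod.snd) := isFiniteMeasure_of_le P Measure.sub_le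
      subst hPhat
      constructor
      · rw [Measure.map_add _ _ measurable_fst, Measure.map_smul, Measure.map_fst_prod, m2,
          smul_smul, ENNReal.inv_mul_cancel hc0 hct, one_smul, add_comm, c1]
      · rw [Measure.map_add _ _ measurable_snd, Measure.map_smul, Measure.map_snd_prod, m1,
          smul_smul, ENNReal.inv_mul_cancel hc0 hct, one_smul, add_comm, c2]
    · have hc : 1 - Pt Set.univ = 0 := tsub_eq_zero_of_le (not_lt.mp hlt)
      rw [hc, Measure.measure_univ_eq_zero] at m1 m2
      rw [m1, zero_add] at c1
      rw [m2, zero_add] at c2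
      exact ⟨hPhat ▸ c1, hPhat ▸ c2⟩
  refine ⟨⟨?_⟩, key⟩
  have hm := congrArg (fun μ : Measure Ω => μ Set.univ) key.1
  simpa [Measure.map_apply measurable_fst MeasurableSet.univ] using hm
end

section
/- Let μ be a σ-finite measure on a measurable space X and let ν be the measure with density D with respect to μ, for a measurable D : X → [0,∞). Then the lattice infimum μ ⊓ ν is the measure with density min(1, D) with respect to μ; in particular its total mass is ‖μ ⊓ ν‖ = ∫_X min(1, D(x)) μ(dx). -/
open MeasureTheory
open scoped ENNReal

/-! The measure `min(1, D)·μ` lies below both `μ` and `D·μ`. Conversely, split a measurable set `A`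
along `S = {D ≤ 1}`: a measure below both is bounded by `D·μ` on `A ∩ S`, where `min(1, D) = D`,
and by `μ` on `A \ S`, where `min(1, D) = 1`. -/

/-- For a σ-finite measure `μ` and `ν = D·μ` with `D` finite-valued and
measurable, the lattice infimum `μ ⊓ ν` has density `min(1, D)` with respect to `μ`;
in particular its total mass is `∫ min(1, D) dμ`. -/
theorem stmt11 {X : Type*} [MeasurableSpace X] (μ : Measure X) [SigmaFinite μ]
    (D : X → ℝ≥0∞) (hD : Measurable D) (hDfin : ∀ x, D x < ⊤) :
    μ ⊓ μ.withDensity D = μ.withDensity (fun x => min 1 (D x)) ∧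
    (μ ⊓ μ.withDensity D) Set.univ = ∫⁻ x, min 1 (D x) ∂μ := by
  have key : μ ⊓ μ.withDensity D = μ.withDensity (fun x => min 1 (D x)) := by
    apply le_antisymm
    · refine Measure.le_iff.2 fun A hA => ?_
      have hS : MeasurableSet {x | D x ≤ 1} := hD measurableSet_Iic
      rw [← measure_inter_add_sdiff A hS,
        ← measure_inter_add_sdiff (μ := μ.withDensity (fun x => min 1 (D x))) A hS]
      gcongr ?_ + ?_
      · refine (Measure.le_iff'.1 inf_le_right _).trans_eq ?_
        rw [withDensity_apply _ (hA.inter hS), withDensity_apply _ (hA.inter hS)]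
        exact setLIntegral_congr_fun (hA.inter hS) fun x hx => (min_eq_right hx.2).symm
      · refine (Measure.le_iff'.1 inf_le_left _).trans_eq ?_
        rw [withDensity_apply _ (hA.diff hS), ← setLIntegral_one]
        exact setLIntegral_congr_fun (hA.diff hS) fun x hx =>
          (min_eq_left (not_le.1 hx.2).le).symm
    · refine le_inf ?_ (withDensity_mono (ae_of_all _ fun x => min_le_right _ _))
      calc μ.withDensity (fun x => min 1 (D x)) ≤ μ.withDensity 1 :=
            withDensity_mono (ae_of_all _ fun x => min_le_left _ _)
        _ = μ := withDensity_one
  refine ⟨key, ?_⟩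
  rw [key, withDensity_apply _ MeasurableSet.univ, setLIntegral_univ]
end

section
/- Let P be a Markov transition kernel on a measurable space X and let V : X → [0,∞] be measurable with constants a ∈ (0,1), b > 0 such that ∫_X V(y) P(x,dy) ≤ a V(x) + b for every x with V(x) < ∞, and P(x, {y : V(y) < ∞}) = 1 for every x ∈ X. Then every invariant probability measure μ⋆ of P (i.e. μ⋆(A) = ∫_X P(x,A) μ⋆(dx) for all measurable A) satisfies ∫_X V(x) μ⋆(dx) ≤ b/(1−a). -/
/-!
Fix a level `n` and integrate the truncation `min V n` against `μstar`. By invariance and the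
drift condition (available almost everywhere, since invariance forces `V < ∞` a.e.),
`∫ min V n ≤ ∫ min (a V + b) n`. On `{V ≤ n}` the integrands are compared through `V` and
`a V + b`; on `{V > n}` both are at most `n`, and the left one equals `n`. The finite quantity
`n * μstar {V > n}` therefore cancels, leaving
`∫_{V ≤ n} V ≤ a ∫_{V ≤ n} V + b`, hence `∫_{V ≤ n} V ≤ b / (1 - a)`.
Monotone convergence in `n` finishes the proof.
-/


open MeasureTheory ProbabilityTheory
open scoped ENNReal

/-- If a Markov kernel admits a Lyapunov function `V` with
`∫ V(y) P(x,dy) ≤ a V(x) + b` (`a ∈ (0,1)`, `b > 0` finite) wherever `V(x) < ∞`, and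
`P(x, {V < ∞}) = 1` for all `x`, then every invariant probability measure `μ⋆` satisfies
`∫ V dμ⋆ ≤ b/(1−a)`. -/
theorem stmt12 {X : Type*} [MeasurableSpace X]
    (κ : Kernel X X) [IsMarkovKernel κ]
    (V : X → ℝ≥0∞) (hV : Measurable V)
    (a b : ℝ≥0∞) (ha0 : 0 < a) (ha1 : a < 1) (hb0 : 0 < b) (hbfin : b < ⊤)
    (hLyap : ∀ x, V x < ⊤ → ∫⁻ y, V y ∂(κ x) ≤ a * V x + b)
    (hfin : ∀ x, κ x {y | V y < ⊤} = 1)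
    (μstar : Measure X) [IsProbabilityMeasure μstar]
    (hinv : ∀ A : Set X, MeasurableSet A → μstar A = ∫⁻ x, κ x A ∂μstar) :
    ∫⁻ x, V x ∂μstar ≤ b / (1 - a) := by
  have hbind : μstar.bind κ = μstar := by
    ext A hA
    rw [Measure.bind_apply hA κ.measurable.aemeasurable, ← hinv A hA]
  have hlint : ∀ f : X → ℝ≥0∞, Measurable f →
      ∫⁻ x, f x ∂μstar = ∫⁻ x, ∫⁻ y, f y ∂(κ x) ∂μstar := by
    intro f hf
    conv_lhs => rw [← hbind]
    exact Measure.lintegral_bind κ.measurable.aemeasurable hf.aemeasurable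
  have hmeas : MeasurableSet {y | V y < ⊤} := measurableSet_lt hV measurable_const
  have hae : ∀ᵐ x ∂μstar, V x < ⊤ := by
    have h1 : μstar {y | V y < ⊤} = 1 := by simp [hinv _ hmeas, hfin]
    exact mem_ae_iff.2 ((prob_compl_eq_zero_iff hmeas).2 h1)
  have hS : ∀ n : ℕ, MeasurableSet {x | V x ≤ n} := fun n =>
    measurableSet_le hV measurable_const
  have hlevel : ∀ n : ℕ, ∫⁻ x in {x | V x ≤ n}, V x ∂μstar ≤ b / (1 - a) := by
    intro n
    set S : Set X := {x | V x ≤ n} with hSdef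
    set I := ∫⁻ x in S, V x ∂μstar with hI
    have hIfin : I ≠ ⊤ := by
      refine ((setLIntegral_mono measurable_const (fun x hx => hx)).trans_lt
        (?_ : ∫⁻ _ in S, (n : ℝ≥0∞) ∂μstar < ⊤)).ne
      rw [setLIntegral_const]
      exact ENNReal.mul_lt_top (by simp) (measure_lt_top _ _)
    have hlhs : ∫⁻ x, min (V x) n ∂μstar = I + n * μstar Sᶜ := by
      rw [← lintegral_add_compl _ (hS n), ← setLIntegral_const Sᶜ (n : ℝ≥0∞)]
      congr 1
      · exact setLIntegral_congr_fun (hS n) fun x hx => min_eq_left hx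
      · exact setLIntegral_congr_fun (hS n).compl fun x hx =>
          min_eq_right (not_le.1 (show ¬ V x ≤ n from hx)).le
    have hdrift : ∫⁻ x, min (V x) n ∂μstar ≤ ∫⁻ x, min (a * V x + b) n ∂μstar := by
      rw [hlint _ (hV.min measurable_const)]
      refine lintegral_mono_ae ?_
      filter_upwards [hae] with x hx
      refine le_min ((lintegral_mono fun y => min_le_left _ _).trans (hLyap x hx)) ?_
      refine (lintegral_mono fun y => min_le_right _ _).trans ?_
      simp
    have hrhs : ∫⁻ x, min (a * V x + b) n ∂μstar ≤ (a * I + b) + n * μstar Sᶜ := by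
      rw [← lintegral_add_compl _ (hS n), ← setLIntegral_const Sᶜ (n : ℝ≥0∞)]
      refine add_le_add ?_ (lintegral_mono fun x => min_le_right _ _)
      refine (lintegral_mono fun x => min_le_left _ _).trans ?_
      rw [lintegral_add_right _ measurable_const, lintegral_const_mul _ hV, setLIntegral_const]
      gcongr
      exact mul_le_of_le_one_right' prob_le_one
    have hcancel : I ≤ a * I + b :=
      (ENNReal.add_le_add_iff_right
        (ENNReal.mul_ne_top (by simp) (measure_ne_top μstar Sᶜ))).1
        (hlhs ▸ hdrift.trans hrhs)
    rw [ENNReal.le_div_iff_mul_le (Or.inl (tsub_pos_of_lt ha1).ne') (Or.inl (by simp)),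
      mul_comm, ENNReal.sub_mul (fun _ _ => hIfin), one_mul]
    exact tsub_le_iff_left.2 hcancel
  have hunion : ∀ᵐ x ∂μstar, x ∈ ⋃ n : ℕ, {x | V x ≤ n} := by
    filter_upwards [hae] with x hx
    obtain ⟨n, hn⟩ := ENNReal.exists_nat_gt hx.ne
    exact Set.mem_iUnion.2 ⟨n, hn.le⟩
  have hmono : Monotone fun n : ℕ => {x | V x ≤ n} := fun m n hmn x hx =>
    le_trans (show V x ≤ m from hx) (by exact_mod_cast hmn)
  rw [← Measure.restrict_eq_self_of_ae_mem hunion,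
    setLIntegral_iUnion_of_directed _ hmono.directed_le]
  exact iSup_le hlevel
end
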